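/- Let Q be one of the graphs A_n (n ≥ 1), D_n (n ≥ 4), E_6, E_7 or E_8. Then the Birman–Murakami–Wenzl algebra B(Q) over the rational function field K = ℚ(l,δ) is a semisimple ring. -/

import Mathlib

open FreeAlgebra

/-- The path graph (Coxeter diagram of type `A_n`) on nodes `1, …, n`
(realized as `Fin n`, node `i` corresponding to index `i-1`): node `i` is
adjacent to node `i+1` for `1 ≤ i ≤ n-1`. -/
def typeA (n : ℕ) : SimpleGraph (Fin n) :=
  SimpleGraph.fromRel (fun i j => (i : ℕ) + 1 = (j : ℕ))

/-- The Coxeter diagram of type `D_n` (`n ≥ 4`) on nodes `1, …, n` (realized as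
`Fin n`, node `i` corresponding to index `i-1`): nodes `1` and `2` are both
adjacent to node `3`, and nodes `i`, `i+1` are adjacent for `3 ≤ i ≤ n-1`. -/
def typeD (n : ℕ) : SimpleGraph (Fin n) :=
  SimpleGraph.fromRel (fun i j =>
    ((i : ℕ) = 0 ∧ (j : ℕ) = 2) ∨ ((i : ℕ) = 1 ∧ (j : ℕ) = 2) ∨
      (2 ≤ (i : ℕ) ∧ (i : ℕ) + 1 = (j : ℕ)))

/-- The Coxeter diagram of type `E_n` (`n = 6, 7, 8`) on nodes `1, …, n`
(realized as `Fin n`, node `i` corresponding to index `i-1`): a path on nodes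
`1, 3, 4, …, n` together with node `2` attached to node `4`. -/
def typeE (n : ℕ) : SimpleGraph (Fin n) :=
  SimpleGraph.fromRel (fun i j =>
    ((i : ℕ) = 0 ∧ (j : ℕ) = 2) ∨ ((i : ℕ) = 1 ∧ (j : ℕ) = 3) ∨
      (2 ≤ (i : ℕ) ∧ (i : ℕ) + 1 = (j : ℕ)))
/-- The field `K = ℚ(l,δ)` of rational functions over `ℚ` in two independent
variables `l` and `δ`, realized as an iterated rational function field. -/
abbrev BMWField : Type := RatFunc (RatFunc ℚ)

/-- The variable `l` of `K = ℚ(l,δ)`. -/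
noncomputable def lVar : BMWField := RatFunc.X

/-- The variable `δ` of `K = ℚ(l,δ)`. -/
noncomputable def deltaVar : BMWField := RatFunc.C RatFunc.X

/-- The element `m = (l - l⁻¹)/(1 - δ)` of `K = ℚ(l,δ)`. -/
noncomputable def mVar : BMWField := (lVar - lVar⁻¹) / (1 - deltaVar)

/-- The defining relations of the Birman–Murakami–Wenzl algebra `B(Q)` of the
simply-laced type given by the graph `Q`, imposed on the free algebra over
`K = ℚ(l,δ)` on the generators `g_1, …, g_n` (encoded as `Sum.inl i`) and
`e_1, …, e_n` (encoded as `Sum.inr i`). -/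
inductive BMWRel (n : ℕ) (Q : SimpleGraph (Fin n)) :
    FreeAlgebra BMWField (Fin n ⊕ Fin n) → FreeAlgebra BMWField (Fin n ⊕ Fin n) → Prop
  /-- `g_i g_j = g_j g_i` whenever `i ≁ j` -/
  | gg (i j : Fin n) (hne : i ≠ j) (hadj : ¬ Q.Adj i j) :
      BMWRel n Q (ι BMWField (.inl i) * ι BMWField (.inl j))
        (ι BMWField (.inl j) * ι BMWField (.inl i))
  /-- `g_i g_j g_i = g_j g_i g_j` whenever `i ∼ j` -/
  | braid (i j : Fin n) (hadj : Q.Adj i j) :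
      BMWRel n Q (ι BMWField (.inl i) * ι BMWField (.inl j) * ι BMWField (.inl i))
        (ι BMWField (.inl j) * ι BMWField (.inl i) * ι BMWField (.inl j))
  /-- `m·e_i = l·(g_i² + m·g_i - 1)` -/
  | quad (i : Fin n) :
      BMWRel n Q (mVar • ι BMWField (.inr i))
        (lVar • (ι BMWField (.inl i) * ι BMWField (.inl i)
          + mVar • ι BMWField (.inl i) - 1))
  /-- `g_i e_i = l⁻¹·e_i` -/
  | ge (i : Fin n) :
      BMWRel n Q (ι BMWField (.inl i) * ι BMWField (.inr i)) (lVar⁻¹ • ι BMWField (.inr i))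
  /-- `e_i g_j e_i = l·e_i` whenever `i ∼ j` -/
  | ege (i j : Fin n) (hadj : Q.Adj i j) :
      BMWRel n Q (ι BMWField (.inr i) * ι BMWField (.inl j) * ι BMWField (.inr i))
        (lVar • ι BMWField (.inr i))

/-- The Birman–Murakami–Wenzl algebra `B(Q)` of simply-laced type `Q` over
the rational function field `K = ℚ(l,δ)`. -/
abbrev BMWAlgebra (n : ℕ) (Q : SimpleGraph (Fin n)) : Type :=
  RingQuot (BMWRel n Q)

/-! ### Root combinatorics -/
namespace BMWaux

section Roots
variable {n : ℕ} (Q : SimpleGraph (Fin n))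

open Classical in
/-- adjacency as an integer -/
noncomputable def ad (i k : Fin n) : ℤ := if Q.Adj i k then 1 else 0

/-- pairing with a simple root -/
noncomputable def cc (i : Fin n) (b : Fin n → ℤ) : ℤ := 2 * b i - ∑ k, ad Q i k * b k

/-- the bilinear form -/
noncomputable def bil (a b : Fin n → ℤ) : ℤ := ∑ i, a i * cc Q i b

/-- the quadratic form -/
noncomputable def Q2 (b : Fin n → ℤ) : ℤ := bil Q b b

/-- simple root -/
def sr (k : Fin n) : Fin n → ℤ := Pi.single k 1

/-- height -/
def ht (b : Fin n → ℤ) : ℤ := ∑ i, b i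

lemma sr_self (k : Fin n) : sr k k = 1 := by simp [sr]
lemma sr_ne {k i : Fin n} (h : i ≠ k) : sr k i = 0 := by simp [sr, h]
lemma sr_nonneg (k i : Fin n) : 0 ≤ sr k i := by
  by_cases h : i = k
  · subst h; simp [sr]
  · simp [sr, h]

lemma ht_add (a b : Fin n → ℤ) : ht (a + b) = ht a + ht b := by simp [ht, Finset.sum_add_distrib]
lemma ht_sub (a b : Fin n → ℤ) : ht (a - b) = ht a - ht b := by simp [ht]
lemma ht_sr (k : Fin n) : ht (sr k) = 1 := by simp [ht, sr]

lemma ad_nonneg (i k : Fin n) : 0 ≤ ad Q i k := by unfold ad; split_ifs <;> simp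
lemma ad_symm (i k : Fin n) : ad Q i k = ad Q k i := by 
  unfold ad; by_cases h : Q.Adj i k
  · rw [if_pos h, if_pos h.symm]
  · rw [if_neg h, if_neg fun h' => h h'.symm]

lemma cc_add (i : Fin n) (a b : Fin n → ℤ) : cc Q i (a + b) = cc Q i a + cc Q i b := by
  simp only [cc, Pi.add_apply, mul_add, Finset.sum_add_distrib]; ring
lemma cc_sub (i : Fin n) (a b : Fin n → ℤ) : cc Q i (a - b) = cc Q i a - cc Q i b := by
  simp only [cc, Pi.sub_apply, mul_sub, Finset.sum_sub_distrib]; ring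
lemma cc_smul (i : Fin n) (t : ℤ) (b : Fin n → ℤ) : cc Q i (t • b) = t * cc Q i b := by
  simp only [cc, Pi.smul_apply, smul_eq_mul, mul_sub, Finset.mul_sum]
  congr 1
  · ring
  · exact Finset.sum_congr rfl fun _ _ => by ring
lemma cc_sr_self (i : Fin n) : cc Q i (sr i) = 2 := by
  simp [cc, sr, Pi.single_apply, ad]
lemma cc_sr_adj {i k : Fin n} (h : Q.Adj i k) : cc Q i (sr k) = -1 := by
  have := h.ne
  simp [cc, sr, Pi.single_apply, ad, h, this]
lemma cc_sr_nadj {i k : Fin n} (hne : i ≠ k) (h : ¬ Q.Adj i k) : cc Q i (sr k) = 0 := by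
  simp [cc, sr, Pi.single_apply, ad, h, hne]
lemma cc_zero (i : Fin n) : cc Q i 0 = 0 := by simp [cc]

lemma bil_symm (a b : Fin n → ℤ) : bil Q a b = bil Q b a := by
  unfold bil cc
  simp only [mul_sub, Finset.sum_sub_distrib, Finset.mul_sum]
  congr 1
  · exact Finset.sum_congr rfl fun _ _ => by ring
  · rw [Finset.sum_comm]
    exact Finset.sum_congr rfl fun i _ => Finset.sum_congr rfl fun k _ => by
      rw [ad_symm]; ring
lemma bil_add_left (a b c : Fin n → ℤ) : bil Q (a + b) c = bil Q a c + bil Q b c := by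
  simp [bil, add_mul, Finset.sum_add_distrib]
lemma bil_sub_left (a b c : Fin n → ℤ) : bil Q (a - b) c = bil Q a c - bil Q b c := by
  simp [bil, sub_mul]
lemma bil_add_right (a b c : Fin n → ℤ) : bil Q c (a + b) = bil Q c a + bil Q c b := by
  rw [bil_symm, bil_add_left, bil_symm, bil_symm Q b]
lemma bil_sub_right (a b c : Fin n → ℤ) : bil Q c (a - b) = bil Q c a - bil Q c b := by
  rw [bil_symm, bil_sub_left, bil_symm, bil_symm Q b]
lemma bil_smul_left (t : ℤ) (a b : Fin n → ℤ) : bil Q (t • a) b = t * bil Q a b := by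
  simp [bil, Finset.mul_sum, mul_assoc]
lemma bil_sr_left (k : Fin n) (b : Fin n → ℤ) : bil Q (sr k) b = cc Q k b := by
  simp [bil, sr, Pi.single_apply]

lemma Q2_add (a b : Fin n → ℤ) : Q2 Q (a + b) = Q2 Q a + 2 * bil Q a b + Q2 Q b := by
  unfold Q2; rw [bil_add_left, bil_add_right, bil_add_right, bil_symm Q b a]; ring
lemma Q2_sub (a b : Fin n → ℤ) : Q2 Q (a - b) = Q2 Q a - 2 * bil Q a b + Q2 Q b := by
  unfold Q2; rw [bil_sub_left, bil_sub_right, bil_sub_right, bil_symm Q b a]; ring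
lemma Q2_sr (k : Fin n) : Q2 Q (sr k) = 2 := by
  unfold Q2; rw [bil_sr_left, cc_sr_self]
lemma Q2_add_sr (b : Fin n → ℤ) (k : Fin n) : Q2 Q (b + sr k) = Q2 Q b + 2 * cc Q k b + 2 := by
  rw [Q2_add, bil_symm, bil_sr_left, Q2_sr]
lemma Q2_sub_sr (b : Fin n → ℤ) (k : Fin n) : Q2 Q (b - sr k) = Q2 Q b - 2 * cc Q k b + 2 := by
  rw [Q2_sub, bil_symm, bil_sr_left, Q2_sr]
lemma Q2_refl (b : Fin n → ℤ) (k : Fin n) : Q2 Q (b - cc Q k b • sr k) = Q2 Q b := by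
  rw [Q2_sub, bil_symm, bil_smul_left, bil_sr_left]
  unfold Q2; rw [bil_smul_left, bil_sr_left, cc_smul, cc_sr_self]; ring

lemma Q2_even (b : Fin n → ℤ) : Even (Q2 Q b) := by
  have key : ∀ T : Finset (Fin n), Even (Q2 Q (∑ i ∈ T, b i • sr i)) := by
    intro T
    induction T using Finset.induction_on with
    | empty => simp [Q2, bil]
    | insert i T hi ih =>
      rw [Finset.sum_insert hi, Q2_add]
      refine Even.add (Even.add ?_ (even_two_mul _)) ih
      unfold Q2
      rw [bil_smul_left, bil_sr_left, cc_smul, cc_sr_self]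
      exact ⟨b i * b i, by ring⟩
  have : b = ∑ i, b i • sr i := by
    funext j
    simp [Finset.sum_apply, sr, Pi.single_apply]
  rw [this]; exact key _

/-- Graph hypotheses. -/
structure Good : Prop where
  par : ∀ i j k, Q.Adj i j → Q.Adj i k → i < j → i < k → j = k
  pos : ∃ C : ℤ, ∀ (b : Fin n → ℤ) i, b i ^ 2 ≤ C * Q2 Q b

variable {Q}

lemma Good.Q2_nonneg (hQ : Good Q) (b : Fin n → ℤ) (hb : b ≠ 0) : 2 ≤ Q2 Q b := by
  obtain ⟨C, hC⟩ := hQ.pos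
  obtain ⟨i, hi⟩ : ∃ i, b i ≠ 0 := by
    by_contra h; push Not at h; exact hb (funext h)
  have hCpos : 0 < C := by
    have h1 := hC (sr i) i
    rw [Q2_sr, sr_self] at h1
    by_contra h; nlinarith
  have h2 := hC b i
  have h3 : 0 < b i ^ 2 := by positivity
  have h4 : 0 < Q2 Q b := by
    by_contra h; nlinarith
  obtain ⟨r, hr⟩ := Q2_even Q b
  omega

lemma Good.finite_Q2 (hQ : Good Q) (q : ℤ) : {b : Fin n → ℤ | Q2 Q b = q}.Finite := by
  obtain ⟨C, hC⟩ := hQ.pos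
  refine (Set.Finite.pi' (ι := Fin n) (t := fun _ => Set.Icc (-(|C * q| + 1)) (|C * q| + 1)) fun i =>
    Set.finite_Icc _ _).subset ?_
  intro b hb i
  have h := hC b i
  rw [hb] at h
  have h2 := le_abs_self (C * q)
  have h0 := abs_nonneg (C * q)
  constructor <;> nlinarith

variable (Q) in
/-- positive roots supported on `S` -/
def IsRoot (S : Finset (Fin n)) (b : Fin n → ℤ) : Prop :=
  (∀ i, 0 ≤ b i) ∧ (∀ i, i ∉ S → b i = 0) ∧ Q2 Q b = 2

variable {S : Finset (Fin n)}

lemma Good.finite_roots (hQ : Good Q) : {b | IsRoot Q S b}.Finite :=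
  (hQ.finite_Q2 2).subset fun _ hb => hb.2.2

lemma isRoot_sr {k : Fin n} (hk : k ∈ S) : IsRoot Q S (sr k) :=
  ⟨sr_nonneg k, fun i hi => sr_ne (by rintro rfl; exact hi hk), Q2_sr Q k⟩

lemma isRoot_sr_iff {k : Fin n} : IsRoot Q S (sr k) ↔ k ∈ S := by
  refine ⟨fun h => ?_, isRoot_sr⟩
  by_contra hk
  have := h.2.1 k hk
  simp [sr_self] at this

lemma IsRoot.ne_zero {b : Fin n → ℤ} (h : IsRoot Q S b) : b ≠ 0 := by
  rintro rfl
  have := h.2.2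
  simp [Q2, bil] at this

lemma IsRoot.ht_pos {b : Fin n → ℤ} (h : IsRoot Q S b) : 1 ≤ ht b := by
  by_contra hc
  have h0 : ht b = 0 := le_antisymm (by omega) (Finset.sum_nonneg fun i _ => h.1 i)
  unfold ht at h0
  rw [Finset.sum_eq_zero_iff_of_nonneg fun i _ => h.1 i] at h0
  exact h.ne_zero (funext fun i => h0 i (Finset.mem_univ _))

lemma IsRoot.cc_lt (hQ : Good Q) {b : Fin n → ℤ} (h : IsRoot Q S b) {k : Fin n} (hne : b ≠ sr k) :
    cc Q k b ≤ 1 := by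
  have := hQ.Q2_nonneg (b - sr k) (sub_ne_zero.2 hne)
  rw [Q2_sub_sr, h.2.2] at this
  omega

lemma IsRoot.cc_le (hQ : Good Q) {b : Fin n → ℤ} (h : IsRoot Q S b) (k : Fin n) :
    cc Q k b ≤ 2 := by
  by_cases hne : b = sr k
  · rw [hne, cc_sr_self]
  · have := h.cc_lt hQ hne; omega

lemma IsRoot.eq_sr (hQ : Good Q) {b : Fin n → ℤ} (h : IsRoot Q S b) {k : Fin n} (h2 : 2 ≤ cc Q k b) :
    b = sr k := by
  by_contra hne
  have := h.cc_lt hQ hne; omega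

lemma IsRoot.neg_one_le_cc (hQ : Good Q) {b : Fin n → ℤ} (h : IsRoot Q S b) (k : Fin n) :
    -1 ≤ cc Q k b := by
  have hne : b + sr k ≠ 0 := by
    intro h0
    have h1 := congrFun h0 k
    have := h.1 k
    simp only [Pi.add_apply, sr_self, Pi.zero_apply] at h1
    omega
  have := hQ.Q2_nonneg _ hne
  rw [Q2_add_sr, h.2.2] at this
  omega

lemma IsRoot.pos_of_cc {b : Fin n → ℤ} (h : IsRoot Q S b) {k : Fin n} (hc : 0 < cc Q k b) :
    1 ≤ b k := by
  have h1 : 0 ≤ ∑ j, ad Q k j * b j :=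
    Finset.sum_nonneg fun j _ => mul_nonneg (ad_nonneg Q k j) (h.1 j)
  unfold cc at hc
  omega

lemma IsRoot.mem_of_cc {b : Fin n → ℤ} (h : IsRoot Q S b) {k : Fin n} (hc : 0 < cc Q k b) :
    k ∈ S := by
  by_contra hk
  have := h.2.1 k hk
  have := h.pos_of_cc hc
  omega

lemma IsRoot.sub {b : Fin n → ℤ} (h : IsRoot Q S b) {k : Fin n} (hc : cc Q k b = 1) :
    IsRoot Q S (b - sr k) := by
  refine ⟨fun i => ?_, fun i hi => ?_, ?_⟩
  · by_cases hik : i = k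
    · subst hik
      have := h.pos_of_cc (k := i) (by omega)
      simp only [Pi.sub_apply, sr_self]; omega
    · simp [sr_ne hik, h.1 i]
  · have hk : k ∈ S := h.mem_of_cc (by omega)
    have hik : i ≠ k := by rintro rfl; exact hi hk
    simp [sr_ne hik, h.2.1 i hi]
  · rw [Q2_sub_sr, h.2.2, hc]; norm_num

lemma IsRoot.add {b : Fin n → ℤ} (h : IsRoot Q S b) {k : Fin n} (hk : k ∈ S) (hc : cc Q k b = -1) :
    IsRoot Q S (b + sr k) := by
  refine ⟨fun i => add_nonneg (h.1 i) (sr_nonneg k i), fun i hi => ?_, ?_⟩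
  · have hik : i ≠ k := by rintro rfl; exact hi hk
    simp [sr_ne hik, h.2.1 i hi]
  · rw [Q2_add_sr, h.2.2, hc]; norm_num

lemma IsRoot.exists_cc_pos {b : Fin n → ℤ} (h : IsRoot Q S b) : ∃ k ∈ S, 0 < cc Q k b := by
  by_contra hc
  push Not at hc
  have h2 : Q2 Q b ≤ 0 := by
    unfold Q2 bil
    refine Finset.sum_nonpos fun i _ => ?_
    by_cases hi : i ∈ S
    · exact mul_nonpos_of_nonneg_of_nonpos (h.1 i) (hc i hi)
    · rw [h.2.1 i hi]; simp
  rw [h.2.2] at h2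
  omega

lemma IsRoot.cases (hQ : Good Q) {b : Fin n → ℤ} (h : IsRoot Q S b) :
    (∃ k ∈ S, b = sr k) ∨ ∃ k ∈ S, cc Q k b = 1 := by
  obtain ⟨k, hk, hc⟩ := h.exists_cc_pos
  by_cases hne : b = sr k
  · exact Or.inl ⟨k, hk, hne⟩
  · exact Or.inr ⟨k, hk, by have := h.cc_lt hQ hne; omega⟩

lemma sr_inj {i k : Fin n} (h : (sr i : Fin n → ℤ) = sr k) : i = k := by
  by_contra hne
  have := congrFun h i
  rw [sr_self, sr_ne hne] at this
  omega

lemma cc_sr_ne_one (i k : Fin n) : cc Q i (sr k) ≠ 1 := by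
  by_cases h : i = k
  · subst h; rw [cc_sr_self]; decide
  · by_cases ha : Q.Adj i k
    · rw [cc_sr_adj Q ha]; decide
    · rw [cc_sr_nadj Q h ha]; decide

lemma IsRoot.eq_of_adj (hQ : Good Q) {b : Fin n → ℤ} (h : IsRoot Q S b) {i k : Fin n}
    (ha : Q.Adj i k) (hi : cc Q i b = 1) (hk : cc Q k b = 1) : b = sr i + sr k := by
  have h1 := h.sub hk
  have h2 : cc Q i (b - sr k) = 2 := by rw [cc_sub, cc_sr_adj Q ha, hi]; norm_num
  have h3 := h1.eq_sr hQ h2.ge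
  rw [← h3]; abel

/-- no triangles -/
lemma Good.no_triangle (hQ : Good Q) {i j k : Fin n} (h1 : Q.Adj i j) (h2 : Q.Adj i k)
    (h3 : Q.Adj j k) : False := by
  have n1 := h1.ne; have n2 := h2.ne; have n3 := h3.ne
  rcases lt_or_gt_of_ne n1 with a | a <;> rcases lt_or_gt_of_ne n2 with b | b <;>
    rcases lt_or_gt_of_ne n3 with c | c
  · exact n3 (hQ.par i j k h1 h2 a b)
  · exact n3 (hQ.par i j k h1 h2 a b)
  · exact absurd (a.trans c) (not_lt.2 b.le)
  · exact n1 (hQ.par k i j h2.symm h3.symm b c)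
  · exact n2 (hQ.par j i k h1.symm h3 a c)
  · exact absurd (b.trans c) (not_lt.2 a.le)
  · exact n2 (hQ.par j i k h1.symm h3 a c)
  · exact n1 (hQ.par k i j h2.symm h3.symm b c)

variable (Q) in
/-- dominant on `S` -/
def IsDom (S : Finset (Fin n)) (b : Fin n → ℤ) : Prop := ∀ k ∈ S, 0 ≤ cc Q k b

variable (Q) in
/-- connected subsets -/
def IsConn (S : Finset (Fin n)) : Prop :=
  ∀ T ⊆ S, T.Nonempty → (∀ i ∈ T, ∀ k ∈ S, Q.Adj i k → k ∈ T) → T = S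

lemma exists_maxht (hQ : Good Q) : ∃ D : ℕ, ∀ b, IsRoot Q S b → ht b ≤ D := by
  obtain ⟨D, hD⟩ := (hQ.finite_roots (S := S)).image ht |>.bddAbove
  refine ⟨D.toNat, fun b hb => ?_⟩
  have := hD ⟨b, hb, rfl⟩
  omega

lemma exists_dom (hQ : Good Q) (hS : S.Nonempty) : ∃ b, IsRoot Q S b ∧ IsDom Q S b := by
  obtain ⟨k, hk⟩ := hS
  obtain ⟨b, hb, hmax⟩ := Set.exists_max_image _ ht (hQ.finite_roots (S := S)) ⟨_, isRoot_sr hk⟩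
  refine ⟨b, hb, fun i hi => ?_⟩
  by_contra hc
  have h1 := hb.neg_one_le_cc hQ i
  have h2 := hb.add hi (by omega)
  have h3 := hmax _ h2
  rw [ht_add, ht_sr] at h3
  omega

lemma IsRoot.full (hS : IsConn Q S) {b : Fin n → ℤ} (h : IsRoot Q S b) (hd : IsDom Q S b) :
    ∀ i ∈ S, 1 ≤ b i := by
  classical
  have hT := hS (S.filter fun i => 1 ≤ b i) (Finset.filter_subset _ _) ?_ ?_
  · intro i hi
    rw [← hT] at hi
    exact (Finset.mem_filter.1 hi).2
  · obtain ⟨k, hk, hc⟩ := h.exists_cc_pos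
    exact ⟨k, Finset.mem_filter.2 ⟨hk, h.pos_of_cc hc⟩⟩
  · intro i hi k hk ha
    refine Finset.mem_filter.2 ⟨hk, ?_⟩
    by_contra hlt
    have h0 : b k = 0 := le_antisymm (by omega) (h.1 k)
    have h1 := hd k hk
    unfold cc at h1
    have h2 : ad Q k i * b i ≤ ∑ j, ad Q k j * b j :=
      Finset.single_le_sum (f := fun j => ad Q k j * b j)
        (fun j _ => mul_nonneg (ad_nonneg Q k j) (h.1 j)) (Finset.mem_univ i)
    have h3 : ad Q k i = 1 := by simp [ad, ha.symm]
    rw [h3] at h2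
    have := (Finset.mem_filter.1 hi).2
    omega

lemma bil_nonneg {a b : Fin n → ℤ} (ha : ∀ i, 0 ≤ a i) (ha' : ∀ i, i ∉ S → a i = 0)
    (hd : IsDom Q S b) : 0 ≤ bil Q a b := by
  refine Finset.sum_nonneg fun i _ => ?_
  by_cases hi : i ∈ S
  · exact mul_nonneg (ha i) (hd i hi)
  · rw [ha' i hi]; simp

lemma dom_unique (hQ : Good Q) (hS : IsConn Q S) {a b : Fin n → ℤ} (ha : IsRoot Q S a)
    (hda : IsDom Q S a) (hb : IsRoot Q S b) (hdb : IsDom Q S b) : a = b := by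
  by_contra hne
  have hfull := ha.full hS hda
  have h1 : 1 ≤ bil Q a b := by
    obtain ⟨k, hk, hc⟩ := hb.exists_cc_pos
    have : a k * cc Q k b ≤ bil Q a b := by
      refine Finset.single_le_sum (f := fun i => a i * cc Q i b) (fun i _ => ?_) (Finset.mem_univ k)
      by_cases hi : i ∈ S
      · exact mul_nonneg (ha.1 i) (hdb i hi)
      · simp [ha.2.1 i hi]
    have := hfull k hk
    nlinarith
  have h2 := hQ.Q2_nonneg _ (sub_ne_zero.2 hne)
  rw [Q2_sub, ha.2.2, hb.2.2] at h2
  have hab : bil Q a b = 1 := by omega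
  have hw : Q2 Q (a - b) = 2 := by rw [Q2_sub, ha.2.2, hb.2.2, hab]; norm_num
  set p : Fin n → ℤ := fun i => max (a i - b i) 0 with hp
  set q : Fin n → ℤ := fun i => max (b i - a i) 0 with hq
  have hpq : a - b = p - q := by
    funext i; simp only [hp, hq, Pi.sub_apply]
    rcases le_total (a i) (b i) with h | h
    · rw [max_eq_right (by omega), max_eq_left (by omega)]; ring
    · rw [max_eq_left (by omega), max_eq_right (by omega)]; ring
  have hp0 : ∀ i, 0 ≤ p i := fun i => le_max_right _ _
  have hq0 : ∀ i, 0 ≤ q i := fun i => le_max_right _ _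
  have hpS : ∀ i, i ∉ S → p i = 0 := fun i hi => by simp [hp, ha.2.1 i hi, hb.2.1 i hi]
  have hqS : ∀ i, i ∉ S → q i = 0 := fun i hi => by simp [hq, ha.2.1 i hi, hb.2.1 i hi]
  have hbil : bil Q p q ≤ 0 := by
    refine Finset.sum_nonpos fun i _ => ?_
    have hz : p i * q i = 0 := by
      rcases le_total (a i) (b i) with h | h
      · have : p i = 0 := max_eq_right (by omega)
        rw [this, zero_mul]
      · have : q i = 0 := max_eq_right (by omega)
        rw [this, mul_zero]
    have h3 : 0 ≤ p i * ∑ k, ad Q i k * q k :=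
      mul_nonneg (hp0 i) (Finset.sum_nonneg fun j _ => mul_nonneg (ad_nonneg Q i j) (hq0 j))
    unfold cc
    nlinarith
  rw [hpq, Q2_sub] at hw
  by_cases hpz : p = 0
  · have h4 : b - a = q := by
      rw [hpz, zero_sub] at hpq
      rw [← neg_sub, hpq, neg_neg]
    have h5 := bil_nonneg (Q := Q) hq0 hqS hda
    rw [← h4, bil_sub_left, bil_symm, hab] at h5
    have : bil Q a a = 2 := ha.2.2
    omega
  · by_cases hqz : q = 0
    · rw [hqz, sub_zero] at hpq
      have h5 := bil_nonneg (Q := Q) hp0 hpS hdb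
      rw [← hpq, bil_sub_left, hab] at h5
      have : bil Q b b = 2 := hb.2.2
      omega
    · have := hQ.Q2_nonneg p hpz
      have := hQ.Q2_nonneg q hqz
      omega

end Roots
end BMWaux

/-! ### Systems of generators -/
namespace BMWaux

/-- BMW parameters -/
structure Par (K : Type*) [Field K] where
  l : K
  m : K
  d : K
  hl : l ≠ 0
  hm : m ≠ 0
  hd : d ≠ 0
  hlm : l⁻¹ + m ≠ 0
  hrel : m * (1 - d) = l - l⁻¹

section SysSec
variable {K : Type*} [Field K] {A : Type*} [Ring A] [Algebra K A]

/-- the normalised element `e/δ` attached to `g` -/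
def Par.F (P : Par K) (o g : A) : A := (P.l / (P.m * P.d)) • (g * g + P.m • g - o)

/-- A BMW system in a corner `oAo`. -/
structure Sys {n : ℕ} (P : Par K) (Q : SimpleGraph (Fin n)) (S : Finset (Fin n)) (o : A)
    (g : Fin n → A) : Prop where
  oo : o * o = o
  og : ∀ i ∈ S, o * g i = g i
  go : ∀ i ∈ S, g i * o = g i
  gf : ∀ i ∈ S, g i * P.F o (g i) = P.l⁻¹ • P.F o (g i)
  comm : ∀ i ∈ S, ∀ j ∈ S, i ≠ j → ¬ Q.Adj i j → g i * g j = g j * g i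
  braid : ∀ i ∈ S, ∀ j ∈ S, Q.Adj i j → g i * (g j * g i) = g j * (g i * g j)
  fgf : ∀ i ∈ S, ∀ j ∈ S, Q.Adj i j →
    P.F o (g i) * (g j * P.F o (g i)) = (P.l / P.d) • P.F o (g i)

variable {n : ℕ} {P : Par K} {Q : SimpleGraph (Fin n)} {S : Finset (Fin n)} {o : A} {g : Fin n → A}

lemma Sys.mono (h : Sys P Q S o g) {T : Finset (Fin n)} (hT : T ⊆ S) : Sys P Q T o g :=
  ⟨h.oo, fun i hi => h.og i (hT hi), fun i hi => h.go i (hT hi), fun i hi => h.gf i (hT hi),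
    fun i hi j hj => h.comm i (hT hi) j (hT hj), fun i hi j hj => h.braid i (hT hi) j (hT hj),
    fun i hi j hj => h.fgf i (hT hi) j (hT hj)⟩

lemma Par.gg (P : Par K) (o g : A) : g * g = o - P.m • g + (P.m * P.d / P.l) • P.F o g := by
  have h : P.m * P.d / P.l * (P.l / (P.m * P.d)) = 1 := by
    have := P.hl; have := P.hm; have := P.hd; field_simp
  rw [Par.F, smul_smul, h, one_smul]; abel

/-- transfer: an intertwiner of `g, g'` intertwines the `F`s -/
lemma Par.F_intertwine (P : Par K) {o o' x g g' : A} (h : x * g = g' * x) (ho : x * o = o' * x) :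
    x * P.F o g = P.F o' g' * x := by
  have h2 : x * (g * g) = g' * g' * x := by
    rw [← mul_assoc, h, mul_assoc, h, mul_assoc]
  simp only [Par.F, mul_smul_comm, smul_mul_assoc, mul_add, mul_sub, add_mul, sub_mul, h2, h, ho]

lemma Sys.oF (h : Sys P Q S o g) {i : Fin n} (hi : i ∈ S) : o * P.F o (g i) = P.F o (g i) := by
  have h1 := h.og i hi
  simp only [Par.F, mul_smul_comm, mul_add, mul_sub, h1, h.oo, ← mul_assoc]
lemma Sys.Fo (h : Sys P Q S o g) {i : Fin n} (hi : i ∈ S) : P.F o (g i) * o = P.F o (g i) := by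
  have h1 := h.go i hi
  simp only [Par.F, smul_mul_assoc, add_mul, sub_mul, h1, h.oo, mul_assoc]

lemma Sys.fg (h : Sys P Q S o g) {i : Fin n} (hi : i ∈ S) :
    P.F o (g i) * g i = P.l⁻¹ • P.F o (g i) := by
  rw [← h.gf i hi, P.F_intertwine (x := g i) (o' := o) rfl (by rw [h.go i hi, h.og i hi])]

lemma Sys.op (h : Sys P Q S o g) :
    Sys P Q S (MulOpposite.op o) (fun i => MulOpposite.op (g i)) := by
  have hF : ∀ i, P.F (MulOpposite.op o) (MulOpposite.op (g i)) = MulOpposite.op (P.F o (g i)) :=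
    fun i => by simp [Par.F]
  refine ⟨by rw [← MulOpposite.op_mul, h.oo], fun i hi => by rw [← MulOpposite.op_mul, h.go i hi],
    fun i hi => by rw [← MulOpposite.op_mul, h.og i hi], fun i hi => ?_, fun i hi j hj hne ha => ?_,
    fun i hi j hj ha => ?_, fun i hi j hj ha => ?_⟩
  · rw [hF, ← MulOpposite.op_mul, h.fg hi, MulOpposite.op_smul]
  · rw [← MulOpposite.op_mul, ← MulOpposite.op_mul, h.comm i hi j hj hne ha]
  · simp only [← MulOpposite.op_mul]
    rw [mul_assoc, mul_assoc, h.braid i hi j hj ha]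
  · simp only [hF, ← MulOpposite.op_mul]
    rw [mul_assoc, h.fgf i hi j hj ha, MulOpposite.op_smul]

lemma Par.F_op (P : Par K) (o x : A) :
    P.F (MulOpposite.op o) (MulOpposite.op x) = MulOpposite.op (P.F o x) := by simp [Par.F]

lemma Sys.ff (h : Sys P Q S o g) {i : Fin n} (hi : i ∈ S) :
    P.F o (g i) * P.F o (g i) = P.F o (g i) := by
  have h1 := h.gf i hi
  have h2 : g i * (g i * P.F o (g i)) = (P.l⁻¹ * P.l⁻¹) • P.F o (g i) := by
    rw [h1, mul_smul_comm, h1, smul_smul]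
  have h3 : P.F o (g i) * P.F o (g i) = (P.l / (P.m * P.d)) •
      ((P.l⁻¹ * P.l⁻¹) • P.F o (g i) + P.m • P.l⁻¹ • P.F o (g i) - P.F o (g i)) := by
    conv_lhs => lhs; unfold Par.F
    rw [smul_mul_assoc, sub_mul, add_mul, mul_assoc, h2, smul_mul_assoc, h1, h.oF hi]
  rw [h3]
  have h4 : P.l / (P.m * P.d) * (P.l⁻¹ * P.l⁻¹ + P.m * P.l⁻¹ - 1) = 1 := by
    have a := P.hl; have b := P.hm; have c := P.hd; have e := P.hrel
    field_simp
    field_simp at e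
    linear_combination e
  linear_combination (norm := module) h4 • P.F o (g i)

lemma Sys.swap (h : Sys P Q S o g) {i j : Fin n} (hi : i ∈ S) (hj : j ∈ S) (ha : Q.Adj i j) :
    g j * (g i * P.F o (g j)) = P.F o (g i) * (g j * g i) := by
  rw [← mul_assoc]
  refine P.F_intertwine ?_ ?_
  · rw [mul_assoc, h.braid j hj i hi ha.symm]
  · rw [mul_assoc, h.go i hi, ← mul_assoc, h.og j hj]

lemma Sys.f_f (h : Sys P Q S o g) {i j : Fin n} (hi : i ∈ S) (hj : j ∈ S) (ha : Q.Adj i j) :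
    P.F o (g i) * P.F o (g j) = P.d⁻¹ • (g j * (g i * P.F o (g j))) := by
  set fi := P.F o (g i) with hfi
  set fj := P.F o (g j) with hfj
  have s1 := h.swap hi hj ha
  rw [← hfi, ← hfj] at s1
  have e1 : fi * (g j * fi) * (g j * g i) = (P.l / P.d) • (g j * (g i * fj)) := by
    rw [h.fgf i hi j hj ha, smul_mul_assoc, s1]
  have e2 : fi * (g j * fi) * (g j * g i) = fi * (g j * g j * (g i * fj)) := by
    simp only [mul_assoc]; rw [← s1]
  have e3 : fi * (g i * fj) = P.l⁻¹ • (fi * fj) := by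
    rw [← mul_assoc, h.fg hi, smul_mul_assoc]
  have e4 : fi * (g j * (g i * fj)) = g j * (g i * fj) := by
    rw [s1, ← mul_assoc, h.ff hi]
  have e5 : fi * (fj * (g i * fj)) = (P.l / P.d) • (fi * fj) := by
    rw [h.fgf j hj i hi ha.symm, mul_smul_comm]
  have e6 : o * (g i * fj) = g i * fj := by rw [← mul_assoc, h.og i hi]
  rw [P.gg o (g j), add_mul, sub_mul, smul_mul_assoc, smul_mul_assoc, mul_add, mul_sub,
    mul_smul_comm, mul_smul_comm, e6, e3, e4, ← hfj, e5, e1] at e2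
  have hl := P.hl; have hm := P.hm; have hd := P.hd
  have e7 : (P.l⁻¹ + P.m) • (fi * fj) = (P.l⁻¹ + P.m) • P.d⁻¹ • (g j * (g i * fj)) := by
    have c1 : P.m * P.d / P.l * (P.l / P.d) = P.m := by field_simp
    have c2 : P.l / P.d + P.m = (P.l⁻¹ + P.m) * P.d⁻¹ := by
      have e := P.hrel; field_simp; field_simp at e; linear_combination -e
    rw [smul_smul, ← c2]
    rw [smul_smul, c1] at e2
    linear_combination (norm := module) -e2
  exact smul_right_injective _ P.hlm e7

lemma Sys.ggggf (h : Sys P Q S o g) {i j : Fin n} (hi : i ∈ S) (hj : j ∈ S) (ha : Q.Adj i j) :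
    g j * (g i * (g i * (g j * P.F o (g i)))) = P.F o (g i) := by
  set fi := P.F o (g i) with hfi
  set fj := P.F o (g j) with hfj
  have hl := P.hl; have hm := P.hm; have hd := P.hd
  have e0 : g j * (g i * (g i * (g j * fi))) = g j * (g i * g i * (g j * fi)) := by
    simp only [mul_assoc]
  have e1 : o * (g j * fi) = g j * fi := by rw [← mul_assoc, h.og j hj]
  have e2 : g j * (g j * fi) = fi - P.m • (g j * fi) + (P.m * P.d / P.l) • (fj * fi) := by
    rw [← mul_assoc, P.gg o (g j), add_mul, sub_mul, smul_mul_assoc, smul_mul_assoc, h.oF hi]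
  have e3 : g j * (g i * (g j * fi)) = P.l⁻¹ • (g i * (g j * fi)) := by
    have := h.braid j hj i hi ha.symm
    calc g j * (g i * (g j * fi)) = g j * (g i * g j) * fi := by simp only [mul_assoc]
      _ = g i * (g j * (g i * fi)) := by rw [this]; simp only [mul_assoc]
      _ = _ := by rw [h.gf i hi]; simp only [mul_smul_comm]; rfl
  have e4 := h.f_f hj hi ha.symm
  rw [← hfi, ← hfj] at e4
  rw [e0, P.gg o (g i), add_mul, sub_mul, smul_mul_assoc, smul_mul_assoc, mul_add, mul_sub,
    mul_smul_comm, mul_smul_comm, e1, e2, e3, ← hfi, h.fgf i hi j hj ha, mul_smul_comm, e4]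
  match_scalars
  · ring
  · field_simp; ring
  · field_simp; ring

lemma Sys.fgggg (h : Sys P Q S o g) {i j : Fin n} (hi : i ∈ S) (hj : j ∈ S) (ha : Q.Adj i j) :
    P.F o (g i) * (g j * (g i * (g i * g j))) = P.F o (g i) := by
  have := h.op.ggggf hi hj ha
  simp only [P.F_op, ← MulOpposite.op_mul] at this
  have := MulOpposite.op_injective this
  simpa only [mul_assoc] using this

lemma Sys.fg_comm (h : Sys P Q S o g) {i j : Fin n} (hi : i ∈ S) (hj : j ∈ S) (hne : i ≠ j)
    (ha : ¬ Q.Adj i j) : P.F o (g i) * g j = g j * P.F o (g i) :=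
  (P.F_intertwine (h.comm j hj i hi hne.symm fun h' => ha h'.symm)
    (by rw [h.go j hj, h.og j hj])).symm

lemma Sys.ff_comm (h : Sys P Q S o g) {i j : Fin n} (hi : i ∈ S) (hj : j ∈ S) (hne : i ≠ j)
    (ha : ¬ Q.Adj i j) : P.F o (g i) * P.F o (g j) = P.F o (g j) * P.F o (g i) :=
  P.F_intertwine (h.fg_comm hi hj hne ha) (by rw [h.oF hi, h.Fo hi])

/-- inverse of `g i` -/
def Par.inv (P : Par K) (o g : A) : A := g + P.m • o - (P.m * P.d) • P.F o g

lemma Sys.g_inv (h : Sys P Q S o g) {i : Fin n} (hi : i ∈ S) : g i * P.inv o (g i) = o := by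
  have hl := P.hl; have hm := P.hm; have hd := P.hd
  rw [Par.inv, mul_sub, mul_add, mul_smul_comm, mul_smul_comm, h.go i hi, h.gf i hi, P.gg o (g i)]
  module
lemma Sys.inv_g (h : Sys P Q S o g) {i : Fin n} (hi : i ∈ S) : P.inv o (g i) * g i = o := by
  have hl := P.hl; have hm := P.hm; have hd := P.hd
  rw [Par.inv, sub_mul, add_mul, smul_mul_assoc, smul_mul_assoc, h.og i hi, h.fg hi, P.gg o (g i)]
  module

end SysSec
end BMWaux

/-! ### Exchange lemma -/
namespace BMWaux
section Exch
variable {n : ℕ} (Q : SimpleGraph (Fin n))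

/-- simple reflection -/
noncomputable def rf (k : Fin n) (b : Fin n → ℤ) : Fin n → ℤ := b - cc Q k b • sr k

lemma cc_rf_self (k : Fin n) (b : Fin n → ℤ) : cc Q k (rf Q k b) = - cc Q k b := by
  rw [rf, cc_sub, cc_smul, cc_sr_self]; ring
lemma cc_rf_adj {i k : Fin n} (h : Q.Adj i k) (b : Fin n → ℤ) :
    cc Q i (rf Q k b) = cc Q i b + cc Q k b := by
  rw [rf, cc_sub, cc_smul, cc_sr_adj Q h]; ring
lemma cc_rf_nadj {i k : Fin n} (hne : i ≠ k) (h : ¬ Q.Adj i k) (b : Fin n → ℤ) :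
    cc Q i (rf Q k b) = cc Q i b := by
  rw [rf, cc_sub, cc_smul, cc_sr_nadj Q hne h]; ring
lemma rf_rf (k : Fin n) (b : Fin n → ℤ) : rf Q k (rf Q k b) = b := by
  rw [rf, cc_rf_self, rf]; module
lemma rf_comm {i k : Fin n} (hne : i ≠ k) (h : ¬ Q.Adj i k) (b : Fin n → ℤ) :
    rf Q k (rf Q i b) = rf Q i (rf Q k b) := by
  have h1 := cc_rf_nadj Q hne h b
  have h2 := cc_rf_nadj Q hne.symm (fun h' => h h'.symm) b
  rw [rf, h2]; conv_rhs => rw [rf, h1]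
  unfold rf; abel
lemma rf_braid {i k : Fin n} (h : Q.Adj i k) (b : Fin n → ℤ) :
    rf Q k (rf Q i (rf Q k (rf Q i b))) = rf Q i (rf Q k b) := by
  have h1 : cc Q k (rf Q i b) = cc Q k b + cc Q i b := cc_rf_adj Q h.symm b
  have h2 : cc Q i (rf Q k (rf Q i b)) = cc Q k b := by
    rw [cc_rf_adj Q h, cc_rf_self, h1]; ring
  have h3 : cc Q k (rf Q i (rf Q k (rf Q i b))) = - cc Q i b := by
    rw [cc_rf_adj Q h.symm, cc_rf_self, h1, h2]; ring
  have h4 : cc Q i (rf Q k b) = cc Q i b + cc Q k b := cc_rf_adj Q h b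
  rw [rf, h3, rf, h2, rf, h1, rf]
  conv_rhs => rw [rf, h4, rf]
  module
lemma Q2_rf (k : Fin n) (b : Fin n → ℤ) : Q2 Q (rf Q k b) = Q2 Q b := Q2_refl Q b k

variable {M : Type*} [Monoid M]

/-- minimal words taking the dominant `θ` to `b` -/
inductive Reach (S : Finset (Fin n)) (g : Fin n → M) (θ : Fin n → ℤ) : (Fin n → ℤ) → M → ℕ → Prop
  | base : Reach S g θ θ 1 0
  | step (b : Fin n → ℤ) (u : M) (d : ℕ) (k : Fin n) (h : Reach S g θ b u d) (hk : k ∈ S)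
      (hc : 0 < cc Q k b) : Reach S g θ (rf Q k b) (g k * u) (d + 1)

variable {Q}
variable {S : Finset (Fin n)} {g : Fin n → M} {θ : Fin n → ℤ}

variable (Q S g) in
/-- braid relations on `S` -/
structure Braids : Prop where
  comm : ∀ i ∈ S, ∀ j ∈ S, i ≠ j → ¬ Q.Adj i j → g i * g j = g j * g i
  braid : ∀ i ∈ S, ∀ j ∈ S, Q.Adj i j → g i * (g j * g i) = g j * (g i * g j)

lemma Reach.exch (hθ : IsDom Q S θ) (hB : Braids Q S g) :
    ∀ (d : ℕ) (b : Fin n → ℤ) (u : M) (i : Fin n), Reach Q S g θ b u d → i ∈ S → cc Q i b < 0 →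
      ∃ u' d', d = d' + 1 ∧ u = g i * u' ∧ Reach Q S g θ (rf Q i b) u' d' := by
  intro d
  induction d using Nat.strong_induction_on with
  | _ d ih =>
  intro b u i h hi hc
  cases h with
  | base => exact absurd (hθ i hi) (by omega)
  | step b1 u1 d1 k h1 hk hp =>
    by_cases hik : i = k
    · subst hik
      exact ⟨u1, d1, rfl, rfl, by rwa [rf_rf]⟩
    by_cases ha : Q.Adj i k
    · rw [cc_rf_adj Q ha] at hc
      obtain ⟨u2, d2, rfl, rfl, h2⟩ := ih d1 (by omega) b1 u1 i h1 hi (by omega)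
      have c1 : cc Q k (rf Q i b1) = cc Q k b1 + cc Q i b1 := cc_rf_adj Q ha.symm b1
      obtain ⟨u3, d3, rfl, rfl, h3⟩ := ih d2 (by omega) _ u2 k h2 hk (by omega)
      have c2 : cc Q i (rf Q k (rf Q i b1)) = cc Q k b1 := by
        rw [cc_rf_adj Q ha, cc_rf_self, c1]; ring
      have h4 := Reach.step _ _ _ i h3 hi (by omega)
      have h5 := Reach.step _ _ _ k h4 hk (by
        rw [cc_rf_adj Q ha.symm, cc_rf_self, c1, c2]; omega)
      rw [rf_braid Q ha] at h5
      refine ⟨_, _, rfl, ?_, h5⟩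
      have := hB.braid i hi k hk ha
      calc g k * (g i * (g k * u3)) = (g k * (g i * g k)) * u3 := by simp only [mul_assoc]
        _ = _ := by rw [← this]; simp only [mul_assoc]
    · rw [cc_rf_nadj Q hik ha] at hc
      obtain ⟨u2, d2, rfl, rfl, h2⟩ := ih d1 (by omega) b1 u1 i h1 hi (by omega)
      have c1 := cc_rf_nadj Q (Ne.symm hik) (fun h' => ha h'.symm) b1
      have h4 := Reach.step _ _ _ k h2 hk (by omega)
      rw [rf_comm Q hik ha] at h4
      refine ⟨_, _, rfl, ?_, h4⟩
      rw [← mul_assoc, ← hB.comm i hi k hk hik ha, mul_assoc]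

lemma Reach.orth (hθ : IsDom Q S θ) (hB : Braids Q S g) :
    ∀ (d : ℕ) (b : Fin n → ℤ) (u : M) (i : Fin n), Reach Q S g θ b u d → i ∈ S → cc Q i b = 0 →
      ∃ i' ∈ S, cc Q i' θ = 0 ∧ g i * u = u * g i' := by
  intro d
  induction d using Nat.strong_induction_on with
  | _ d ih =>
  intro b u i h hi hc
  cases h with
  | base => exact ⟨i, hi, hc, by simp⟩
  | step b1 u1 d1 k h1 hk hp =>
    by_cases hik : i = k
    · subst hik
      rw [cc_rf_self] at hc
      omega
    by_cases ha : Q.Adj i k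
    · rw [cc_rf_adj Q ha] at hc
      obtain ⟨u2, d2, rfl, rfl, h2⟩ := Reach.exch hθ hB d1 b1 u1 i h1 hi (by omega)
      have c1 : cc Q k (rf Q i b1) = cc Q k b1 + cc Q i b1 := cc_rf_adj Q ha.symm b1
      obtain ⟨i', hi', hc', he⟩ := ih d2 (by omega) _ u2 k h2 hk (by omega)
      refine ⟨i', hi', hc', ?_⟩
      have := hB.braid i hi k hk ha
      calc g i * (g k * (g i * u2)) = (g i * (g k * g i)) * u2 := by simp only [mul_assoc]
        _ = g k * (g i * (g k * u2)) := by rw [this]; simp only [mul_assoc]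
        _ = _ := by rw [he]; simp only [mul_assoc]
    · rw [cc_rf_nadj Q hik ha] at hc
      obtain ⟨i', hi', hc', he⟩ := ih d1 (by omega) b1 u1 i h1 hi hc
      refine ⟨i', hi', hc', ?_⟩
      rw [← mul_assoc, hB.comm i hi k hk hik ha, mul_assoc, he, mul_assoc]

lemma Reach.unique (hθ : IsDom Q S θ) (hB : Braids Q S g) {d : ℕ} {b : Fin n → ℤ} {u : M}
    (h : Reach Q S g θ b u d) : ∀ {u' : M} {d' : ℕ}, Reach Q S g θ b u' d' → u = u' := by
  induction h with
  | base =>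
    intro u' d' h'
    generalize hb : θ = b' at h'
    cases h' with
    | base => rfl
    | step b1 u1 d1 k h1 hk hp =>
      have := hθ k hk
      rw [hb, cc_rf_self] at this
      omega
  | step b1 u1 d1 k h1 hk hp ih =>
    intro u' d' h'
    obtain ⟨u2, d2, rfl, rfl, h2⟩ := Reach.exch hθ hB d' _ u' k h' hk (by rw [cc_rf_self]; omega)
    rw [rf_rf] at h2
    rw [ih h2]

lemma Reach.Q2_eq {d : ℕ} {b : Fin n → ℤ} {u : M} (h : Reach Q S g θ b u d) :
    Q2 Q b = Q2 Q θ := by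
  induction h with
  | base => rfl
  | step b1 u1 d1 k h1 hk hp ih => rw [Q2_rf, ih]

lemma Reach.finite (hQ : Good Q) (hθ : IsDom Q S θ) (hB : Braids Q S g) :
    {u : M | ∃ b d, Reach Q S g θ b u d}.Finite := by
  have : {u : M | ∃ b d, Reach Q S g θ b u d} =
      ⋃ b ∈ {b | Q2 Q b = Q2 Q θ}, {u : M | ∃ d, Reach Q S g θ b u d} := by
    ext u
    simp only [Set.mem_ofPred_eq, Set.mem_iUnion, exists_prop]
    exact ⟨fun ⟨b, d, h⟩ => ⟨b, h.Q2_eq, d, h⟩, fun ⟨b, _, d, h⟩ => ⟨b, d, h⟩⟩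
  rw [this]
  refine (hQ.finite_Q2 _).biUnion fun b _ => Set.Subsingleton.finite ?_
  rintro u ⟨d, h⟩ u' ⟨d', h'⟩
  exact h.unique hθ hB h'

/-- the three cases for multiplication of a minimal word by a generator -/
lemma Reach.mul (hθ : IsDom Q S θ) (hB : Braids Q S g) {d : ℕ} {b : Fin n → ℤ} {u : M}
    (h : Reach Q S g θ b u d) {i : Fin n} (hi : i ∈ S) :
    (∃ b' d', Reach Q S g θ b' (g i * u) d') ∨ (∃ i' ∈ S, cc Q i' θ = 0 ∧ g i * u = u * g i') ∨
      (∃ u' b' d', u = g i * u' ∧ Reach Q S g θ b' u' d') := by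
  rcases lt_trichotomy (cc Q i b) 0 with hc | hc | hc
  · obtain ⟨u', d', _, hu, h'⟩ := Reach.exch hθ hB d b u i h hi hc
    exact Or.inr (Or.inr ⟨u', _, d', hu, h'⟩)
  · exact Or.inr (Or.inl (Reach.orth hθ hB d b u i h hi hc))
  · exact Or.inl ⟨_, _, Reach.step _ _ _ i h hi hc⟩

/-- generic membership: a subset closed under the generators contains `u * x` -/
lemma Reach.mem {R : Set M} {d : ℕ} {b : Fin n → ℤ} {u : M} (h : Reach Q S g θ b u d)
    (hR : ∀ i ∈ S, ∀ y ∈ R, g i * y ∈ R) {x : M} (hx : x ∈ R) : u * x ∈ R := by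
  induction h with
  | base => simpa using hx
  | step b1 u1 d1 k h1 hk hp ih => rw [mul_assoc]; exact hR k hk _ ih

end Exch
end BMWaux

/-! ### Integral submodules and the Hecke lemma -/
namespace BMWaux
section FinMon
variable {n : ℕ} {Q : SimpleGraph (Fin n)} {M : Type*} [Monoid M]

/-- Finite monoid generated by involutions satisfying the braid relations -/
lemma finite_closed (hQ : Good Q) (g : Fin n → M) : ∀ (N : ℕ) (S : Finset (Fin n)), S.card ≤ N →
    Braids Q S g → (∀ i ∈ S, g i * g i = 1) →
    ∃ W : Set M, W.Finite ∧ 1 ∈ W ∧ ∀ i ∈ S, ∀ w ∈ W, g i * w ∈ W := by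
  classical
  intro N
  induction N with
  | zero =>
    intro S hS _ _
    rw [Nat.le_zero, Finset.card_eq_zero] at hS
    subst hS
    exact ⟨{1}, Set.finite_singleton _, rfl, by simp⟩
  | succ N ih =>
    intro S hS hB h2
    by_cases hne : S.Nonempty
    swap
    · rw [Finset.not_nonempty_iff_eq_empty] at hne
      subst hne
      exact ⟨{1}, Set.finite_singleton _, rfl, by simp⟩
    obtain ⟨θ, hθ, hd⟩ := exists_dom hQ hne
    set S' := S.filter fun i => cc Q i θ = 0 with hS'
    have hsub : S' ⊆ S := Finset.filter_subset _ _
    have hlt : S' ⊂ S := by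
      obtain ⟨k, hk, hc⟩ := hθ.exists_cc_pos
      refine Finset.ssubset_iff_subset_ne.2 ⟨hsub, fun h => ?_⟩
      rw [← h, hS', Finset.mem_filter] at hk
      omega
    obtain ⟨W, hW, h1, hcl⟩ := ih S' (by have := Finset.card_lt_card hlt; omega)
      ⟨fun i hi j hj => hB.comm i (hsub hi) j (hsub hj),
        fun i hi j hj => hB.braid i (hsub hi) j (hsub hj)⟩ (fun i hi => h2 i (hsub hi))
    refine ⟨Set.image2 (· * ·) {u : M | ∃ b d, Reach Q S g θ b u d} W,
      (Reach.finite hQ hd hB).image2 _ hW, ⟨1, ⟨θ, 0, .base⟩, 1, h1, by simp⟩, ?_⟩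
    rintro i hi _ ⟨u, ⟨b, d, hu⟩, w, hw, rfl⟩
    rcases hu.mul hd hB hi with ⟨b', d', h'⟩ | ⟨i', hi', hc', he⟩ | ⟨u', b', d', rfl, h'⟩
    · exact ⟨_, ⟨b', d', h'⟩, w, hw, by simp only [mul_assoc]⟩
    · refine ⟨u, ⟨b, d, hu⟩, g i' * w, hcl i' (Finset.mem_filter.2 ⟨hi', hc'⟩) w hw, ?_⟩
      simp only
      rw [← mul_assoc, ← mul_assoc, he]
    · refine ⟨u', ⟨b', d', h'⟩, w, hw, ?_⟩
      simp only
      rw [← mul_assoc, ← mul_assoc, h2 i hi, one_mul]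
end FinMon

section IntSub
variable (V : Type*) [CommRing V] {K : Type*} [Field K] [Algebra V K]

/-- integral scalars -/
def IsInt (c : K) : Prop := ∃ v : V, algebraMap V K v = c

/-- integral parameters -/
structure IntPar (P : Par K) : Prop where
  l : IsInt V P.l
  li : IsInt V P.l⁻¹
  m : IsInt V P.m
  md : IsInt V (P.m * P.d)
  di : IsInt V P.d⁻¹

variable {V}
lemma IsInt.mul {a b : K} (ha : IsInt V a) (hb : IsInt V b) : IsInt V (a * b) := by
  obtain ⟨x, rfl⟩ := ha; obtain ⟨y, rfl⟩ := hb
  exact ⟨x * y, map_mul _ _ _⟩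
lemma IntPar.mdl {P : Par K} (h : IntPar V P) : IsInt V (P.m * P.d / P.l) := by
  rw [div_eq_mul_inv]; exact h.md.mul h.li
lemma IntPar.ld {P : Par K} (h : IntPar V P) : IsInt V (P.l / P.d) := by
  rw [div_eq_mul_inv]; exact h.l.mul h.di

variable {A : Type*} [Ring A] [Algebra K A] [Algebra V A] [IsScalarTower V K A]

lemma IsInt.smul_mem {c : K} (hc : IsInt V c) (N : Submodule V A) {x : A} (hx : x ∈ N) :
    c • x ∈ N := by
  obtain ⟨v, rfl⟩ := hc
  rw [algebraMap_smul]; exact N.smul_mem v hx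

lemma span_mul_le {T : Set A} {N L : Submodule V A} (h : ∀ u ∈ T, ∀ y ∈ N, u * y ∈ L) :
    Submodule.span V T * N ≤ L := by
  refine Submodule.mul_le.2 fun x hx y hy => ?_
  induction hx using Submodule.span_induction with
  | mem u hu => exact h u hu y hy
  | zero => simp
  | add a b _ _ ha hb => rw [add_mul]; exact L.add_mem ha hb
  | smul c a _ ha => rw [smul_mul_assoc]; exact L.smul_mem c ha

variable {n : ℕ} {Q : SimpleGraph (Fin n)}

lemma hecke (hQ : Good Q) {m : K} (hm : IsInt V m) (g : Fin n → A) (o : A) (J R : Submodule V A)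
    (ho : o ∈ R) : ∀ (N : ℕ) (S : Finset (Fin n)), S.card ≤ N → Braids Q S g →
    (∀ i ∈ S, ∀ x ∈ R, g i * x ∈ R) → (∀ i ∈ S, ∀ x ∈ J, g i * x ∈ J) →
    (∀ i ∈ S, ∀ x ∈ R, g i * (g i * x) - (x - m • (g i * x)) ∈ J) →
    ∃ W : Submodule V A, W.FG ∧ W ≤ R ∧ o ∈ W ∧ ∀ i ∈ S, ∀ w ∈ W, g i * w ∈ W ⊔ J := by
  classical
  intro N
  induction N with
  | zero =>
    intro S hS _ _ _ _
    rw [Nat.le_zero, Finset.card_eq_zero] at hS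
    subst hS
    exact ⟨Submodule.span V {o}, Submodule.fg_span_singleton _,
      by rwa [Submodule.span_singleton_le_iff_mem], Submodule.mem_span_singleton_self o, by simp⟩
  | succ N ih =>
    intro S hS hB hR hJ h2
    by_cases hne : S.Nonempty
    swap
    · rw [Finset.not_nonempty_iff_eq_empty] at hne
      subst hne
      exact ⟨Submodule.span V {o}, Submodule.fg_span_singleton _,
        by rwa [Submodule.span_singleton_le_iff_mem], Submodule.mem_span_singleton_self o, by simp⟩
    obtain ⟨θ, hθ, hd⟩ := exists_dom hQ hne
    set S' := S.filter fun i => cc Q i θ = 0 with hS'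
    have hsub : S' ⊆ S := Finset.filter_subset _ _
    have hlt : S' ⊂ S := by
      obtain ⟨k, hk, hc⟩ := hθ.exists_cc_pos
      refine Finset.ssubset_iff_subset_ne.2 ⟨hsub, fun h => ?_⟩
      rw [← h, hS', Finset.mem_filter] at hk
      omega
    obtain ⟨W, hW, hWR, h1, hcl⟩ := ih S' (by have := Finset.card_lt_card hlt; omega)
      ⟨fun i hi j hj => hB.comm i (hsub hi) j (hsub hj),
        fun i hi j hj => hB.braid i (hsub hi) j (hsub hj)⟩ (fun i hi => hR i (hsub hi))
        (fun i hi => hJ i (hsub hi)) (fun i hi => h2 i (hsub hi))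
    set U := {u : A | ∃ b d, Reach Q S g θ b u d} with hU
    have hmem : ∀ {u b d}, Reach Q S g θ b u d → ∀ {w}, w ∈ W → u * w ∈ Submodule.span V U * W :=
      fun hu _ hw => Submodule.mul_mem_mul (Submodule.subset_span ⟨_, _, hu⟩) hw
    refine ⟨Submodule.span V U * W,
      (Submodule.fg_span (Reach.finite hQ hd hB)).mul hW, span_mul_le ?_, ?_, ?_⟩
    · rintro u ⟨b, d, hu⟩ y hy
      exact hu.mem (R := (R : Set A)) hR (hWR hy)
    · have := hmem Reach.base h1
      rwa [one_mul] at this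
    · intro i hi
      suffices h : Submodule.span V U * W ≤
          (Submodule.span V U * W ⊔ J).comap (LinearMap.mulLeft V (g i)) from fun w hw => h hw
      refine span_mul_le ?_
      rintro u ⟨b, d, hu⟩ w hw
      rw [Submodule.mem_comap, LinearMap.mulLeft_apply]
      rcases hu.mul hd hB hi with ⟨b', d', h'⟩ | ⟨i', hi', hc', he⟩ | ⟨u', b', d', rfl, h'⟩
      · rw [← mul_assoc]; exact Submodule.mem_sup_left (hmem h' hw)
      · rw [← mul_assoc, he, mul_assoc]
        obtain ⟨w1, hw1, j, hj, hsum⟩ :=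
          Submodule.mem_sup.1 (hcl i' (Finset.mem_filter.2 ⟨hi', hc'⟩) w hw)
        rw [← hsum, mul_add]
        exact Submodule.add_mem_sup (hmem hu hw1) (hu.mem (R := (J : Set A)) hJ hj)
      · have h3 := h2 i hi (u' * w) (h'.mem (R := (R : Set A)) hR (hWR hw))
        rw [← mul_assoc (g i) u' w] at h3
        rw [← sub_add_cancel (g i * (g i * u' * w)) (u' * w - m • (g i * u' * w)), add_comm]
        refine Submodule.add_mem_sup (Submodule.sub_mem _ (hmem h' hw) (hm.smul_mem _ (hmem hu hw))) h3

end IntSub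
end BMWaux

/-! ### Frames and the corner system -/
namespace BMWaux
section RecSec
variable {n : ℕ} {Q : SimpleGraph (Fin n)}

lemma exists_rec (hQ : Good Q) (S : Finset (Fin n)) {α : Type*} (step : Fin n → Fin n → α → α)
    (base : Fin n → α) : ∃ v : Fin n → α, ∀ k,
      (∀ p ∈ S, Q.Adj k p → k < p → v k = step k p (v p)) ∧
      ((∀ p ∈ S, Q.Adj k p → ¬ k < p) → v k = base k) := by
  classical
  let G : (k : Fin n) → ((p : Fin n) → p > k → α) → α := fun k rec =>
    if h : ∃ p, p ∈ S ∧ Q.Adj k p ∧ k < p then step k h.choose (rec h.choose h.choose_spec.2.2)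
    else base k
  refine ⟨(wellFounded_gt (α := Fin n)).fix G, fun k => ⟨fun p hp ha hlt => ?_, fun hno => ?_⟩⟩
  · rw [WellFounded.fix_eq]
    have hex : ∃ p, p ∈ S ∧ Q.Adj k p ∧ k < p := ⟨p, hp, ha, hlt⟩
    have he : hex.choose = p := hQ.par k _ _ hex.choose_spec.2.1 ha hex.choose_spec.2.2 hlt
    simp only [G, dif_pos hex]
    rw [he]
  · rw [WellFounded.fix_eq]
    have hex : ¬ ∃ p, p ∈ S ∧ Q.Adj k p ∧ k < p := fun ⟨p, hp, ha, hlt⟩ => hno p hp ha hlt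
    simp only [G, dif_neg hex]

/-- component labels -/
lemma exists_label (hQ : Good Q) (S : Finset (Fin n)) : ∃ T : Fin n → Fin n,
    (∀ k ∈ S, T k ∈ S) ∧ (∀ k ∈ S, ∀ p ∈ S, Q.Adj k p → T k = T p) ∧
    (∀ k ∈ S, ∀ p ∈ S, Q.Adj (T k) p → ¬ T k < p) ∧ (∀ k ∈ S, T (T k) = T k) := by
  obtain ⟨T, hT⟩ := exists_rec hQ S (α := Fin n) (fun _ _ x => x) id
  have key : ∀ k, k ∈ S → T k ∈ S ∧ (∀ p ∈ S, Q.Adj (T k) p → ¬ T k < p) ∧ T (T k) = T k := by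
    intro k
    induction k using (wellFounded_gt (α := Fin n)).induction with
    | _ k ih =>
    intro hk
    by_cases h : ∃ p, p ∈ S ∧ Q.Adj k p ∧ k < p
    · obtain ⟨p, hp, ha, hlt⟩ := h
      rw [(hT k).1 p hp ha hlt]
      exact ih p hlt hp
    · push Not at h
      have h' : ∀ p ∈ S, Q.Adj k p → ¬ k < p := fun p hp ha => not_lt.2 (h p hp ha)
      have he : T k = k := (hT k).2 h'
      rw [he]
      exact ⟨hk, h', he⟩
  refine ⟨T, fun k hk => (key k hk).1, fun k hk p hp ha => ?_, fun k hk => (key k hk).2.1,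
    fun k hk => (key k hk).2.2⟩
  rcases lt_or_gt_of_ne ha.ne with h | h
  · exact (hT k).1 p hp ha h
  · exact ((hT p).1 k hk ha.symm h).symm

end RecSec

section FrameSec
variable {K : Type*} [Field K] {A : Type*} [Ring A] [Algebra K A]
variable {n : ℕ}

/-- transport elements between the idempotents `f k` -/
structure Frame (P : Par K) (Q : SimpleGraph (Fin n)) (S : Finset (Fin n)) (o : A)
    (g : Fin n → A) (j : Fin n) (v vs : Fin n → A) : Prop where
  sys : Sys P Q S o g
  jS : j ∈ S
  vadj : ∀ k ∈ S, ∀ p ∈ S, Q.Adj k p → v k = g p * (g k * v p)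
  vsadj : ∀ k ∈ S, ∀ p ∈ S, Q.Adj k p → vs k = vs p * (g k * g p)
  fv : ∀ k ∈ S, P.F o (g k) * v k = v k
  vsf : ∀ k ∈ S, vs k * P.F o (g k) = vs k
  vsv : ∀ k ∈ S, vs k * v k = P.F o (g j)
  vvs : ∀ k ∈ S, v k * vs k = P.F o (g k)
  vj : v j = P.F o (g j)
  vsj : vs j = P.F o (g j)

variable {P : Par K} {Q : SimpleGraph (Fin n)} {S : Finset (Fin n)} {o : A}
    {g : Fin n → A} {j : Fin n} {v vs : Fin n → A}

lemma Frame.vf (h : Frame P Q S o g j v vs) {k : Fin n} (hk : k ∈ S) :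
    v k * P.F o (g j) = v k := by
  rw [← h.vsv k hk, ← mul_assoc, h.vvs k hk, h.fv k hk]
lemma Frame.fvs (h : Frame P Q S o g j v vs) {k : Fin n} (hk : k ∈ S) :
    P.F o (g j) * vs k = vs k := by
  rw [← h.vsv k hk, mul_assoc, h.vvs k hk, h.vsf k hk]

lemma Frame.op (h : Frame P Q S o g j v vs) :
    Frame P Q S (MulOpposite.op o) (fun i => MulOpposite.op (g i)) j
      (fun i => MulOpposite.op (vs i)) (fun i => MulOpposite.op (v i)) := by
  refine ⟨h.sys.op, h.jS, fun k hk p hp ha => ?_, fun k hk p hp ha => ?_, fun k hk => ?_,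
    fun k hk => ?_, fun k hk => ?_, fun k hk => ?_, ?_, ?_⟩
  · rw [h.vsadj k hk p hp ha, ← mul_assoc]; simp only [MulOpposite.op_mul]
  · rw [h.vadj k hk p hp ha, ← mul_assoc]; simp only [MulOpposite.op_mul]
  · rw [P.F_op, ← MulOpposite.op_mul, h.vsf k hk]
  · rw [P.F_op, ← MulOpposite.op_mul, h.fv k hk]
  · rw [P.F_op, ← MulOpposite.op_mul, h.vsv k hk]
  · rw [P.F_op, ← MulOpposite.op_mul, h.vvs k hk]
  · rw [P.F_op, h.vsj]
  · rw [P.F_op, h.vj]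

lemma exists_frame (hQ : Good Q) (h : Sys P Q S o g) (hne : S.Nonempty) (hc : IsConn Q S) :
    ∃ j v vs, Frame P Q S o g j v vs := by
  classical
  obtain ⟨T, hTS, hTa, hTt, hTT⟩ := exists_label hQ S
  obtain ⟨v, hv⟩ := exists_rec hQ S (fun k p x => g p * (g k * x)) (fun k => P.F o (g k))
  obtain ⟨vs, hvs⟩ := exists_rec hQ S (fun k p x => x * (g k * g p)) (fun k => P.F o (g k))
  obtain ⟨k0, hk0⟩ := hne
  have hconst : ∀ k ∈ S, T k = T k0 := by
    have := hc (S.filter fun k => T k = T k0) (Finset.filter_subset _ _)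
      ⟨k0, Finset.mem_filter.2 ⟨hk0, rfl⟩⟩ (fun i hi k hk ha => by
        rw [Finset.mem_filter] at hi ⊢
        exact ⟨hk, by rw [← hTa i hi.1 k hk ha, hi.2]⟩)
    intro k hk
    rw [← this] at hk
    exact (Finset.mem_filter.1 hk).2
  have hTv : ∀ k ∈ S, (∀ p ∈ S, Q.Adj k p → ¬ k < p) → k = T k0 := by
    intro k hk hno
    by_contra hne
    -- the label of a top node is itself
    obtain ⟨T', hT'⟩ := exists_rec hQ S (α := Fin n) (fun _ _ x => x) id
    have hT'a : ∀ a ∈ S, ∀ b ∈ S, Q.Adj a b → T' a = T' b := by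
      intro a ha b hb hab
      rcases lt_or_gt_of_ne hab.ne with h | h
      · exact (hT' a).1 b hb hab h
      · exact ((hT' b).1 a ha hab.symm h).symm
    have h1 : T' k = k := (hT' k).2 hno
    have h2 : T' (T k0) = T k0 := (hT' _).2 (hTt k0 hk0)
    have h3 := hc (S.filter fun a => T' a = k) (Finset.filter_subset _ _)
      ⟨k, Finset.mem_filter.2 ⟨hk, h1⟩⟩ (fun i hi a ha hia => by
        rw [Finset.mem_filter] at hi ⊢
        exact ⟨ha, by rw [← hT'a i hi.1 a ha hia, hi.2]⟩)
    have h4 : T k0 ∈ S := hTS k0 hk0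
    rw [← h3, Finset.mem_filter, h2] at h4
    exact hne h4.2.symm
  have key : ∀ k, k ∈ S → P.F o (g k) * v k = v k ∧ vs k * P.F o (g k) = vs k ∧
      vs k * v k = P.F o (g (T k0)) ∧ v k * vs k = P.F o (g k) := by
    intro k
    induction k using (wellFounded_gt (α := Fin n)).induction with
    | _ k ih =>
    intro hk
    by_cases hex : ∃ p, p ∈ S ∧ Q.Adj k p ∧ k < p
    · obtain ⟨p, hp, ha, hlt⟩ := hex
      obtain ⟨i1, i2, i3, i4⟩ := ih p hlt hp
      have e1 : v k = g p * (g k * v p) := (hv k).1 p hp ha hlt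
      have e2 : vs k = vs p * (g k * g p) := (hvs k).1 p hp ha hlt
      have s1 := h.swap hk hp ha
      have s2 := h.swap hp hk ha.symm
      refine ⟨?_, ?_, ?_, ?_⟩
      · rw [e1]
        calc P.F o (g k) * (g p * (g k * v p)) = (P.F o (g k) * (g p * g k)) * v p := by
              simp only [mul_assoc]
          _ = g p * (g k * (P.F o (g p) * v p)) := by rw [← s1]; simp only [mul_assoc]
          _ = _ := by rw [i1]
      · rw [e2, mul_assoc, mul_assoc, s2, ← mul_assoc, i2]
      · rw [e1, e2, ← i1]
        calc vs p * (g k * g p) * (g p * (g k * (P.F o (g p) * v p)))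
            = vs p * ((g k * (g p * (g p * (g k * P.F o (g p))))) * v p) := by
              simp only [mul_assoc]
          _ = _ := by rw [h.ggggf hp hk ha.symm, i1, i3]
      · rw [e1, e2]
        calc g p * (g k * v p) * (vs p * (g k * g p))
            = g p * (g k * (v p * vs p)) * (g k * g p) := by simp only [mul_assoc]
          _ = P.F o (g k) * (g p * (g k * (g k * g p))) := by
              rw [i4, s1]; simp only [mul_assoc]
          _ = _ := h.fgggg hk hp ha
    · push Not at hex
      have h' : ∀ p ∈ S, Q.Adj k p → ¬ k < p := fun p hp ha => not_lt.2 (hex p hp ha)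
      have e1 : v k = P.F o (g k) := (hv k).2 h'
      have e2 : vs k = P.F o (g k) := (hvs k).2 h'
      have e3 := hTv k hk h'
      rw [e1, e2, ← e3, h.ff hk]
      exact ⟨rfl, rfl, rfl, rfl⟩
  refine ⟨T k0, v, vs, h, hTS k0 hk0, fun k hk p hp ha => ?_, fun k hk p hp ha => ?_,
    fun k hk => (key k hk).1, fun k hk => (key k hk).2.1, fun k hk => (key k hk).2.2.1,
    fun k hk => (key k hk).2.2.2, (hv _).2 (hTt k0 hk0), (hvs _).2 (hTt k0 hk0)⟩
  · rcases lt_or_gt_of_ne ha.ne with hl | hl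
    · exact (hv k).1 p hp ha hl
    · have e1 : v p = g k * (g p * v k) := (hv p).1 k hk ha.symm hl
      rw [e1, ← (key k hk).1]
      calc P.F o (g k) * v k = (g p * (g k * (g k * (g p * P.F o (g k))))) * v k := by
            rw [h.ggggf hk hp ha]
        _ = _ := by simp only [mul_assoc]
  · rcases lt_or_gt_of_ne ha.ne with hl | hl
    · exact (hvs k).1 p hp ha hl
    · have e1 : vs p = vs k * (g p * g k) := (hvs p).1 k hk ha.symm hl
      rw [e1, ← (key k hk).2.1]
      calc vs k * P.F o (g k) = vs k * (P.F o (g k) * (g p * (g k * (g k * g p)))) := by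
            rw [h.fgggg hk hp ha]
        _ = _ := by simp only [mul_assoc]

lemma Frame.gv (h : Frame P Q S o g j v vs) {k : Fin n} (hk : k ∈ S) : g k * v k = P.l⁻¹ • v k := by
  rw [← h.fv k hk, ← mul_assoc, h.sys.gf k hk, smul_mul_assoc]

lemma Frame.ov (h : Frame P Q S o g j v vs) {k : Fin n} (hk : k ∈ S) : o * v k = v k := by
  rw [← h.fv k hk, ← mul_assoc, h.sys.oF hk]

lemma Frame.f_v (h : Frame P Q S o g j v vs) {k p : Fin n} (hk : k ∈ S) (hp : p ∈ S)
    (ha : Q.Adj k p) : P.F o (g k) * v p = P.d⁻¹ • v k := by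
  rw [← h.fv p hp, ← mul_assoc, h.sys.f_f hk hp ha, smul_mul_assoc, h.vadj k hk p hp ha]
  rw [mul_assoc, mul_assoc, h.fv p hp]

/-- the base identity of the `U` step -/
lemma Frame.base (h : Frame P Q S o g j v vs) {i k : Fin n} (hi : i ∈ S) (hk : k ∈ S)
    (ha : Q.Adj i k) : g k * v i = g i * v k + P.m • v k - P.m • v i := by
  have e1 := h.vadj k hk i hi ha.symm
  have e2 : P.F o (g i) * (g k * v i) = (P.l / P.d) • v i := by
    rw [← h.fv i hi]
    calc P.F o (g i) * (g k * (P.F o (g i) * v i)) = P.F o (g i) * (g k * P.F o (g i)) * v i := by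
          simp only [mul_assoc]
      _ = _ := by rw [h.sys.fgf i hi k hk ha, smul_mul_assoc]
  have e3 : g i * v k = o * (g k * v i) - P.m • v k + (P.m * P.d / P.l) • ((P.l / P.d) • v i) := by
    rw [← e2]
    conv_lhs => rw [e1, ← mul_assoc, P.gg o (g i), add_mul, sub_mul, smul_mul_assoc,
      smul_mul_assoc, ← e1]
  have e4 : o * (g k * v i) = g k * v i := by rw [← mul_assoc, h.sys.og k hk]
  have c1 : P.m * P.d / P.l * (P.l / P.d) = P.m := by
    have hl := P.hl; have hd := P.hd; field_simp
  rw [e4, smul_smul, c1] at e3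
  rw [e3]; abel

/-- corner generator -/
def Hc (g v vs : Fin n → A) (k i : Fin n) : A := vs k * (g i * v k)

lemma Frame.gv_eq (h : Frame P Q S o g j v vs) {k i : Fin n} (hk : k ∈ S) (hi : i ∈ S)
    (hne : i ≠ k) (ha : ¬ Q.Adj i k) : v k * Hc g v vs k i = g i * v k := by
  rw [Hc, ← mul_assoc, h.vvs k hk, ← mul_assoc,
    h.sys.fg_comm hk hi hne.symm (fun h' => ha h'.symm), mul_assoc, h.fv k hk]

lemma Frame.fv_eq (h : Frame P Q S o g j v vs) {k i : Fin n} (hk : k ∈ S) (hi : i ∈ S)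
    (hne : i ≠ k) (ha : ¬ Q.Adj i k) :
    v k * P.F (P.F o (g j)) (Hc g v vs k i) = P.F o (g i) * v k :=
  P.F_intertwine (h.gv_eq hk hi hne ha) (by rw [h.vf hk, h.ov hk])

lemma Frame.vs_mul (h : Frame P Q S o g j v vs) {k : Fin n} (hk : k ∈ S) {x : A}
    (hx : P.F o (g j) * x = x) : vs k * (v k * x) = x := by
  rw [← mul_assoc, h.vsv k hk, hx]

lemma Frame.f_H (h : Frame P Q S o g j v vs) {k : Fin n} (hk : k ∈ S) (i : Fin n) :
    P.F o (g j) * Hc g v vs k i = Hc g v vs k i := by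
  rw [Hc, ← mul_assoc, h.fvs hk]
lemma Frame.H_f (h : Frame P Q S o g j v vs) {k : Fin n} (hk : k ∈ S) (i : Fin n) :
    Hc g v vs k i * P.F o (g j) = Hc g v vs k i := by
  rw [Hc, mul_assoc, mul_assoc, h.vf hk]

lemma Frame.H_adj (h : Frame P Q S o g j v vs) {k p i : Fin n} (hk : k ∈ S) (hp : p ∈ S)
    (hi : i ∈ S) (hkp : Q.Adj k p) (hik : i ≠ k) (hip : i ≠ p) (ak : ¬ Q.Adj i k)
    (ap : ¬ Q.Adj i p) : Hc g v vs k i = Hc g v vs p i := by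
  have e1 : g i * v k = v k * Hc g v vs p i := by
    rw [h.vadj k hk p hp hkp]
    calc g i * (g p * (g k * v p)) = (g i * g p) * (g k * v p) := by simp only [mul_assoc]
      _ = g p * ((g i * g k) * v p) := by
          rw [h.sys.comm i hi p hp hip ap]; simp only [mul_assoc]
      _ = g p * (g k * (g i * v p)) := by
          rw [h.sys.comm i hi k hk hik ak]; simp only [mul_assoc]
      _ = _ := by rw [← h.gv_eq hp hi hip ap]; simp only [mul_assoc]
  rw [Hc, e1, h.vs_mul hk (h.f_H hp i)]

lemma Frame.H_symm (h : Frame P Q S o g j v vs) {k i c : Fin n} (hk : k ∈ S) (hi : i ∈ S)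
    (hc : c ∈ S) (hne : i ≠ k) (ha : ¬ Q.Adj i k) (hkc : Q.Adj k c) (hic : Q.Adj i c) :
    Hc g v vs k i = Hc g v vs i k := by
  have b1 := h.sys.braid i hi c hc hic
  have b2 := h.sys.braid k hk c hc hkc
  have cm := h.sys.comm i hi k hk hne ha
  rw [Hc, Hc, h.vadj k hk c hc hkc, h.vsadj k hk c hc hkc, h.vadj i hi c hc hic,
    h.vsadj i hi c hc hic]
  calc vs c * (g k * g c) * (g i * (g c * (g k * v c)))
      = vs c * (g k * (g c * (g i * g c)) * (g k * v c)) := by simp only [mul_assoc]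
    _ = vs c * ((g k * g i) * g c * (g i * g k) * v c) := by rw [← b1]; simp only [mul_assoc]
    _ = vs c * ((g i * g k) * g c * (g k * g i) * v c) := by rw [cm]
    _ = vs c * (g i * (g k * (g c * g k)) * (g i * v c)) := by simp only [mul_assoc]
    _ = _ := by rw [b2]; simp only [mul_assoc]

end FrameSec
end BMWaux

/-! ### The corner system -/
namespace BMWaux
section Corner
variable {A : Type*} [Ring A]
variable {n : ℕ}

/-- `Hrel β i h`: `h` is the corner generator attached to the node `i` orthogonal to `β` -/
inductive Hrel (Q : SimpleGraph (Fin n)) (S : Finset (Fin n)) (g v vs : Fin n → A) :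
    (Fin n → ℤ) → Fin n → A → Prop
  | base (k i : Fin n) (hk : k ∈ S) (hi : i ∈ S) (hne : i ≠ k) (ha : ¬ Q.Adj i k) :
      Hrel Q S g v vs (sr k) i (Hc g v vs k i)
  | stepN (b : Fin n → ℤ) (i k : Fin n) (x : A) (hb : IsRoot Q S b) (hi : i ∈ S)
      (hc : cc Q i b = 0) (hk : cc Q k b = 1) (ha : ¬ Q.Adj k i)
      (hx : Hrel Q S g v vs (b - sr k) i x) : Hrel Q S g v vs b i x
  | stepA (b : Fin n → ℤ) (i k : Fin n) (x : A) (hb : IsRoot Q S b) (hi : i ∈ S)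
      (hc : cc Q i b = 0) (hk : cc Q k b = 1) (ha : Q.Adj k i)
      (hx : Hrel Q S g v vs (b - sr k - sr i) k x) : Hrel Q S g v vs b i x

variable {Q : SimpleGraph (Fin n)} {S : Finset (Fin n)} {g v vs : Fin n → A}

lemma Hrel.inv {b : Fin n → ℤ} {i : Fin n} {x : A} (h : Hrel Q S g v vs b i x) :
    (∃ k ∈ S, b = sr k ∧ i ≠ k ∧ ¬ Q.Adj i k ∧ x = Hc g v vs k i) ∨
    (∃ k, IsRoot Q S b ∧ cc Q i b = 0 ∧ cc Q k b = 1 ∧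
      ((¬ Q.Adj k i ∧ Hrel Q S g v vs (b - sr k) i x) ∨
        (Q.Adj k i ∧ Hrel Q S g v vs (b - sr k - sr i) k x))) := by
  cases h with
  | base k _ hk hi hne ha => exact Or.inl ⟨k, hk, rfl, hne, ha, rfl⟩
  | stepN _ _ k _ hb hi hc hk ha hx => exact Or.inr ⟨k, hb, hc, hk, Or.inl ⟨ha, hx⟩⟩
  | stepA _ _ k _ hb hi hc hk ha hx => exact Or.inr ⟨k, hb, hc, hk, Or.inr ⟨ha, hx⟩⟩

lemma Hrel.eq_of_sr {k i : Fin n} {x : A} (h : Hrel Q S g v vs (sr k) i x) :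
    x = Hc g v vs k i ∧ i ≠ k ∧ ¬ Q.Adj i k := by
  rcases h.inv with ⟨k', _, he, hne, ha, hx⟩ | ⟨k', _, _, h1, _⟩
  · obtain rfl := sr_inj he
    exact ⟨hx, hne, ha⟩
  · exact absurd h1 (cc_sr_ne_one _ _)

lemma Hrel.mem {b : Fin n → ℤ} {i : Fin n} {x : A} (h : Hrel Q S g v vs b i x) :
    i ∈ S ∧ IsRoot Q S b ∧ cc Q i b = 0 := by
  cases h with
  | base k _ hk hi hne ha => exact ⟨hi, isRoot_sr hk, cc_sr_nadj Q hne ha⟩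
  | stepN _ _ k _ hb hi hc hk ha hx => exact ⟨hi, hb, hc⟩
  | stepA _ _ k _ hb hi hc hk ha hx => exact ⟨hi, hb, hc⟩

lemma cc_ne {b : Fin n → ℤ} {i k : Fin n} (h0 : cc Q i b = 0) (h1 : cc Q k b = 1) : k ≠ i := by
  rintro rfl; omega

lemma Hrel.exists (hQ : Good Q) : ∀ (d : ℕ) (b : Fin n → ℤ) (i : Fin n), ht b ≤ d →
    IsRoot Q S b → i ∈ S → cc Q i b = 0 → ∃ x, Hrel Q S g v vs b i x := by
  intro d
  induction d using Nat.strong_induction_on with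
  | _ d ih =>
  intro b i hd hb hi hc
  have hp := hb.ht_pos
  rcases hb.cases hQ with ⟨k, hk, rfl⟩ | ⟨k, hk, h1⟩
  · have hne : i ≠ k := by
      rintro rfl; rw [cc_sr_self] at hc; omega
    have ha : ¬ Q.Adj i k := fun ha => by rw [cc_sr_adj Q ha] at hc; omega
    exact ⟨_, .base k i hk hi hne ha⟩
  · have hki := cc_ne hc h1
    have hs := hb.sub h1
    by_cases ha : Q.Adj k i
    · have c1 : cc Q i (b - sr k) = 1 := by rw [cc_sub, cc_sr_adj Q ha.symm]; omega
      obtain ⟨x, hx⟩ := ih (d - 1) (by omega) (b - sr k - sr i) k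
        (by rw [ht_sub, ht_sub, ht_sr, ht_sr]; omega) (hs.sub c1) hk
        (by rw [cc_sub, cc_sub, cc_sr_self, cc_sr_adj Q ha]; omega)
      exact ⟨x, .stepA b i k x hb hi hc h1 ha hx⟩
    · obtain ⟨x, hx⟩ := ih (d - 1) (by omega) (b - sr k) i
        (by rw [ht_sub, ht_sr]; omega) hs hi
        (by rw [cc_sub, cc_sr_nadj Q hki.symm (fun h => ha h.symm)]; omega)
      exact ⟨x, .stepN b i k x hb hi hc h1 ha hx⟩

variable {K : Type*} [Field K] [Algebra K A] {P : Par K} {o : A} {j : Fin n}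

lemma Hrel.unique (hQ : Good Q) (hF : Frame P Q S o g j v vs) : ∀ (d : ℕ) (b : Fin n → ℤ)
    (i : Fin n) (x y : A), ht b ≤ d → Hrel Q S g v vs b i x → Hrel Q S g v vs b i y → x = y := by
  intro d
  induction d using Nat.strong_induction_on with
  | _ d ih =>
  -- the mixed case
  have mixed : ∀ (b : Fin n → ℤ) (i k1 k2 : Fin n) (x y : A), ht b ≤ d → IsRoot Q S b → i ∈ S →
      cc Q i b = 0 → cc Q k1 b = 1 → cc Q k2 b = 1 → k1 ≠ k2 → ¬ Q.Adj k1 k2 → Q.Adj k1 i →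
      ¬ Q.Adj k2 i → Hrel Q S g v vs (b - sr k1 - sr i) k1 x → Hrel Q S g v vs (b - sr k2) i y →
      x = y := by
    intro b i k1 k2 x y hd hb hi hc h1 h2 hne h12 ha1 ha2 hx hy
    have hp := hb.ht_pos
    have n2 := cc_ne hc h2
    have hk1 : k1 ∈ S := hb.mem_of_cc (by omega)
    have h12' : ¬ Q.Adj k2 k1 := fun h => h12 h.symm
    have ha2' : ¬ Q.Adj i k2 := fun h => ha2 h.symm
    have r1 := hb.sub h1
    have c1 : cc Q i (b - sr k1) = 1 := by rw [cc_sub, cc_sr_adj Q ha1.symm]; omega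
    have r2 := r1.sub c1
    have c2 : cc Q k2 (b - sr k1 - sr i) = 1 := by
      rw [cc_sub, cc_sub, cc_sr_nadj Q hne.symm h12', cc_sr_nadj Q n2 ha2]; omega
    have r3 := r2.sub c2
    have c3 : cc Q k1 (b - sr k1 - sr i) = 0 := by
      rw [cc_sub, cc_sub, cc_sr_self, cc_sr_adj Q ha1]; omega
    have c4 : cc Q k1 (b - sr k1 - sr i - sr k2) = 0 := by
      rw [cc_sub, c3, cc_sr_nadj Q hne h12]; omega
    obtain ⟨z, hz⟩ := Hrel.exists (g := g) (v := v) (vs := vs) hQ d _ k1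
      (by simp only [ht_sub, ht_sr]; omega) r3 hk1 c4
    have e1 := ih (d - 1) (by omega) _ k1 x z (by simp only [ht_sub, ht_sr]; omega) hx
      (.stepN _ _ k2 z r2 hk1 c3 c2 h12' hz)
    have r4 := hb.sub h2
    have c5 : cc Q i (b - sr k2) = 0 := by rw [cc_sub, cc_sr_nadj Q n2.symm ha2']; omega
    have c6 : cc Q k1 (b - sr k2) = 1 := by rw [cc_sub, cc_sr_nadj Q hne h12]; omega
    have e2 := ih (d - 1) (by omega) _ i y z (by simp only [ht_sub, ht_sr]; omega) hy
      (.stepA _ _ k1 z r4 hi c5 c6 ha1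
        (by rwa [show b - sr k2 - sr k1 - sr i = b - sr k1 - sr i - sr k2 by abel]))
    rw [e1, e2]
  intro b i x y hd hx hy
  obtain ⟨hi, hb, hc⟩ := hx.mem
  have hp := hb.ht_pos
  rcases hx.inv with ⟨k, _, rfl, _, _, rfl⟩ | ⟨k1, _, _, h1, hx'⟩
  · exact (hy.eq_of_sr).1.symm
  rcases hy.inv with ⟨k, _, rfl, _, _, rfl⟩ | ⟨k2, _, _, h2, hy'⟩
  · exact absurd h1 (cc_sr_ne_one _ _)
  have n1 := cc_ne hc h1
  have n2 := cc_ne hc h2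
  have hk1 : k1 ∈ S := hb.mem_of_cc (by omega)
  have hk2 : k2 ∈ S := hb.mem_of_cc (by omega)
  by_cases hne : k1 = k2
  · subst hne
    rcases hx' with ⟨ha, hx'⟩ | ⟨ha, hx'⟩ <;> rcases hy' with ⟨ha', hy'⟩ | ⟨ha', hy'⟩
    · exact ih (d - 1) (by omega) _ _ x y (by simp only [ht_sub, ht_sr]; omega) hx' hy'
    · exact absurd ha' ha
    · exact absurd ha ha'
    · exact ih (d - 1) (by omega) _ _ x y (by simp only [ht_sub, ht_sr]; omega) hx' hy'
  by_cases h12 : Q.Adj k1 k2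
  · have hbe := hb.eq_of_adj hQ h12 h1 h2
    have e1 : b - sr k1 = sr k2 := by rw [hbe]; abel
    have e2 : b - sr k2 = sr k1 := by rw [hbe]; abel
    have hno1 : ¬ Q.Adj i k1 := fun ha => by
      have h' : ¬ Q.Adj i k2 := fun hb' => hQ.no_triangle ha hb' h12
      rw [hbe, cc_add, cc_sr_adj Q ha, cc_sr_nadj Q n2.symm h'] at hc
      omega
    have hno2 : ¬ Q.Adj i k2 := fun ha => by
      rw [hbe, cc_add, cc_sr_adj Q ha, cc_sr_nadj Q n1.symm hno1] at hc
      omega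
    rcases hx' with ⟨_, hx'⟩ | ⟨ha, _⟩
    swap
    · exact absurd ha.symm hno1
    rcases hy' with ⟨_, hy'⟩ | ⟨ha, _⟩
    swap
    · exact absurd ha.symm hno2
    rw [e1] at hx'
    rw [e2] at hy'
    rw [hx'.eq_of_sr.1, hy'.eq_of_sr.1]
    exact hF.H_adj hk2 hk1 hi h12.symm n2.symm n1.symm hno2 hno1
  have h21 : ¬ Q.Adj k2 k1 := fun h => h12 h.symm
  rcases hx' with ⟨ha1, hx'⟩ | ⟨ha1, hx'⟩ <;> rcases hy' with ⟨ha2, hy'⟩ | ⟨ha2, hy'⟩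
  · -- neither adjacent
    have r1 := hb.sub h1
    have c1 : cc Q i (b - sr k1) = 0 := by
      rw [cc_sub, cc_sr_nadj Q n1.symm (fun h => ha1 h.symm)]; omega
    have c2 : cc Q k2 (b - sr k1) = 1 := by rw [cc_sub, cc_sr_nadj Q (Ne.symm hne) h21]; omega
    have r2 := hb.sub h2
    have c3 : cc Q i (b - sr k2) = 0 := by
      rw [cc_sub, cc_sr_nadj Q n2.symm (fun h => ha2 h.symm)]; omega
    have c4 : cc Q k1 (b - sr k2) = 1 := by rw [cc_sub, cc_sr_nadj Q hne h12]; omega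
    have c5 : cc Q i (b - sr k1 - sr k2) = 0 := by
      rw [cc_sub, c1, cc_sr_nadj Q n2.symm (fun h => ha2 h.symm)]; omega
    obtain ⟨z, hz⟩ := Hrel.exists (g := g) (v := v) (vs := vs) hQ d _ i
      (by simp only [ht_sub, ht_sr]; omega) (r1.sub c2) hi c5
    have e1 := ih (d - 1) (by omega) _ i x z (by simp only [ht_sub, ht_sr]; omega) hx'
      (.stepN _ _ k2 z r1 hi c1 c2 ha2 hz)
    have e2 := ih (d - 1) (by omega) _ i y z (by simp only [ht_sub, ht_sr]; omega) hy'
      (.stepN _ _ k1 z r2 hi c3 c4 ha1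
        (by rwa [show b - sr k2 - sr k1 = b - sr k1 - sr k2 by abel]))
    rw [e1, e2]
  · exact (mixed b i k2 k1 y x hd hb hi hc h2 h1 (Ne.symm hne) h21 ha2 ha1 hy' hx').symm
  · exact mixed b i k1 k2 x y hd hb hi hc h1 h2 hne h12 ha1 ha2 hx' hy'
  · -- both adjacent
    have c1 : cc Q k2 (b - sr k1) = 1 := by rw [cc_sub, cc_sr_nadj Q (Ne.symm hne) h21]; omega
    have r2 := (hb.sub h1).sub c1
    have c2 : cc Q i (b - sr k1 - sr k2) = 2 := by
      rw [cc_sub, cc_sub, cc_sr_adj Q ha1.symm, cc_sr_adj Q ha2.symm]; omega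
    have he := r2.eq_sr hQ c2.ge
    have e1 : b - sr k1 - sr i = sr k2 := by rw [← he]; abel
    have e2 : b - sr k2 - sr i = sr k1 := by rw [← he]; abel
    rw [e1] at hx'
    rw [e2] at hy'
    rw [hx'.eq_of_sr.1, hy'.eq_of_sr.1]
    exact hF.H_symm hk2 hk1 hi hne h12 ha2 ha1

/-- move lemma, nonadjacent case -/
lemma Hrel.moveN (hQ : Good Q) (hF : Frame P Q S o g j v vs) {b : Fin n → ℤ} {i k : Fin n} {x : A}
    (hx : Hrel Q S g v vs b i x) (h1 : cc Q k b = 1) (ha : ¬ Q.Adj k i) :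
    Hrel Q S g v vs (b - sr k) i x := by
  obtain ⟨hi, hb, hc⟩ := hx.mem
  have hki := cc_ne hc h1
  obtain ⟨z, hz⟩ := Hrel.exists (g := g) (v := v) (vs := vs) hQ (ht (b - sr k)).toNat (b - sr k) i
    (Int.self_le_toNat _) (hb.sub h1) hi
    (by rw [cc_sub, cc_sr_nadj Q hki.symm (fun h => ha h.symm)]; omega)
  have := Hrel.unique hQ hF (ht b).toNat b i x z (Int.self_le_toNat _) hx (.stepN b i k z hb hi hc h1 ha hz)
  rwa [this]

/-- move lemma, adjacent case -/
lemma Hrel.moveA (hQ : Good Q) (hF : Frame P Q S o g j v vs) {b : Fin n → ℤ} {i k : Fin n} {x : A}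
    (hx : Hrel Q S g v vs b i x) (h1 : cc Q k b = 1) (ha : Q.Adj k i) :
    Hrel Q S g v vs (b - sr k - sr i) k x := by
  obtain ⟨hi, hb, hc⟩ := hx.mem
  have hk : k ∈ S := hb.mem_of_cc (by omega)
  have c1 : cc Q i (b - sr k) = 1 := by rw [cc_sub, cc_sr_adj Q ha.symm]; omega
  obtain ⟨z, hz⟩ := Hrel.exists (g := g) (v := v) (vs := vs) hQ (ht (b - sr k - sr i)).toNat
    (b - sr k - sr i) k (Int.self_le_toNat _) ((hb.sub h1).sub c1) hk
    (by rw [cc_sub, cc_sub, cc_sr_self, cc_sr_adj Q ha]; omega)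
  have := Hrel.unique hQ hF (ht b).toNat b i x z (Int.self_le_toNat _) hx (.stepA b i k z hb hi hc h1 ha hz)
  rwa [this]

/-- the BMW relations between a pair -/
def RelP (P : Par K) (o : A) (adj : Prop) (x y : A) : Prop :=
  (¬ adj → x * y = y * x) ∧ (adj → x * (y * x) = y * (x * y) ∧
    P.F o x * (y * P.F o x) = (P.l / P.d) • P.F o x ∧ P.F o y * (x * P.F o y) = (P.l / P.d) • P.F o y)

lemma RelP.symm {adj adj' : Prop} (hadj : adj ↔ adj') {x y : A} (h : RelP P o adj x y) :
    RelP P o adj' y x :=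
  ⟨fun hn => (h.1 (fun h' => hn (hadj.1 h'))).symm,
    fun ha => ⟨(h.2 (hadj.2 ha)).1.symm, (h.2 (hadj.2 ha)).2.2, (h.2 (hadj.2 ha)).2.1⟩⟩
lemma RelP.congr {adj adj' : Prop} (hadj : adj ↔ adj') {x y : A} (h : RelP P o adj x y) :
    RelP P o adj' x y := by rwa [← propext hadj]

lemma RelP_base (hF : Frame P Q S o g j v vs) {k i1 i2 : Fin n} (hk : k ∈ S) (hi1 : i1 ∈ S)
    (hi2 : i2 ∈ S) (hne : i1 ≠ i2) (n1 : i1 ≠ k) (a1 : ¬ Q.Adj i1 k) (n2 : i2 ≠ k)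
    (a2 : ¬ Q.Adj i2 k) :
    RelP P (P.F o (g j)) (Q.Adj i1 i2) (Hc g v vs k i1) (Hc g v vs k i2) := by
  have inj : ∀ {x y : A}, P.F o (g j) * x = x → P.F o (g j) * y = y → v k * x = v k * y → x = y := by
    intro x y hx hy h
    rw [← hF.vs_mul hk hx, h, hF.vs_mul hk hy]
  have e1 := hF.gv_eq hk hi1 n1 a1
  have e2 := hF.gv_eq hk hi2 n2 a2
  have f1 := hF.fv_eq hk hi1 n1 a1
  have f2 := hF.fv_eq hk hi2 n2 a2
  have p1 : ∀ z, P.F o (g j) * (Hc g v vs k i1 * z) = Hc g v vs k i1 * z := fun z => by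
    rw [← mul_assoc, hF.f_H hk]
  have p2 : ∀ z, P.F o (g j) * (Hc g v vs k i2 * z) = Hc g v vs k i2 * z := fun z => by
    rw [← mul_assoc, hF.f_H hk]
  have pF : ∀ i, P.F o (g j) * P.F (P.F o (g j)) (Hc g v vs k i) =
      P.F (P.F o (g j)) (Hc g v vs k i) := fun i => by
    conv_lhs => rw [Par.F.eq_1 P (P.F o (g j)) (Hc g v vs k i)]
    rw [mul_smul_comm, mul_sub, mul_add, mul_smul_comm, ← mul_assoc, hF.f_H hk,
      hF.sys.ff hF.jS, ← Par.F.eq_1]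
  set x := Hc g v vs k i1
  set y := Hc g v vs k i2
  have q1 : ∀ z, v k * (x * z) = g i1 * (v k * z) := fun z => by
    rw [← mul_assoc, e1, mul_assoc]
  have q2 : ∀ z, v k * (y * z) = g i2 * (v k * z) := fun z => by
    rw [← mul_assoc, e2, mul_assoc]
  have r1 : ∀ z, v k * (P.F (P.F o (g j)) x * z) = P.F o (g i1) * (v k * z) := fun z => by
    rw [← mul_assoc, f1, mul_assoc]
  have r2 : ∀ z, v k * (P.F (P.F o (g j)) y * z) = P.F o (g i2) * (v k * z) := fun z => by
    rw [← mul_assoc, f2, mul_assoc]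
  refine ⟨fun hna => inj (p1 _) (p2 _) ?_, fun ha => ⟨inj (p1 _) (p2 _) ?_, inj ?_ ?_ ?_, inj ?_ ?_ ?_⟩⟩
  · rw [q1, e2, q2, e1, ← mul_assoc, ← mul_assoc, hF.sys.comm i1 hi1 i2 hi2 hne hna]
  · rw [q1, q2, e1, q2, q1, e2]
    have := hF.sys.braid i1 hi1 i2 hi2 ha
    calc _ = g i1 * (g i2 * g i1) * v k := by simp only [mul_assoc]
      _ = _ := by rw [this]; simp only [mul_assoc]
  · rw [← mul_assoc, pF]
  · rw [mul_smul_comm, pF]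
  · rw [r1, q2, f1, mul_smul_comm, f1, ← smul_mul_assoc, ← hF.sys.fgf i1 hi1 i2 hi2 ha]
    simp only [mul_assoc]
  · rw [← mul_assoc, pF]
  · rw [mul_smul_comm, pF]
  · rw [r2, q1, f2, mul_smul_comm, f2, ← smul_mul_assoc, ← hF.sys.fgf i2 hi2 i1 hi1 ha.symm]
    simp only [mul_assoc]

lemma Hrel.rel (hQ : Good Q) (hF : Frame P Q S o g j v vs) : ∀ (d : ℕ) (b : Fin n → ℤ)
    (i1 i2 : Fin n) (x y : A), ht b ≤ d → i1 ≠ i2 → Hrel Q S g v vs b i1 x →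
    Hrel Q S g v vs b i2 y → RelP P (P.F o (g j)) (Q.Adj i1 i2) x y := by
  intro d
  induction d using Nat.strong_induction_on with
  | _ d ih =>
  have mixed : ∀ (b : Fin n → ℤ) (i1 i2 k : Fin n) (x y : A), ht b ≤ d → i1 ≠ i2 →
      cc Q k b = 1 → Q.Adj k i1 → ¬ Q.Adj k i2 →
      Hrel Q S g v vs b i1 x → Hrel Q S g v vs b i2 y →
      RelP P (P.F o (g j)) (Q.Adj i1 i2) x y := by
    intro b i1 i2 k x y hd hne h1 ha1 ha2 hx hy
    obtain ⟨hi1, hb, hc1⟩ := hx.mem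
    obtain ⟨hi2, _, hc2⟩ := hy.mem
    have hp := hb.ht_pos
    have n2 := cc_ne hc2 h1
    have hx1 := hx.moveA hQ hF h1 ha1
    have hy1 := hy.moveN hQ hF h1 ha2
    have c1 : cc Q i1 (b - sr k) = 1 := by rw [cc_sub, cc_sr_adj Q ha1.symm]; omega
    by_cases h12 : Q.Adj i1 i2
    · have hy2 := hy1.moveA hQ hF c1 h12
      have c2 : cc Q i2 (b - sr k - sr i1) = 1 := by
        rw [cc_sub, cc_sub, cc_sr_adj Q h12.symm, cc_sr_nadj Q n2.symm (fun h => ha2 h.symm)]; omega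
      have hx2 := hx1.moveN hQ hF c2 (fun h => ha2 h.symm)
      exact (ih (d - 1) (by omega) _ k i1 x y (by simp only [ht_sub, ht_sr]; omega) ha1.ne hx2
        hy2).congr (by simp [h12, ha1])
    · have hy2 := hy1.moveN hQ hF c1 h12
      exact (ih (d - 1) (by omega) _ k i2 x y (by simp only [ht_sub, ht_sr]; omega) n2 hx1
        hy2).congr (by simp [h12, ha2])
  intro b i1 i2 x y hd hne hx hy
  obtain ⟨hi1, hb, hc1⟩ := hx.mem
  obtain ⟨hi2, _, hc2⟩ := hy.mem
  have hp := hb.ht_pos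
  rcases hb.cases hQ with ⟨k, hk, rfl⟩ | ⟨k, hk, h1⟩
  · obtain ⟨rfl, n1, a1⟩ := hx.eq_of_sr
    obtain ⟨rfl, n2, a2⟩ := hy.eq_of_sr
    exact RelP_base hF hk hi1 hi2 hne n1 a1 n2 a2
  have n1 := cc_ne hc1 h1
  have n2 := cc_ne hc2 h1
  by_cases ha1 : Q.Adj k i1 <;> by_cases ha2 : Q.Adj k i2
  · have h12 : ¬ Q.Adj i1 i2 := fun h => hQ.no_triangle ha1 ha2 h
    have c1 : cc Q i2 (b - sr k - sr i1) = 1 := by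
      rw [cc_sub, cc_sub, cc_sr_adj Q ha2.symm, cc_sr_nadj Q hne.symm (fun h => h12 h.symm)]; omega
    have c2 : cc Q i1 (b - sr k - sr i2) = 1 := by
      rw [cc_sub, cc_sub, cc_sr_adj Q ha1.symm, cc_sr_nadj Q hne h12]; omega
    have hx1 := (hx.moveA hQ hF h1 ha1).moveA hQ hF c1 ha2.symm
    have hy1 := (hy.moveA hQ hF h1 ha2).moveA hQ hF c2 ha1.symm
    rw [show b - sr k - sr i2 - sr i1 - sr k = b - sr k - sr i1 - sr i2 - sr k by abel] at hy1
    exact (ih (d - 1) (by omega) _ i2 i1 x y (by simp only [ht_sub, ht_sr]; omega) hne.symm hx1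
      hy1).congr (by simp [Q.adj_comm])
  · exact mixed b i1 i2 k x y hd hne h1 ha1 ha2 hx hy
  · exact (mixed b i2 i1 k y x hd hne.symm h1 ha2 ha1 hy hx).symm (Q.adj_comm _ _)
  · exact ih (d - 1) (by omega) _ i1 i2 x y (by simp only [ht_sub, ht_sr]; omega) hne
      (hx.moveN hQ hF h1 ha1) (hy.moveN hQ hF h1 ha2)

lemma Hrel.ascend (hQ : Good Q) (hS : IsConn Q S) {θ : Fin n → ℤ} (hθ : IsRoot Q S θ)
    (hdθ : IsDom Q S θ) {D : ℕ} (hD : ∀ b, IsRoot Q S b → ht b ≤ D) :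
    ∀ (d : ℕ) (b : Fin n → ℤ) (i : Fin n) (x : A), (D : ℤ) - ht b ≤ d → Hrel Q S g v vs b i x →
      ∃ i', Hrel Q S g v vs θ i' x := by
  intro d
  induction d using Nat.strong_induction_on with
  | _ d ih =>
  intro b i x hd hx
  obtain ⟨hi, hb, hc⟩ := hx.mem
  by_cases hdom : IsDom Q S b
  · obtain rfl := dom_unique hQ hS hb hdom hθ hdθ
    exact ⟨i, hx⟩
  · simp only [IsDom, not_forall, not_le] at hdom
    obtain ⟨k, hk, hlt⟩ := hdom
    have hk1 : cc Q k b = -1 := by have := hb.neg_one_le_cc hQ k; omega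
    have hne : k ≠ i := by rintro rfl; omega
    have r1 := hb.add hk hk1
    have hD1 := hD _ r1
    rw [ht_add, ht_sr] at hD1
    by_cases ha : Q.Adj k i
    · have c1 : cc Q i (b + sr k) = -1 := by rw [cc_add, cc_sr_adj Q ha.symm]; omega
      have r2 := r1.add hi c1
      have hD2 := hD _ r2
      rw [ht_add, ht_add, ht_sr, ht_sr] at hD2
      refine ih (d - 1) (by omega) (b + sr k + sr i) k x
        (by simp only [ht_add, ht_sr]; omega) (.stepA _ k i x r2 hk ?_ ?_ ha.symm ?_)
      · rw [cc_add, cc_add, cc_sr_self, cc_sr_adj Q ha]; omega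
      · rw [cc_add, cc_add, cc_sr_self, cc_sr_adj Q ha.symm]; omega
      · rwa [show b + sr k + sr i - sr i - sr k = b by abel]
    · refine ih (d - 1) (by omega) (b + sr k) i x
        (by simp only [ht_add, ht_sr]; omega) (.stepN _ i k x r1 hi ?_ ?_ ha ?_)
      · rw [cc_add, cc_sr_nadj Q hne.symm (fun h => ha h.symm)]; omega
      · rw [cc_add, cc_sr_self]; omega
      · rwa [show b + sr k - sr k = b by abel]

lemma Hrel.eq_H {b : Fin n → ℤ} {i : Fin n} {x : A} (h : Hrel Q S g v vs b i x) :
    ∃ k ∈ S, ∃ i' ∈ S, i' ≠ k ∧ ¬ Q.Adj i' k ∧ x = Hc g v vs k i' := by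
  induction h with
  | base k i hk hi hne ha => exact ⟨k, hk, i, hi, hne, ha, rfl⟩
  | stepN _ _ _ _ _ _ _ _ _ _ ih => exact ih
  | stepA _ _ _ _ _ _ _ _ _ _ ih => exact ih

/-- The corner system. -/
lemma corner (hQ : Good Q) (hS : IsConn Q S) (hF : Frame P Q S o g j v vs) :
    ∃ S' ⊂ S, ∃ g' : Fin n → A, Sys P Q S' (P.F o (g j)) g' ∧
      (∀ i ∈ S', ∃ k ∈ S, ∃ i' ∈ S, i' ≠ k ∧ ¬ Q.Adj i' k ∧ g' i = Hc g v vs k i') ∧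
      ∀ k ∈ S, ∀ i ∈ S, i ≠ k → ¬ Q.Adj i k → ∃ i' ∈ S', Hc g v vs k i = g' i' := by
  classical
  obtain ⟨θ, hθ, hd⟩ := exists_dom hQ ⟨j, hF.jS⟩
  obtain ⟨D, hD⟩ := exists_maxht (S := S) hQ
  set S' := S.filter fun i => cc Q i θ = 0 with hS'
  have hsub : S' ⊆ S := Finset.filter_subset _ _
  have hlt : S' ⊂ S := by
    obtain ⟨k, hk, hc⟩ := hθ.exists_cc_pos
    refine Finset.ssubset_iff_subset_ne.2 ⟨hsub, fun h => ?_⟩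
    rw [← h, hS', Finset.mem_filter] at hk
    omega
  have hex : ∀ i, ∃ x, i ∈ S' → Hrel Q S g v vs θ i x := by
    intro i
    by_cases hi : i ∈ S'
    · obtain ⟨x, hx⟩ := Hrel.exists (g := g) (v := v) (vs := vs) hQ (ht θ).toNat θ i
        (Int.self_le_toNat _) hθ (hsub hi) (Finset.mem_filter.1 hi).2
      exact ⟨x, fun _ => hx⟩
    · exact ⟨0, fun h => absurd h hi⟩
  choose g' hg' using hex
  refine ⟨S', hlt, g', ⟨hF.sys.ff hF.jS, ?_, ?_, ?_, ?_, ?_, ?_⟩, fun i hi => (hg' i hi).eq_H, ?_⟩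
  · intro i hi
    obtain ⟨k, hk, i', hi', hne, ha, he⟩ := (hg' i hi).eq_H
    rw [he, hF.f_H hk]
  · intro i hi
    obtain ⟨k, hk, i', hi', hne, ha, he⟩ := (hg' i hi).eq_H
    rw [he, hF.H_f hk]
  · intro i hi
    obtain ⟨k, hk, i', hi', hne, ha, he⟩ := (hg' i hi).eq_H
    rw [he]
    have h1 := hF.gv_eq hk hi' hne ha
    have h2 := hF.fv_eq hk hi' hne ha
    have pF : P.F o (g j) * P.F (P.F o (g j)) (Hc g v vs k i') =
        P.F (P.F o (g j)) (Hc g v vs k i') := by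
      conv_lhs => rw [Par.F.eq_1 P (P.F o (g j)) (Hc g v vs k i')]
      rw [mul_smul_comm, mul_sub, mul_add, mul_smul_comm, ← mul_assoc, hF.f_H hk,
        hF.sys.ff hF.jS, ← Par.F.eq_1]
    rw [← hF.vs_mul hk (x := Hc g v vs k i' * _) (by rw [← mul_assoc, hF.f_H hk])]
    rw [← mul_assoc (v k), h1, mul_assoc, h2, ← mul_assoc, ← mul_assoc, mul_assoc (vs k),
      hF.sys.gf i' hi', mul_smul_comm, smul_mul_assoc, mul_assoc, ← h2, hF.vs_mul hk pF]
  · intro i hi k hk hne ha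
    exact (Hrel.rel hQ hF _ θ i k _ _ (Int.self_le_toNat _) hne (hg' i hi) (hg' k hk)).1 ha
  · intro i hi k hk ha
    exact ((Hrel.rel hQ hF _ θ i k _ _ (Int.self_le_toNat _) ha.ne (hg' i hi) (hg' k hk)).2 ha).1
  · intro i hi k hk ha
    exact ((Hrel.rel hQ hF _ θ i k _ _ (Int.self_le_toNat _) ha.ne (hg' i hi) (hg' k hk)).2 ha).2.1
  · intro k hk i hi hne ha
    obtain ⟨i', hx⟩ := Hrel.ascend hQ hS hθ hd hD _ _ i _ (Int.self_le_toNat _)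
      (Hrel.base (g := g) (v := v) (vs := vs) k i hk hi hne ha)
    have hi' : i' ∈ S' := Finset.mem_filter.2 ⟨hx.mem.1, hx.mem.2.2⟩
    exact ⟨i', hi', Hrel.unique hQ hF _ θ i' _ _ (Int.self_le_toNat _) hx (hg' i' hi')⟩

end Corner
end BMWaux

/-! ### The left module generated by `f j` -/
namespace BMWaux
section LOne
variable {V : Type*} [CommRing V] {K : Type*} [Field K] [Algebra V K]
variable {A : Type*} [Ring A] [Algebra K A] [Algebra V A] [IsScalarTower V K A]
variable {n : ℕ} {Q : SimpleGraph (Fin n)} {S : Finset (Fin n)} {g v vs : Fin n → A}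
variable {P : Par K} {o : A} {j : Fin n}

open Classical in
/-- fuelled recursion for `w` -/
noncomputable def wAux (Q : SimpleGraph (Fin n)) (g v : Fin n → A) : ℕ → (Fin n → ℤ) → A
  | 0, _ => 0
  | d + 1, b => if h : ∃ k, b = sr k then v h.choose
      else if h' : ∃ k, cc Q k b = 1 then g h'.choose * wAux Q g v d (b - sr h'.choose) else 0

variable (S) in
lemma exists_w (hQ : Good Q) (g v : Fin n → A) : ∃ w : (Fin n → ℤ) → A, (∀ k, w (sr k) = v k) ∧
    ∀ b, IsRoot Q S b → (∀ k, b ≠ sr k) → ∃ k ∈ S, cc Q k b = 1 ∧ w b = g k * w (b - sr k) := by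
  refine ⟨fun b => wAux Q g v (ht b).toNat b, fun k => ?_, fun b hb hns => ?_⟩
  · have h : ∃ k', (sr k : Fin n → ℤ) = sr k' := ⟨k, rfl⟩
    have hk : h.choose = k := (sr_inj h.choose_spec).symm
    simp only [ht_sr, Int.toNat_one, wAux, dif_pos h, hk]
  · have hp := hb.ht_pos
    obtain ⟨d, hd⟩ : ∃ d : ℕ, (ht b).toNat = d + 1 := ⟨(ht b).toNat - 1, by omega⟩
    have h : ¬ ∃ k, b = sr k := fun ⟨k, hk⟩ => hns k hk
    have h' : ∃ k, cc Q k b = 1 := by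
      rcases hb.cases hQ with ⟨k, _, hk⟩ | ⟨k, _, hk⟩
      · exact absurd hk (hns k)
      · exact ⟨k, hk⟩
    refine ⟨h'.choose, hb.mem_of_cc (by have := h'.choose_spec; omega), h'.choose_spec, ?_⟩
    have e : (ht (b - sr h'.choose)).toNat = d := by rw [ht_sub, ht_sr]; omega
    simp only [hd, e]
    rw [wAux, dif_neg h, dif_pos h']

variable (V) in
/-- span of low-height elements -/
def Lsub (Q : SimpleGraph (Fin n)) (S : Finset (Fin n)) (w : (Fin n → ℤ) → A)
    (Aj : NonUnitalSubalgebra V A) (d : ℤ) : Submodule V A :=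
  Submodule.span V {x | ∃ b, IsRoot Q S b ∧ ht b ≤ d ∧ x = w b} * Aj.toSubmodule

variable {w : (Fin n → ℤ) → A} {Aj : NonUnitalSubalgebra V A}

lemma Lsub.mul_mem {b : Fin n → ℤ} {d : ℤ} (hb : IsRoot Q S b) (hd : ht b ≤ d) {a : A}
    (ha : a ∈ Aj) : w b * a ∈ Lsub V Q S w Aj d :=
  Submodule.mul_mem_mul (Submodule.subset_span ⟨b, hb, hd, rfl⟩) ha

lemma Lsub.mono {d d' : ℤ} (h : d ≤ d') : Lsub V Q S w Aj d ≤ Lsub V Q S w Aj d' := by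
  refine span_mul_le ?_
  rintro _ ⟨b, hb, hd, rfl⟩ a ha
  exact Lsub.mul_mem hb (hd.trans h) ha

lemma Lsub.mul_right {d : ℤ} {x a : A} (hx : x ∈ Lsub V Q S w Aj d) (ha : a ∈ Aj) :
    x * a ∈ Lsub V Q S w Aj d := by
  have : Lsub V Q S w Aj d ≤ (Lsub V Q S w Aj d).comap (LinearMap.mulRight V a) := by
    refine span_mul_le ?_
    rintro _ ⟨b, hb, hd, rfl⟩ c hc
    rw [Submodule.mem_comap, LinearMap.mulRight_apply, mul_assoc]
    exact Lsub.mul_mem hb hd (Aj.mul_mem hc ha)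
  exact this hx

lemma Lsub.map_le {d : ℤ} {c : A} {N : Submodule V A} (hN : ∀ x ∈ N, ∀ a ∈ Aj, x * a ∈ N)
    (h : ∀ b, IsRoot Q S b → ht b ≤ d → c * w b ∈ N) {x : A} (hx : x ∈ Lsub V Q S w Aj d) :
    c * x ∈ N := by
  have : Lsub V Q S w Aj d ≤ N.comap (LinearMap.mulLeft V c) := by
    refine span_mul_le ?_
    rintro _ ⟨b, hb, hd, rfl⟩ a ha
    rw [Submodule.mem_comap, LinearMap.mulLeft_apply, ← mul_assoc]
    exact hN _ (h b hb hd) a ha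
  exact this hx

lemma Lsub.fg (hQ : Good Q) (hA : Aj.toSubmodule.FG) (d : ℤ) : (Lsub V Q S w Aj d).FG := by
  refine Submodule.FG.mul (Submodule.fg_span ?_) hA
  refine ((hQ.finite_roots (S := S)).image w).subset ?_
  rintro _ ⟨b, hb, _, rfl⟩
  exact ⟨b, hb, rfl⟩

/-- `v i * Aj` -/
def VI (v : Fin n → A) (Aj : NonUnitalSubalgebra V A) (i : Fin n) : Submodule V A :=
  Aj.toSubmodule.map (LinearMap.mulLeft V (v i))

lemma VI.mul_mem {i : Fin n} {a : A} (ha : a ∈ Aj) : v i * a ∈ VI v Aj i := ⟨a, ha, rfl⟩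
lemma VI.mul_right {i : Fin n} {x a : A} (hx : x ∈ VI v Aj i) (ha : a ∈ Aj) :
    x * a ∈ VI v Aj i := by
  obtain ⟨t, ht, rfl⟩ := hx
  exact ⟨t * a, Aj.mul_mem ht ha, by simp [mul_assoc]⟩
lemma VI.exists {i : Fin n} {x : A} (hx : x ∈ VI v Aj i) : ∃ t ∈ Aj, x = v i * t := by
  obtain ⟨t, ht, rfl⟩ := hx
  exact ⟨t, ht, rfl⟩

/-- hypotheses for the L1 step -/
structure LHyp (P : Par K) (Q : SimpleGraph (Fin n)) (S : Finset (Fin n)) (o : A)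
    (g : Fin n → A) (j : Fin n) (v vs : Fin n → A) (Aj : NonUnitalSubalgebra V A)
    (w : (Fin n → ℤ) → A) : Prop where
  good : Good Q
  conn : IsConn Q S
  int : IntPar V P
  fr : Frame P Q S o g j v vs
  fA : P.F o (g j) ∈ Aj
  HA : ∀ k ∈ S, ∀ i ∈ S, i ≠ k → ¬ Q.Adj i k → Hc g v vs k i ∈ Aj
  FA : ∀ k ∈ S, ∀ i ∈ S, i ≠ k → ¬ Q.Adj i k → P.F (P.F o (g j)) (Hc g v vs k i) ∈ Aj
  ws : ∀ k, w (sr k) = v k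
  wr : ∀ b, IsRoot Q S b → (∀ k, b ≠ sr k) → ∃ k ∈ S, cc Q k b = 1 ∧ w b = g k * w (b - sr k)


lemma LHyp.wf (H : LHyp P Q S o g j v vs Aj w) : ∀ (d : ℕ) (b : Fin n → ℤ), ht b ≤ d → IsRoot Q S b →
    w b * P.F o (g j) = w b ∧ o * w b = w b := by
  intro d
  induction d with
  | zero => intro b hd hb; have := hb.ht_pos; omega
  | succ d ih =>
    intro b hd hb
    by_cases hs : ∃ k, b = sr k
    · obtain ⟨k, rfl⟩ := hs
      rw [isRoot_sr_iff] at hb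
      rw [H.ws]; exact ⟨H.fr.vf hb, H.fr.ov hb⟩
    · push Not at hs
      obtain ⟨k, hk, hc, he⟩ := H.wr b hb hs
      rw [he, mul_assoc, (ih (b - sr k) (by rw [ht_sub, ht_sr]; push_cast at hd; omega) (hb.sub hc)).1,
        ← mul_assoc, H.fr.sys.og k hk]
      exact ⟨rfl, rfl⟩

lemma LHyp.ow (H : LHyp P Q S o g j v vs Aj w) {b : Fin n → ℤ} (hb : IsRoot Q S b) : o * w b = w b :=
  (H.wf _ b (Int.self_le_toNat _) hb).2

lemma LHyp.w_mem (H : LHyp P Q S o g j v vs Aj w) {b : Fin n → ℤ} {d : ℤ} (hb : IsRoot Q S b) (hd : ht b ≤ d) :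
    w b ∈ Lsub V Q S w Aj d := by
  rw [← (H.wf _ b (Int.self_le_toNat _) hb).1]
  exact Lsub.mul_mem hb hd H.fA

lemma LHyp.VI_le (H : LHyp P Q S o g j v vs Aj w) {i : Fin n} (hi : i ∈ S) {d : ℤ} (hd : 1 ≤ d) : VI v Aj i ≤ Lsub V Q S w Aj d := by
  intro x hx
  obtain ⟨t, ht, rfl⟩ := VI.exists hx
  rw [← H.ws]
  exact Lsub.mul_mem (isRoot_sr hi) (by rwa [ht_sr]) ht

lemma LHyp.v_mem (H : LHyp P Q S o g j v vs Aj w) {i : Fin n} (hi : i ∈ S) : v i ∈ VI v Aj i := by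
  rw [← H.fr.vf hi]; exact VI.mul_mem H.fA

lemma LHyp.F_simple (H : LHyp P Q S o g j v vs Aj w) {i : Fin n} (hi : i ∈ S) : ∀ k ∈ S, P.F o (g i) * v k ∈ VI v Aj i := by
  classical
  have hall := H.conn (S.filter fun k => P.F o (g i) * v k ∈ VI v Aj i) (Finset.filter_subset _ _)
    ⟨i, Finset.mem_filter.2 ⟨hi, by rw [H.fr.fv i hi]; exact H.v_mem hi⟩⟩ ?_
  · intro k hk
    rw [← hall] at hk
    exact (Finset.mem_filter.1 hk).2
  intro p hp k hk ha
  rw [Finset.mem_filter] at hp ⊢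
  obtain ⟨hp, hpm⟩ := hp
  refine ⟨hk, ?_⟩
  by_cases hik : i = k
  · subst hik; rw [H.fr.fv i hi]; exact H.v_mem hi
  by_cases aik : Q.Adj i k
  · rw [H.fr.f_v hi hk aik]
    exact H.int.di.smul_mem _ (H.v_mem hi)
  have hpi : p ≠ i := by rintro rfl; exact aik ha
  have aki : ¬ Q.Adj k i := fun h => aik h.symm
  by_cases api : Q.Adj i p
  · -- common neighbour
    have e1 : v k = P.d • (P.F o (g k) * v p) := by
      rw [H.fr.f_v hk hp ha.symm, smul_smul, mul_inv_cancel₀ P.hd, one_smul]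
    have e2 : P.F o (g i) * v k = P.F o (g k) * v i := by
      rw [e1, mul_smul_comm, ← mul_assoc, H.fr.sys.ff_comm hi hk hik aik, mul_assoc,
        H.fr.f_v hi hp api, mul_smul_comm, smul_smul, mul_inv_cancel₀ P.hd, one_smul]
    rw [e2, ← H.fr.fv_eq hi hk (Ne.symm hik) aki]
    exact VI.mul_mem (H.FA i hi k hk (Ne.symm hik) aki)
  · have apri : ¬ Q.Adj p i := fun h => api h.symm
    obtain ⟨t, ht, he⟩ := VI.exists hpm
    have e1 : P.F o (g i) * v k = v i * (Hc g v vs i p * (Hc g v vs i k * t)) := by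
      rw [H.fr.vadj k hk p hp ha.symm]
      calc P.F o (g i) * (g p * (g k * v p)) = (P.F o (g i) * g p) * (g k * v p) := by
            simp only [mul_assoc]
        _ = g p * ((P.F o (g i) * g k) * v p) := by
            rw [H.fr.sys.fg_comm hi hp hpi.symm api]; simp only [mul_assoc]
        _ = g p * (g k * (v i * t)) := by
            rw [H.fr.sys.fg_comm hi hk hik aik, mul_assoc, he]
        _ = g p * (v i * (Hc g v vs i k * t)) := by
            rw [← mul_assoc (g k), ← H.fr.gv_eq hi hk (Ne.symm hik) aki, mul_assoc]
        _ = _ := by rw [← mul_assoc, ← H.fr.gv_eq hi hp hpi apri, mul_assoc]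
    rw [e1]
    exact VI.mul_mem (Aj.mul_mem (H.HA i hi p hp hpi apri)
      (Aj.mul_mem (H.HA i hi k hk (Ne.symm hik) aki) ht))

/-- the inductive package at a root -/
structure Pack (P : Par K) (Q : SimpleGraph (Fin n)) (S : Finset (Fin n)) (o : A)
    (g v : Fin n → A) (Aj : NonUnitalSubalgebra V A) (w : (Fin n → ℤ) → A)
    (b : Fin n → ℤ) : Prop where
  F : ∀ i ∈ S, P.F o (g i) * w b ∈ VI v Aj i
  U : ∀ i ∈ S, cc Q i b = 1 → g i * w (b - sr i) - w b ∈ Lsub V Q S w Aj (ht b - 1)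
  O : ∀ i ∈ S, cc Q i b = 0 → g i * w b ∈ Lsub V Q S w Aj (ht b)
  D : ∀ i ∈ S, 1 ≤ cc Q i b → g i * w b ∈ Lsub V Q S w Aj (ht b)

lemma Lsub.cl {d : ℤ} : ∀ x ∈ Lsub V Q S w Aj d, ∀ a ∈ Aj, x * a ∈ Lsub V Q S w Aj d :=
  fun _ hx _ ha => Lsub.mul_right hx ha

lemma LHyp.G_of (H : LHyp P Q S o g j v vs Aj w) {d : ℤ} (hO : ∀ b, IsRoot Q S b → ht b ≤ d → Pack P Q S o g v Aj w b)
    (hU : ∀ b, IsRoot Q S b → ht b ≤ d + 1 → ∀ i ∈ S, cc Q i b = 1 →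
      g i * w (b - sr i) - w b ∈ Lsub V Q S w Aj (ht b - 1)) {i : Fin n} (hi : i ∈ S) {x : A}
    (hx : x ∈ Lsub V Q S w Aj d) : g i * x ∈ Lsub V Q S w Aj (d + 1) := by
  refine Lsub.map_le Lsub.cl (fun b hb hd => ?_) hx
  have h1 := hb.neg_one_le_cc H.good i
  rcases lt_trichotomy (cc Q i b) 0 with hc | hc | hc
  · have hc' : cc Q i b = -1 := by omega
    have r := hb.add hi hc'
    have := hU (b + sr i) r (by rw [ht_add, ht_sr]; omega) i hi
      (by rw [cc_add, cc_sr_self]; omega)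
    rw [show b + sr i - sr i = b by abel, ht_add, ht_sr] at this
    have h2 := Submodule.add_mem _ (Lsub.mono (show ht b + 1 - 1 ≤ d + 1 by omega) this)
      (H.w_mem (d := d + 1) r (by rw [ht_add, ht_sr]; omega))
    rwa [sub_add_cancel] at h2
  · exact Lsub.mono (by omega) ((hO b hb hd).O i hi hc)
  · exact Lsub.mono (by omega) ((hO b hb hd).D i hi (by omega))

lemma LHyp.pack (H : LHyp P Q S o g j v vs Aj w) : ∀ (d : ℕ) (b : Fin n → ℤ), ht b ≤ d → IsRoot Q S b →
    Pack P Q S o g v Aj w b := by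
  intro d
  induction d with
  | zero => intro b hd hb; have := hb.ht_pos; omega
  | succ d ih =>
  have hF := H.fr
  have hs := hF.sys
  have hQ := H.good
  -- simple roots
  have simple : ∀ k ∈ S, Pack P Q S o g v Aj w (sr k) := by
    intro k hk
    refine ⟨fun i hi => by rw [H.ws]; exact H.F_simple hi k hk,
      fun i hi hc => absurd hc (cc_sr_ne_one _ _), fun i hi hc => ?_, fun i hi hc => ?_⟩
    · have hne : i ≠ k := by rintro rfl; rw [cc_sr_self] at hc; omega
      have ha : ¬ Q.Adj i k := fun ha => by rw [cc_sr_adj Q ha] at hc; omega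
      have := Lsub.mul_mem (V := V) (w := w) (isRoot_sr (Q := Q) hk) le_rfl (H.HA k hk i hi hne ha)
      rwa [H.ws, hF.gv_eq hk hi hne ha, ← H.ws] at this
    · have he : i = k := by
        by_contra hne
        by_cases ha : Q.Adj i k
        · rw [cc_sr_adj Q ha] at hc; omega
        · rw [cc_sr_nadj Q hne ha] at hc; omega
      subst he
      rw [H.ws, hF.gv hi, ← H.ws]
      exact H.int.li.smul_mem _ (H.w_mem (isRoot_sr hi) le_rfl)
  have ih' : ∀ b, IsRoot Q S b → ht b ≤ (d : ℤ) → Pack P Q S o g v Aj w b :=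
    fun b hb hd => ih b hd hb
  -- multiplication on lower levels
  have G1 : ∀ (e : ℤ) (i : Fin n), e + 1 ≤ d → i ∈ S → ∀ x ∈ Lsub V Q S w Aj e,
      g i * x ∈ Lsub V Q S w Aj (e + 1) := fun e i he hi x hx =>
    H.G_of (fun b hb hd => ih' b hb (by omega)) (fun b hb hd => (ih' b hb (by omega)).U) hi hx
  have FL : ∀ i ∈ S, ∀ x ∈ Lsub V Q S w Aj d, P.F o (g i) * x ∈ VI v Aj i := fun i hi x hx =>
    Lsub.map_le (fun _ hx _ ha => VI.mul_right hx ha) (fun b hb hd => (ih' b hb hd).F i hi) hx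
  -- U on level d+1
  have Ud : ∀ b, IsRoot Q S b → ht b ≤ (d : ℤ) + 1 → ∀ i ∈ S, cc Q i b = 1 →
      g i * w (b - sr i) - w b ∈ Lsub V Q S w Aj (ht b - 1) := by
    intro b hb hd i hi hci
    by_cases hlow : ht b ≤ d
    · exact (ih' b hb hlow).U i hi hci
    have hns : ∀ k, b ≠ sr k := by rintro k rfl; exact cc_sr_ne_one _ _ hci
    obtain ⟨k, hk, hck, hw⟩ := H.wr b hb hns
    by_cases hik : i = k
    · subst hik; rw [hw, sub_self]; exact Submodule.zero_mem _
    have ri := hb.sub hci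
    have rk := hb.sub hck
    have hpi := ri.ht_pos
    have hti : ht (b - sr i) = ht b - 1 := by rw [ht_sub, ht_sr]
    have htk : ht (b - sr k) = ht b - 1 := by rw [ht_sub, ht_sr]
    by_cases ha : Q.Adj i k
    · have hbe := hb.eq_of_adj hQ ha hci hck
      have e1 : b - sr i = sr k := by rw [hbe]; abel
      have e2 : b - sr k = sr i := by rw [hbe]; abel
      rw [hw, e1, e2, H.ws, H.ws, hF.base hi hk ha]
      have h1 : v k ∈ Lsub V Q S w Aj (ht b - 1) := H.VI_le hk (by omega) (H.v_mem hk)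
      have h2 : v i ∈ Lsub V Q S w Aj (ht b - 1) := H.VI_le hi (by omega) (H.v_mem hi)
      rw [show g i * v k - (g i * v k + P.m • v k - P.m • v i) = P.m • v i - P.m • v k by abel]
      exact Submodule.sub_mem _ (H.int.m.smul_mem _ h2) (H.int.m.smul_mem _ h1)
    · have aki : ¬ Q.Adj k i := fun h => ha h.symm
      have u1 := (ih' _ rk (by omega)).U i hi (by rw [cc_sub, cc_sr_nadj Q hik ha]; omega)
      have u2 := (ih' _ ri (by omega)).U k hk (by rw [cc_sub, cc_sr_nadj Q (Ne.symm hik) aki]; omega)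
      rw [htk] at u1
      rw [hti, show b - sr i - sr k = b - sr k - sr i by abel] at u2
      have g1 := G1 _ k (by omega) hk _ u1
      have g2 := G1 _ i (by omega) hi _ u2
      have := Submodule.sub_mem _ g1 g2
      rw [mul_sub, mul_sub, ← mul_assoc, ← mul_assoc, hs.comm i hi k hk hik ha, ← hw] at this
      rw [sub_add_cancel, sub_sub_sub_cancel_left] at this
      exact this
  have G2 : ∀ (i : Fin n), i ∈ S → ∀ x ∈ Lsub V Q S w Aj d,
      g i * x ∈ Lsub V Q S w Aj (d + 1) := fun i hi x hx => H.G_of ih' Ud hi hx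
  intro b hd hb
  push_cast at hd
  by_cases hlow : ht b ≤ d
  · exact ih' b hb hlow
  by_cases hsr : ∃ k, b = sr k
  · obtain ⟨k, rfl⟩ := hsr
    exact simple k (isRoot_sr_iff.1 hb)
  push Not at hsr
  obtain ⟨k, hk, hck, hw⟩ := H.wr b hb hsr
  have hhb : ht b = d + 1 := by omega
  have rk := hb.sub hck
  have htk : ht (b - sr k) = d := by rw [ht_sub, ht_sr]; omega
  have hd1 : (1 : ℤ) ≤ d := by have := rk.ht_pos; omega
  have pk := ih' _ rk (by omega)
  have wk : w (b - sr k) ∈ Lsub V Q S w Aj d := H.w_mem rk (by omega)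
  refine ⟨fun i hi => ?_, fun i hi hc => Ud b hb (by omega) i hi hc, fun i hi hc => ?_,
    fun i hi hc => ?_⟩
  · -- F
    rw [hw]
    by_cases hik : i = k
    · subst hik
      rw [← mul_assoc, hs.fg hi, smul_mul_assoc]
      exact H.int.li.smul_mem _ (pk.F i hi)
    by_cases ha : Q.Adj i k
    · have sw : ∀ y, P.F o (g i) * (g k * (g i * y)) = g k * (g i * (P.F o (g k) * y)) := fun y => by
        have := hs.swap hi hk ha
        calc _ = P.F o (g i) * (g k * g i) * y := by simp only [mul_assoc]
          _ = _ := by rw [← this]; simp only [mul_assoc]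
      have sw2 : ∀ y ∈ Lsub V Q S w Aj d, P.F o (g i) * (g k * (g i * y)) ∈ VI v Aj i := by
        intro y hy
        obtain ⟨t, ht, he⟩ := VI.exists (FL k hk y hy)
        rw [sw, he]
        have : g k * (g i * (v k * t)) = v i * t := by
          rw [hF.vadj i hi k hk ha]; simp only [mul_assoc]
        rw [this]; exact VI.mul_mem ht
      have hle := hb.cc_lt hQ (hsr i)
      have hge := hb.neg_one_le_cc hQ i
      have c0 : cc Q i (b - sr k) = cc Q i b + 1 := by rw [cc_sub, cc_sr_adj Q ha]; omega
      obtain h1 | h1 | h1 : cc Q i b = 1 ∨ cc Q i b = 0 ∨ cc Q i b = -1 := by omega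
      · have hbe := hb.eq_of_adj hQ ha h1 hck
        rw [show b - sr k = sr i by rw [hbe]; abel, H.ws, ← hF.fv i hi]
        have : P.F o (g i) * (g k * (P.F o (g i) * v i)) = (P.l / P.d) • v i := by
          calc _ = P.F o (g i) * (g k * P.F o (g i)) * v i := by simp only [mul_assoc]
            _ = _ := by rw [hs.fgf i hi k hk ha, smul_mul_assoc, hF.fv i hi]
        rw [this]
        exact H.int.ld.smul_mem _ (H.v_mem hi)
      · have c1 : cc Q i (b - sr k) = 1 := by omega
        have u := pk.U i hi c1
        have r2 := rk.sub c1
        have h2 : w (b - sr k - sr i) ∈ Lsub V Q S w Aj d :=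
          H.w_mem r2 (by rw [ht_sub, ht_sr]; omega)
        have h3 := FL i hi _ (Lsub.mono (show ht (b - sr k) - 1 + 1 ≤ d by omega)
          (G1 _ k (by omega) hk _ u))
        have h4 := Submodule.sub_mem _ (sw2 _ h2) h3
        rw [mul_sub, mul_sub, sub_sub_cancel] at h4
        exact h4
      · have hy : P.inv o (g i) * w (b - sr k) ∈ Lsub V Q S w Aj d := by
          rw [Par.inv, sub_mul, add_mul, smul_mul_assoc, smul_mul_assoc, H.ow rk]
          refine Submodule.sub_mem _ (Submodule.add_mem _ ?_ (H.int.m.smul_mem _ wk))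
            (H.int.md.smul_mem _ (H.VI_le hi hd1 (pk.F i hi)))
          exact Lsub.mono (by omega) (pk.O i hi (by omega))
        have h2 := sw2 _ hy
        rwa [← mul_assoc (g i), hs.g_inv hi, H.ow rk] at h2
    · rw [← mul_assoc, hs.fg_comm hi hk hik ha, mul_assoc]
      obtain ⟨t, ht, he⟩ := VI.exists (pk.F i hi)
      have hki : k ≠ i := Ne.symm hik
      have aki : ¬ Q.Adj k i := fun h => ha h.symm
      rw [he, ← mul_assoc, ← hF.gv_eq hi hk hki aki, mul_assoc]
      exact VI.mul_mem (Aj.mul_mem (H.HA i hi k hk hki aki) ht)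
  · -- O
    have hik : i ≠ k := by rintro rfl; omega
    rw [hw, hhb]
    by_cases ha : Q.Adj i k
    · have c1 : cc Q i (b - sr k) = 1 := by rw [cc_sub, cc_sr_adj Q ha]; omega
      have u := pk.U i hi c1
      have r2 := rk.sub c1
      have ht2 : ht (b - sr k - sr i) = d - 1 := by rw [ht_sub, ht_sr]; omega
      have o1 := (ih' _ r2 (by omega)).O k hk (by
        rw [cc_sub, cc_sub, cc_sr_self, cc_sr_adj Q ha.symm]; omega)
      rw [ht2] at o1
      rw [htk] at u
      have h1 := G1 _ i (by omega) hi _ o1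
      rw [sub_add_cancel] at h1
      have h2 := G2 k hk _ h1
      have h3 := G1 _ k (by omega) hk _ u
      rw [sub_add_cancel] at h3
      have h4 := Submodule.sub_mem _ h2 (G2 i hi _ h3)
      have br := hs.braid i hi k hk ha
      have e1 : g k * (g i * (g k * w (b - sr k - sr i))) =
          g i * (g k * (g i * w (b - sr k - sr i))) := by
        calc _ = g k * (g i * g k) * w (b - sr k - sr i) := by simp only [mul_assoc]
          _ = _ := by rw [← br]; simp only [mul_assoc]
      rw [e1, mul_sub, mul_sub, sub_sub_cancel] at h4
      exact h4
    · rw [← mul_assoc, hs.comm i hi k hk hik ha, mul_assoc]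
      have := pk.O i hi (by rw [cc_sub, cc_sr_nadj Q hik ha]; omega)
      rw [htk] at this
      exact G2 k hk _ this
  · -- D
    have hc1 : cc Q i b = 1 := by have := hb.cc_lt hQ (hsr i); omega
    have u := Ud b hb (by omega) i hi hc1
    have ri := hb.sub hc1
    have hti : ht (b - sr i) = d := by rw [ht_sub, ht_sr]; omega
    have wi : w (b - sr i) ∈ Lsub V Q S w Aj d := H.w_mem ri (by omega)
    have pi := ih' _ ri (by omega)
    rw [hhb]
    rw [hhb, add_sub_cancel_right] at u
    have h1 := G2 i hi _ u
    have h2 : g i * (g i * w (b - sr i)) ∈ Lsub V Q S w Aj (d + 1) := by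
      rw [← mul_assoc, P.gg o (g i), add_mul, sub_mul, smul_mul_assoc, smul_mul_assoc, H.ow ri]
      refine Submodule.add_mem _ (Submodule.sub_mem _ (Lsub.mono (by omega) wi)
        (H.int.m.smul_mem _ (G2 i hi _ wi))) (H.int.mdl.smul_mem _
          (H.VI_le hi (by omega) (pi.F i hi)))
    have h4 := Submodule.sub_mem _ h2 h1
    rw [mul_sub, sub_sub_cancel] at h4
    exact h4

/-- The module `M`. -/
lemma LHyp.module (H : LHyp P Q S o g j v vs Aj w) (hA : Aj.toSubmodule.FG) : ∃ M : Submodule V A, M.FG ∧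
    (∀ i ∈ S, ∀ x ∈ M, g i * x ∈ M) ∧ (∀ i ∈ S, ∀ x ∈ M, P.F o (g i) * x ∈ M) ∧
    (∀ k ∈ S, v k ∈ M) ∧
    (∀ C : NonUnitalSubalgebra V A, (∀ x ∈ Aj, x ∈ C) → (∀ i ∈ S, g i ∈ C) → (∀ k ∈ S, v k ∈ C) →
      ∀ x ∈ M, x ∈ C) := by
  obtain ⟨D, hD⟩ := exists_maxht (S := S) H.good
  have hpos : (1 : ℤ) ≤ D := by
    have := hD _ (isRoot_sr H.fr.jS)
    rwa [ht_sr] at this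
  have hall : ∀ b, IsRoot Q S b → Pack P Q S o g v Aj w b :=
    fun b hb => H.pack _ b (Int.self_le_toNat _) hb
  refine ⟨Lsub V Q S w Aj D, Lsub.fg H.good hA _, fun i hi x hx => ?_, fun i hi x hx => ?_,
    fun k hk => H.VI_le hk hpos (H.v_mem hk), fun C hC1 hC2 hC3 => ?_⟩
  · have h1 := H.G_of (d := D) (fun b hb _ => hall b hb) (fun b hb _ => (hall b hb).U) hi hx
    have : Lsub V Q S w Aj (D + 1) ≤ Lsub V Q S w Aj D := by
      refine span_mul_le ?_
      rintro _ ⟨b, hb, _, rfl⟩ a ha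
      exact Lsub.mul_mem hb (hD b hb) ha
    exact this h1
  · exact H.VI_le hi hpos (Lsub.map_le (fun _ hx _ ha => VI.mul_right hx ha)
      (fun b hb _ => (hall b hb).F i hi) hx)
  · have hw : ∀ (d : ℕ) (b : Fin n → ℤ), ht b ≤ d → IsRoot Q S b → w b ∈ C := by
      intro d
      induction d with
      | zero => intro b hd hb; have := hb.ht_pos; omega
      | succ d ih =>
        intro b hd hb
        by_cases hs : ∃ k, b = sr k
        · obtain ⟨k, rfl⟩ := hs
          rw [H.ws]; exact hC3 k (isRoot_sr_iff.1 hb)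
        · push Not at hs
          obtain ⟨k, hk, hc, he⟩ := H.wr b hb hs
          rw [he]
          exact C.mul_mem (hC2 k hk)
            (ih _ (by rw [ht_sub, ht_sr]; push_cast at hd; omega) (hb.sub hc))
    have : Lsub V Q S w Aj D ≤ C.toSubmodule := by
      refine span_mul_le ?_
      rintro _ ⟨b, hb, _, rfl⟩ a ha
      exact C.mul_mem (hw _ b (Int.self_le_toNat _) hb) (hC1 a ha)
    exact fun x hx => this hx

end LOne
end BMWaux

/-! ### Finite generation of the integral form -/
namespace BMWaux
section GenSec
variable {V : Type*} [CommRing V] {K : Type*} [Field K] [Algebra V K]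
variable {A : Type*} [Ring A] [Algebra K A] [Algebra V A] [IsScalarTower V K A]
variable {n : ℕ} {Q : SimpleGraph (Fin n)} {S : Finset (Fin n)} {g v vs : Fin n → A}
variable {P : Par K} {o : A} {j : Fin n}

variable (V) in
/-- the integral form -/
def gen (P : Par K) (S : Finset (Fin n)) (o : A) (g : Fin n → A) : NonUnitalSubalgebra V A :=
  NonUnitalAlgebra.adjoin V {x | x = o ∨ ∃ i ∈ S, x = g i ∨ x = P.F o (g i)}

lemma o_mem_gen : o ∈ gen V P S o g := NonUnitalAlgebra.subset_adjoin V (Or.inl rfl)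
lemma g_mem_gen {i : Fin n} (hi : i ∈ S) : g i ∈ gen V P S o g :=
  NonUnitalAlgebra.subset_adjoin V (Or.inr ⟨i, hi, Or.inl rfl⟩)
lemma F_mem_gen {i : Fin n} (hi : i ∈ S) : P.F o (g i) ∈ gen V P S o g :=
  NonUnitalAlgebra.subset_adjoin V (Or.inr ⟨i, hi, Or.inr rfl⟩)

lemma gen_le {C : NonUnitalSubalgebra V A} (ho : o ∈ C) (hg : ∀ i ∈ S, g i ∈ C)
    (hf : ∀ i ∈ S, P.F o (g i) ∈ C) : ∀ x ∈ gen V P S o g, x ∈ C := by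
  have : gen V P S o g ≤ C := by
    refine NonUnitalAlgebra.adjoin_le ?_
    rintro x (rfl | ⟨i, hi, rfl | rfl⟩)
    exacts [ho, hg i hi, hf i hi]
  exact fun x hx => this hx

lemma gen_mul {N : Submodule V A} (ho : ∀ y ∈ N, o * y ∈ N) (hg : ∀ i ∈ S, ∀ y ∈ N, g i * y ∈ N)
    (hf : ∀ i ∈ S, ∀ y ∈ N, P.F o (g i) * y ∈ N) :
    ∀ x ∈ gen V P S o g, ∀ y ∈ N, x * y ∈ N := by
  intro x hx
  induction hx using NonUnitalAlgebra.adjoin_induction with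
  | mem x hx =>
    obtain rfl | ⟨i, hi, rfl | rfl⟩ := hx
    exacts [ho, hg i hi, hf i hi]
  | add x y _ _ h1 h2 => intro z hz; rw [add_mul]; exact N.add_mem (h1 z hz) (h2 z hz)
  | zero => intro z _; rw [zero_mul]; exact N.zero_mem
  | mul x y _ _ h1 h2 => intro z hz; rw [mul_assoc]; exact h1 _ (h2 z hz)
  | smul r x _ h1 => intro z hz; rw [smul_mul_assoc]; exact N.smul_mem _ (h1 z hz)

lemma gen_mul_right {N : Submodule V A} (ho : ∀ y ∈ N, y * o ∈ N)
    (hg : ∀ i ∈ S, ∀ y ∈ N, y * g i ∈ N) (hf : ∀ i ∈ S, ∀ y ∈ N, y * P.F o (g i) ∈ N) :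
    ∀ x ∈ gen V P S o g, ∀ y ∈ N, y * x ∈ N := by
  intro x hx
  induction hx using NonUnitalAlgebra.adjoin_induction with
  | mem x hx =>
    obtain rfl | ⟨i, hi, rfl | rfl⟩ := hx
    exacts [ho, hg i hi, hf i hi]
  | add x y _ _ h1 h2 => intro z hz; rw [mul_add]; exact N.add_mem (h1 z hz) (h2 z hz)
  | zero => intro z _; rw [mul_zero]; exact N.zero_mem
  | mul x y _ _ h1 h2 => intro z hz; rw [← mul_assoc]; exact h2 _ (h1 z hz)
  | smul r x _ h1 => intro z hz; rw [mul_smul_comm]; exact N.smul_mem _ (h1 z hz)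

lemma gen_unit (h : Sys P Q S o g) : ∀ x ∈ gen V P S o g, o * x = x ∧ x * o = x := by
  intro x hx
  induction hx using NonUnitalAlgebra.adjoin_induction with
  | mem x hx =>
    obtain rfl | ⟨i, hi, rfl | rfl⟩ := hx
    exacts [⟨h.oo, h.oo⟩, ⟨h.og i hi, h.go i hi⟩, ⟨h.oF hi, h.Fo hi⟩]
  | add x y _ _ h1 h2 => rw [mul_add, add_mul, h1.1, h1.2, h2.1, h2.2]; exact ⟨rfl, rfl⟩
  | zero => simp
  | mul x y _ _ h1 h2 => rw [← mul_assoc, h1.1, mul_assoc, h2.2]; exact ⟨rfl, rfl⟩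
  | smul r x _ h1 => rw [mul_smul_comm, smul_mul_assoc, h1.1, h1.2]; exact ⟨rfl, rfl⟩

lemma gen_comm {c : A} (ho : c * o = o * c) (hg : ∀ i ∈ S, c * g i = g i * c)
    (hf : ∀ i ∈ S, c * P.F o (g i) = P.F o (g i) * c) : ∀ x ∈ gen V P S o g, c * x = x * c := by
  intro x hx
  induction hx using NonUnitalAlgebra.adjoin_induction with
  | mem x hx =>
    obtain rfl | ⟨i, hi, rfl | rfl⟩ := hx
    exacts [ho, hg i hi, hf i hi]
  | add x y _ _ h1 h2 => rw [mul_add, add_mul, h1, h2]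
  | zero => simp
  | mul x y _ _ h1 h2 => rw [← mul_assoc, h1, mul_assoc, h2, mul_assoc]
  | smul r x _ h1 => rw [mul_smul_comm, smul_mul_assoc, h1]

lemma gen_op : ∀ x ∈ gen V P S (MulOpposite.op o) (fun i => MulOpposite.op (g i)),
    x.unop ∈ gen V P S o g := by
  intro x hx
  induction hx using NonUnitalAlgebra.adjoin_induction with
  | mem x hx =>
    obtain rfl | ⟨i, hi, rfl | rfl⟩ := hx
    · exact o_mem_gen
    · exact g_mem_gen hi
    · rw [P.F_op]; exact F_mem_gen hi
  | add x y _ _ h1 h2 => exact add_mem h1 h2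
  | zero => exact zero_mem _
  | mul x y _ _ h1 h2 => exact mul_mem h2 h1
  | smul r x _ h1 => exact SMulMemClass.smul_mem r h1

lemma gen_eq (h : Sys P Q S o g) {N : Submodule V A} (hN : ∀ x ∈ N, x ∈ gen V P S o g)
    (ho : o ∈ N) (hg : ∀ i ∈ S, ∀ y ∈ N, g i * y ∈ N)
    (hf : ∀ i ∈ S, ∀ y ∈ N, P.F o (g i) * y ∈ N) : (gen V P S o g).toSubmodule = N := by
  refine le_antisymm (fun x hx => ?_) hN
  rw [← (gen_unit h x hx).2]
  exact gen_mul (fun y hy => by rwa [(gen_unit h y (hN y hy)).1]) hg hf x hx o ho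

lemma frame_mem (hS : IsConn Q S) (h : Frame P Q S o g j v vs) :
    ∀ k ∈ S, v k ∈ gen V P S o g ∧ vs k ∈ gen V P S o g := by
  classical
  have := hS (S.filter fun k => v k ∈ gen V P S o g ∧ vs k ∈ gen V P S o g)
    (Finset.filter_subset _ _) ⟨j, Finset.mem_filter.2 ⟨h.jS, ?_⟩⟩ ?_
  · intro k hk
    rw [← this] at hk
    exact (Finset.mem_filter.1 hk).2
  · rw [h.vj, h.vsj]; exact ⟨F_mem_gen h.jS, F_mem_gen h.jS⟩
  · intro p hp k hk ha
    rw [Finset.mem_filter] at hp ⊢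
    obtain ⟨hp, h1, h2⟩ := hp
    refine ⟨hk, ?_, ?_⟩
    · rw [h.vadj k hk p hp ha.symm]
      exact mul_mem (g_mem_gen hp) (mul_mem (g_mem_gen hk) h1)
    · rw [h.vsadj k hk p hp ha.symm]
      exact mul_mem h2 (mul_mem (g_mem_gen hk) (g_mem_gen hp))

lemma left_module (hQ : Good Q) (hS : IsConn Q S) (hI : IntPar V P) (h : Frame P Q S o g j v vs)
    (ih : ∀ S' ⊂ S, ∀ (o' : A) (g' : Fin n → A), Sys P Q S' o' g' →
      (gen V P S' o' g').toSubmodule.FG) :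
    ∃ M : Submodule V A, M.FG ∧
    (∀ i ∈ S, ∀ x ∈ M, g i * x ∈ M) ∧ (∀ i ∈ S, ∀ x ∈ M, P.F o (g i) * x ∈ M) ∧
    (∀ k ∈ S, v k ∈ M) ∧ (∀ x ∈ M, x ∈ gen V P S o g) := by
  obtain ⟨S', hlt, g', hs', h1, h2⟩ := corner hQ hS h
  obtain ⟨w, hw1, hw2⟩ := exists_w S hQ g v
  have H : LHyp P Q S o g j v vs (gen V P S' (P.F o (g j)) g') w := by
    refine ⟨hQ, hS, hI, h, o_mem_gen, fun k hk i hi hne ha => ?_, fun k hk i hi hne ha => ?_,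
      hw1, hw2⟩
    · obtain ⟨i', hi', he⟩ := h2 k hk i hi hne ha
      rw [he]; exact g_mem_gen hi'
    · obtain ⟨i', hi', he⟩ := h2 k hk i hi hne ha
      rw [he]; exact F_mem_gen hi'
  obtain ⟨M, hM, m1, m2, m3, m4⟩ := H.module (ih S' hlt _ _ hs')
  refine ⟨M, hM, m1, m2, m3, m4 _ (gen_le (F_mem_gen h.jS) (fun i hi => ?_) (fun i hi => ?_))
    (fun i hi => g_mem_gen hi) (fun k hk => (frame_mem hS h k hk).1)⟩
  · obtain ⟨k, hk, i', hi', hne, ha, he⟩ := h1 i hi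
    rw [he, Hc]
    exact mul_mem (frame_mem hS h k hk).2 (mul_mem (g_mem_gen hi') (frame_mem hS h k hk).1)
  · obtain ⟨k, hk, i', hi', hne, ha, he⟩ := h1 i hi
    have e : P.F (P.F o (g j)) (g' i) = vs k * (P.F o (g i') * v k) := by
      rw [← h.fv_eq hk hi' hne ha, ← he, h.vs_mul hk (hs'.oF hi)]
    rw [e]
    exact mul_mem (frame_mem hS h k hk).2 (mul_mem (F_mem_gen hi') (frame_mem hS h k hk).1)

lemma fg_conn (hQ : Good Q) (hS : IsConn Q S) (hI : IntPar V P) (h : Frame P Q S o g j v vs)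
    (ih : ∀ S' ⊂ S, ∀ (o' : A) (g' : Fin n → A), Sys P Q S' o' g' →
      (gen V P S' o' g').toSubmodule.FG)
    (ih' : ∀ S' ⊂ S, ∀ (o' : Aᵐᵒᵖ) (g' : Fin n → Aᵐᵒᵖ), Sys P Q S' o' g' →
      (gen V P S' o' g').toSubmodule.FG) : (gen V P S o g).toSubmodule.FG := by
  obtain ⟨M, hM, m1, m2, m3, m4⟩ := left_module hQ hS hI h ih
  obtain ⟨M', hM', r1, r2, r3, r4⟩ := left_module hQ hS hI h.op ih'
  set R : Submodule V A := M'.map (MulOpposite.opLinearEquiv V (M := A)).symm.toLinearMap with hR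
  have memR : ∀ x : A, x ∈ R ↔ MulOpposite.op x ∈ M' := by
    intro x
    constructor
    · rintro ⟨y, hy, rfl⟩; exact hy
    · intro hx; exact ⟨_, hx, rfl⟩
  have hRfg : R.FG := hM'.map _
  have hs := h.sys
  set J := M * R with hJ
  have hJfg : J.FG := hM.mul hRfg
  have hRgen : ∀ x ∈ R, x ∈ gen V P S o g := fun x hx => gen_op _ (r4 _ ((memR x).1 hx))
  have Jmap : ∀ c : A, (∀ x ∈ M, c * x ∈ M) → ∀ x ∈ J, c * x ∈ J := by
    intro c hc
    have : J ≤ J.comap (LinearMap.mulLeft V c) := by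
      refine Submodule.mul_le.2 fun x hx y hy => ?_
      rw [Submodule.mem_comap, LinearMap.mulLeft_apply, ← mul_assoc]
      exact Submodule.mul_mem_mul (hc x hx) hy
    exact fun x hx => this hx
  have Jmap' : ∀ c : A, (∀ x ∈ R, x * c ∈ R) → ∀ x ∈ J, x * c ∈ J := by
    intro c hc
    have : J ≤ J.comap (LinearMap.mulRight V c) := by
      refine Submodule.mul_le.2 fun x hx y hy => ?_
      rw [Submodule.mem_comap, LinearMap.mulRight_apply, mul_assoc]
      exact Submodule.mul_mem_mul hx (hc y hy)
    exact fun x hx => this hx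
  have hJgen : ∀ x ∈ J, x ∈ gen V P S o g := by
    have : J ≤ (gen V P S o g).toSubmodule :=
      Submodule.mul_le.2 fun x hx y hy => (gen V P S o g).mul_mem (m4 x hx) (hRgen y hy)
    exact fun x hx => this hx
  have Jr : ∀ x ∈ gen V P S o g, ∀ y ∈ J, y * x ∈ J := by
    refine gen_mul_right (fun y hy => by rwa [(gen_unit hs y (hJgen y hy)).2])
      (fun i hi => Jmap' _ fun x hx => ?_) (fun i hi => Jmap' _ fun x hx => ?_)
    · rw [memR] at hx ⊢
      exact r1 i hi _ hx
    · rw [memR] at hx ⊢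
      have := r2 i hi _ hx
      rwa [P.F_op] at this
  have fJ : ∀ i ∈ S, P.F o (g i) ∈ J := by
    intro i hi
    rw [← h.vvs i hi]
    exact Submodule.mul_mem_mul (m3 i hi) ((memR _).2 (r3 i hi))
  obtain ⟨W, hW, hWle, hoW, hWg⟩ := hecke hQ hI.m g o J (gen V P S o g).toSubmodule
    o_mem_gen S.card S le_rfl ⟨hs.comm, fun i hi k hk ha => hs.braid i hi k hk ha⟩
    (fun i hi x hx => (gen V P S o g).mul_mem (g_mem_gen hi) hx) (fun i hi => Jmap _ (m1 i hi))
    (fun i hi x hx => by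
      have ox : o * x = x := (gen_unit hs x hx).1
      have : g i * (g i * x) - (x - P.m • (g i * x)) = (P.m * P.d / P.l) • (P.F o (g i) * x) := by
        rw [← mul_assoc, P.gg o (g i), add_mul, sub_mul, smul_mul_assoc, smul_mul_assoc, ox]
        abel
      rw [this]
      exact hI.mdl.smul_mem _ (Jr x hx _ (fJ i hi)))
  have hNgen : ∀ x ∈ W ⊔ J, x ∈ gen V P S o g := by
    have : W ⊔ J ≤ (gen V P S o g).toSubmodule := sup_le hWle hJgen
    exact fun x hx => this hx
  rw [gen_eq hs hNgen (Submodule.mem_sup_left hoW) ?_ ?_]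
  · exact hW.sup hJfg
  · intro i hi y hy
    obtain ⟨a, ha, b, hb, rfl⟩ := Submodule.mem_sup.1 hy
    rw [mul_add]
    exact Submodule.add_mem _ (hWg i hi a ha) (Submodule.mem_sup_right (Jmap _ (m1 i hi) b hb))
  · intro i hi y hy
    exact Submodule.mem_sup_right (Jr y (hNgen y hy) _ (fJ i hi))

lemma fg_split (h : Sys P Q S o g) {T : Finset (Fin n)} (hT : T ⊆ S)
    (hcl : ∀ i ∈ T, ∀ k ∈ S, Q.Adj i k → k ∈ T) (h1 : (gen V P T o g).toSubmodule.FG)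
    (h2 : (gen V P (S \ T) o g).toSubmodule.FG) : (gen V P S o g).toSubmodule.FG := by
  have e : (gen V P S o g).toSubmodule =
      (gen V P T o g).toSubmodule * (gen V P (S \ T) o g).toSubmodule := by
    have i1 : ∀ x ∈ gen V P T o g, x ∈ gen V P S o g :=
      gen_le o_mem_gen (fun i hi => g_mem_gen (hT hi)) (fun i hi => F_mem_gen (hT hi))
    have i2 : ∀ x ∈ gen V P (S \ T) o g, x ∈ gen V P S o g :=
      gen_le o_mem_gen (fun i hi => g_mem_gen (Finset.mem_sdiff.1 hi).1)
        (fun i hi => F_mem_gen (Finset.mem_sdiff.1 hi).1)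
    have key : ∀ c : A, ((∀ x ∈ gen V P T o g, c * x ∈ gen V P T o g) ∨
        ((∀ x ∈ gen V P T o g, c * x = x * c) ∧
          ∀ x ∈ gen V P (S \ T) o g, c * x ∈ gen V P (S \ T) o g)) →
        ∀ y ∈ (gen V P T o g).toSubmodule * (gen V P (S \ T) o g).toSubmodule,
        c * y ∈ (gen V P T o g).toSubmodule * (gen V P (S \ T) o g).toSubmodule := by
      intro c hc
      have : (gen V P T o g).toSubmodule * (gen V P (S \ T) o g).toSubmodule ≤
          ((gen V P T o g).toSubmodule * (gen V P (S \ T) o g).toSubmodule).comap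
            (LinearMap.mulLeft V c) := by
        refine Submodule.mul_le.2 fun x hx y hy => ?_
        rw [Submodule.mem_comap, LinearMap.mulLeft_apply, ← mul_assoc]
        rcases hc with hc | ⟨hc, hc'⟩
        · exact Submodule.mul_mem_mul (hc x hx) hy
        · rw [hc x hx, mul_assoc]
          exact Submodule.mul_mem_mul hx (hc' y hy)
      exact fun x hx => this hx
    have hna : ∀ i ∈ S, i ∉ T → ∀ k ∈ T, i ≠ k ∧ ¬ Q.Adj i k := fun i hi hiT k hk =>
      ⟨by rintro rfl; exact hiT hk, fun ha => hiT (hcl k hk i hi ha.symm)⟩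
    refine gen_eq h ?_ ?_ (fun i hi => key _ ?_) (fun i hi => key _ ?_)
    · have : (gen V P T o g).toSubmodule * (gen V P (S \ T) o g).toSubmodule ≤
          (gen V P S o g).toSubmodule :=
        Submodule.mul_le.2 fun x hx y hy => (gen V P S o g).mul_mem (i1 x hx) (i2 y hy)
      exact fun x hx => this hx
    · have := Submodule.mul_mem_mul (M := (gen V P T o g).toSubmodule)
        (N := (gen V P (S \ T) o g).toSubmodule) (m := o) (n := o) o_mem_gen o_mem_gen
      rwa [h.oo] at this
    · by_cases hiT : i ∈ T
      · exact Or.inl fun x hx => mul_mem (g_mem_gen hiT) hx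
      · refine Or.inr ⟨gen_comm (by rw [h.og i hi, h.go i hi]) (fun k hk => ?_) (fun k hk => ?_),
          fun x hx => mul_mem (g_mem_gen (Finset.mem_sdiff.2 ⟨hi, hiT⟩)) hx⟩
        · obtain ⟨a, b⟩ := hna i hi hiT k hk
          exact h.comm i hi k (hT hk) a b
        · obtain ⟨a, b⟩ := hna i hi hiT k hk
          exact (h.fg_comm (hT hk) hi a.symm (fun h => b h.symm)).symm
    · by_cases hiT : i ∈ T
      · exact Or.inl fun x hx => mul_mem (F_mem_gen hiT) hx
      · refine Or.inr ⟨gen_comm (by rw [h.oF hi, h.Fo hi]) (fun k hk => ?_) (fun k hk => ?_),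
          fun x hx => mul_mem (F_mem_gen (Finset.mem_sdiff.2 ⟨hi, hiT⟩)) hx⟩
        · obtain ⟨a, b⟩ := hna i hi hiT k hk
          exact h.fg_comm hi (hT hk) a b
        · obtain ⟨a, b⟩ := hna i hi hiT k hk
          exact h.ff_comm hi (hT hk) a b
  rw [e]
  exact h1.mul h2

end GenSec

universe u
variable {V : Type*} [CommRing V] {K : Type*} [Field K] [Algebra V K]

/-- Finite generation of the integral form. -/
theorem gen_fg {n : ℕ} {Q : SimpleGraph (Fin n)} {P : Par K} (hQ : Good Q) (hI : IntPar V P) :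
    ∀ (N : ℕ) (A : Type u) [Ring A] [Algebra K A] [Algebra V A] [IsScalarTower V K A]
      (S : Finset (Fin n)) (o : A) (g : Fin n → A), S.card ≤ N → Sys P Q S o g →
      (gen V P S o g).toSubmodule.FG := by
  have empty : ∀ (A : Type u) [Ring A] [Algebra K A] [Algebra V A] [IsScalarTower V K A]
      (o : A) (g : Fin n → A), Sys P Q ∅ o g → (gen V P ∅ o g).toSubmodule.FG := by
    intro A _ _ _ _ o g hs
    rw [gen_eq hs (N := Submodule.span V {o}) ?_ (Submodule.mem_span_singleton_self o) (by simp)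
      (by simp)]
    · exact Submodule.fg_span_singleton _
    · have : Submodule.span V {o} ≤ (gen V P ∅ o g).toSubmodule := by
        rw [Submodule.span_singleton_le_iff_mem]; exact o_mem_gen
      exact fun x hx => this hx
  intro N
  induction N with
  | zero =>
    intro A _ _ _ _ S o g hS hs
    rw [Nat.le_zero, Finset.card_eq_zero] at hS
    subst hS
    exact empty A o g hs
  | succ N ih =>
    intro A _ _ _ _ S o g hS hs
    by_cases hc : IsConn Q S
    · by_cases hne : S.Nonempty
      · obtain ⟨j, v, vs, hF⟩ := exists_frame hQ hs hne hc
        refine fg_conn hQ hc hI hF (fun S' hlt o' g' hs' => ?_) (fun S' hlt o' g' hs' => ?_)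
        · exact ih A S' o' g' (by have := Finset.card_lt_card hlt; omega) hs'
        · exact ih Aᵐᵒᵖ S' o' g' (by have := Finset.card_lt_card hlt; omega) hs'
      · rw [Finset.not_nonempty_iff_eq_empty] at hne
        subst hne
        exact empty A o g hs
    · unfold IsConn at hc
      push Not at hc
      obtain ⟨T, hTS, hTne, hcl, hne⟩ := hc
      have c1 := Finset.card_lt_card (Finset.ssubset_iff_subset_ne.2 ⟨hTS, hne⟩)
      have c2 : (S \ T).card < S.card := by
        rw [Finset.card_sdiff_of_subset hTS]
        have := Finset.card_pos.2 hTne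
        omega
      exact fg_split hs hTS hcl (ih A T o g (by omega) (hs.mono hTS))
        (ih A (S \ T) o g (by omega) (hs.mono Finset.sdiff_subset))

end BMWaux

/-! ### The Dynkin graphs are good -/
namespace BMWaux
section Graphs
variable {n : ℕ} {Q : SimpleGraph (Fin n)}

/-- extension by zero -/
def ext (b : Fin n → ℤ) (i : ℕ) : ℤ := if h : i < n then b ⟨i, h⟩ else 0
lemma ext_fin (b : Fin n → ℤ) (i : Fin n) : ext b i = b i := by simp [ext]
lemma ext_ge (b : Fin n → ℤ) {i : ℕ} (h : n ≤ i) : ext b i = 0 := by simp [ext, not_lt.2 h]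

lemma Q2_up (up : ℕ → ℕ) (h : ∀ i k : Fin n, i < k → (Q.Adj i k ↔ (k : ℕ) = up i))
    (hup : ∀ i, i < up i) (b : Fin n → ℤ) :
    Q2 Q b = ∑ i ∈ Finset.range n, (2 * ext b i ^ 2 - 2 * ext b i * ext b (up i)) := by
  have e1 : ∀ i k : Fin n, ad Q i k = (if (k : ℕ) = up i then 1 else 0) +
      (if (i : ℕ) = up k then 1 else 0) := by
    intro i k
    rcases lt_trichotomy i k with hl | rfl | hl
    · have : ¬ (i : ℕ) = up k := fun h' => by
        have := hup k; have : (i : ℕ) < k := hl; omega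
      simp [ad, h i k hl, this]
    · have : ¬ (i : ℕ) = up i := fun h' => by have := hup i; omega
      simp [ad, this]
    · have : ¬ (k : ℕ) = up i := fun h' => by
        have := hup i; have : (k : ℕ) < i := hl; omega
      simp [ad, Q.adj_comm i k, h k i hl, this]
  have e2 : ∀ i : Fin n, ∑ k : Fin n, (if (k : ℕ) = up i then 1 else 0) * b k = ext b (up i) := by
    intro i
    by_cases hi : up i < n
    · rw [Finset.sum_eq_single ⟨up i, hi⟩]
      · simp [ext, hi]
      · intro k _ hk
        have : ¬ (k : ℕ) = up i := fun h' => hk (Fin.ext h')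
        simp [this]
      · simp
    · rw [ext_ge b (not_lt.1 hi)]
      refine Finset.sum_eq_zero fun k _ => ?_
      have : ¬ (k : ℕ) = up i := fun h' => by have := k.2; omega
      simp [this]
  have e3 : ∑ i : Fin n, b i * ∑ k : Fin n, (if (i : ℕ) = up k then 1 else 0) * b k =
      ∑ i : Fin n, b i * ext b (up i) := by
    simp_rw [Finset.mul_sum]
    rw [Finset.sum_comm]
    refine Finset.sum_congr rfl fun i _ => ?_
    rw [← e2 i, Finset.mul_sum]
    refine Finset.sum_congr rfl fun k _ => ?_
    ring
  rw [Finset.sum_range]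
  simp only [ext_fin]
  simp only [Q2, bil, cc, e1, add_mul, Finset.sum_add_distrib, e2, mul_sub, mul_add,
    Finset.sum_sub_distrib, e3]
  rw [← sub_eq_zero]
  simp only [← Finset.sum_sub_distrib, ← Finset.sum_add_distrib]
  refine Finset.sum_eq_zero fun i _ => ?_
  ring

lemma tele (B : ℕ → ℤ) (s d : ℕ) :
    ∑ i ∈ Finset.range d, (2 * B (s + i) ^ 2 - 2 * B (s + i) * B (s + i + 1)) =
    B s ^ 2 - B (s + d) ^ 2 + ∑ i ∈ Finset.range d, (B (s + i) - B (s + i + 1)) ^ 2 := by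
  induction d with
  | zero => simp
  | succ d ih => rw [Finset.sum_range_succ, Finset.sum_range_succ, ih, ← add_assoc s d 1]; ring

lemma tele_bound (B : ℕ → ℤ) (s d : ℕ) (h0 : B (s + d) = 0) : ∀ e ≤ d, B (s + (d - e)) ^ 2 ≤
    4 ^ e * ∑ i ∈ Finset.range d, (B (s + i) - B (s + i + 1)) ^ 2 := by
  set E := ∑ i ∈ Finset.range d, (B (s + i) - B (s + i + 1)) ^ 2 with hE
  have hE0 : 0 ≤ E := Finset.sum_nonneg fun i _ => sq_nonneg _
  intro e
  induction e with
  | zero => intro _; simp [h0, hE0]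
  | succ e ih =>
    intro he
    have h1 := ih (by omega)
    have h2 : (B (s + (d - (e + 1))) - B (s + (d - (e + 1)) + 1)) ^ 2 ≤ E :=
      Finset.single_le_sum (f := fun i => (B (s + i) - B (s + i + 1)) ^ 2)
        (fun i _ => sq_nonneg _) (Finset.mem_range.2 (by omega))
    rw [show s + (d - (e + 1)) + 1 = s + (d - e) by omega] at h2
    have h3 : (1 : ℤ) ≤ 4 ^ e := one_le_pow₀ (by norm_num)
    have h4 : E ≤ 4 ^ e * E := le_mul_of_one_le_left hE0 h3
    rw [pow_succ (4 : ℤ) e]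
    nlinarith [sq_nonneg (B (s + (d - (e + 1))) - 2 * B (s + (d - e)))]

lemma par_of_up (up : ℕ → ℕ) (h : ∀ i k : Fin n, i < k → (Q.Adj i k ↔ (k : ℕ) = up i)) :
    ∀ i j k, Q.Adj i j → Q.Adj i k → i < j → i < k → j = k := by
  intro i j k a1 a2 h1 h2
  exact Fin.ext (((h i j h1).1 a1).trans ((h i k h2).1 a2).symm)

lemma good_A (n : ℕ) : Good (typeA n) := by
  have h : ∀ i k : Fin n, i < k → ((typeA n).Adj i k ↔ (k : ℕ) = (i : ℕ) + 1) := by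
    intro i k hl
    have : (i : ℕ) < k := hl
    rw [typeA, SimpleGraph.fromRel_adj]
    constructor
    · rintro ⟨_, h | h⟩ <;> omega
    · intro h; exact ⟨ne_of_lt hl, Or.inl h.symm⟩
  refine ⟨par_of_up (· + 1) h, 4 ^ n, fun b i => ?_⟩
  rw [Q2_up (· + 1) h (fun i => Nat.lt_succ_self i)]
  have t := tele (ext b) 0 n
  have hb := tele_bound (ext b) 0 n (by rw [zero_add]; exact ext_ge b le_rfl) (n - i) (by omega)
  simp only [zero_add] at t hb
  rw [ext_ge b (le_refl n)] at t
  rw [show n - (n - (i : ℕ)) = i by omega, ext_fin] at hb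
  rw [t]
  have h1 : (4 : ℤ) ^ (n - (i : ℕ)) ≤ 4 ^ n := pow_le_pow_right₀ (by norm_num) (by omega)
  have h2 : 0 ≤ ∑ i ∈ Finset.range n, (ext b i - ext b (i + 1)) ^ 2 :=
    Finset.sum_nonneg fun i _ => sq_nonneg _
  have h3 : (0 : ℤ) < 4 ^ n := by positivity
  have := mul_le_mul_of_nonneg_right h1 h2
  nlinarith [sq_nonneg (ext b 0)]

lemma good_D (n : ℕ) (hn : 4 ≤ n) : Good (typeD n) := by
  set up : ℕ → ℕ := fun i => if i = 0 then 2 else i + 1 with hup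
  have h : ∀ i k : Fin n, i < k → ((typeD n).Adj i k ↔ (k : ℕ) = up i) := by
    intro i k hl
    have : (i : ℕ) < k := hl
    rw [typeD, SimpleGraph.fromRel_adj]
    simp only [hup]
    constructor
    · rintro ⟨_, h | h⟩ <;> split_ifs <;> omega
    · intro h; refine ⟨ne_of_lt hl, Or.inl ?_⟩
      split_ifs at h <;> omega
  have hupl : ∀ i, i < up i := fun i => by simp only [hup]; split_ifs <;> omega
  obtain ⟨d, rfl⟩ : ∃ d, n = 2 + d := ⟨n - 2, by omega⟩
  refine ⟨par_of_up up h, 2 * 4 ^ d, fun b i => ?_⟩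
  have t := tele (ext b) 2 d
  have hE0 : 0 ≤ ∑ i ∈ Finset.range d, (ext b (2 + i) - ext b (2 + i + 1)) ^ 2 :=
    Finset.sum_nonneg fun i _ => sq_nonneg _
  have hb := tele_bound (ext b) 2 d (ext_ge b le_rfl)
  set E := ∑ i ∈ Finset.range d, (ext b (2 + i) - ext b (2 + i + 1)) ^ 2 with hE
  have q : Q2 (typeD (2 + d)) b = (ext b 0 - ext b 1) ^ 2 +
      (ext b 0 + ext b 1 - ext b 2) ^ 2 + E := by
    rw [Q2_up up h hupl, Finset.sum_range_add, Finset.sum_range_succ, Finset.sum_range_succ,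
      Finset.sum_range_zero]
    have : ∀ i, up (2 + i) = 2 + i + 1 := fun i => by simp only [hup]; split_ifs <;> omega
    simp only [this]
    rw [t, ext_ge b (le_refl (2 + d)), show up 0 = 2 by simp [hup], show up 1 = 2 by simp [hup]]
    ring
  have hbig : ∀ k, 2 ≤ k → k < 2 + d → ext b k ^ 2 ≤ 4 ^ d * E := by
    intro k h1 h2
    have := hb (d - (k - 2)) (by omega)
    rw [show 2 + (d - (d - (k - 2))) = k by omega] at this
    have h1 : (4 : ℤ) ^ (d - (k - 2)) ≤ 4 ^ d := pow_le_pow_right₀ (by norm_num) (by omega)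
    exact this.trans (mul_le_mul_of_nonneg_right h1 hE0)
  have hp : (4 : ℤ) ≤ 4 ^ d := by
    calc (4 : ℤ) = 4 ^ 1 := by norm_num
      _ ≤ 4 ^ d := pow_le_pow_right₀ (by norm_num) (by omega)
  set c : ℤ := 4 ^ d with hc
  rw [← ext_fin b i, q]
  have s1 := sq_nonneg (ext b 0 - ext b 1)
  have s2 := sq_nonneg (ext b 0 + ext b 1 - ext b 2)
  have b2 := hbig 2 le_rfl (by omega)
  have p1 := mul_le_mul_of_nonneg_right hp s1
  have p2 := mul_le_mul_of_nonneg_right hp s2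
  have p3 := mul_le_mul_of_nonneg_right hp hE0
  by_cases hi : 2 ≤ (i : ℕ)
  · have := hbig i hi i.2
    nlinarith
  · obtain h0 | h0 : (i : ℕ) = 0 ∨ (i : ℕ) = 1 := by omega
    · rw [h0]
      nlinarith [sq_nonneg (ext b 0 + ext b 1 - 2 * ext b 2), sq_nonneg (ext b 0 - ext b 1 - (ext b 0 + ext b 1 - ext b 2)), sq_nonneg (ext b 0 - ext b 1 - ext b 2), sq_nonneg (ext b 0 + ext b 1 - ext b 2 - ext b 2)]
    · rw [h0]
      nlinarith [sq_nonneg (ext b 0 - ext b 1 + (ext b 0 + ext b 1 - ext b 2)), sq_nonneg (ext b 0 - ext b 1 + ext b 2), sq_nonneg (ext b 0 + ext b 1 - ext b 2 - ext b 2)]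

lemma E8_bound (x0 x1 x2 x3 x4 x5 x6 x7 : ℤ) :
    x0 ^ 2 + x1 ^ 2 + x2 ^ 2 + x3 ^ 2 + x4 ^ 2 + x5 ^ 2 + x6 ^ 2 + x7 ^ 2 ≤
    100 * (2 * (x0 ^ 2 + x1 ^ 2 + x2 ^ 2 + x3 ^ 2 + x4 ^ 2 + x5 ^ 2 + x6 ^ 2 + x7 ^ 2) -
      2 * (x0 * x2 + x1 * x3 + x2 * x3 + x3 * x4 + x4 * x5 + x5 * x6 + x6 * x7)) := by
  linarith [sq_nonneg (199 * x0 + (-100) * x2), sq_nonneg (199 * x1 + (-100) * x3), sq_nonneg (29601 * x2 + (-19900) * x3), sq_nonneg (480209201 * x3 + (-589059900) * x4), sq_nonneg (36655640999 * x4 + (-48020920100) * x5), sq_nonneg (2492380548801 * x5 + (-3665564099900) * x6), sq_nonneg (129427319221399 * x6 + (-249238054880100) * x7), sq_nonneg (1 * x7)]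

lemma good_E (n : ℕ) (hn : n = 6 ∨ n = 7 ∨ n = 8) : Good (typeE n) := by
  set up : ℕ → ℕ := fun i => if i = 0 then 2 else if i = 1 then 3 else i + 1 with hup
  have h : ∀ i k : Fin n, i < k → ((typeE n).Adj i k ↔ (k : ℕ) = up i) := by
    intro i k hl
    have : (i : ℕ) < k := hl
    rw [typeE, SimpleGraph.fromRel_adj]
    simp only [hup]
    constructor
    · rintro ⟨_, h | h⟩ <;> split_ifs <;> omega
    · intro h; refine ⟨ne_of_lt hl, Or.inl ?_⟩
      split_ifs at h <;> omega
  have hupl : ∀ i, i < up i := fun i => by simp only [hup]; split_ifs <;> omega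
  refine ⟨par_of_up up h, 100, fun b i => ?_⟩
  have q : Q2 (typeE n) b = ∑ i ∈ Finset.range 8, (2 * ext b i ^ 2 - 2 * ext b i * ext b (up i)) := by
    rw [Q2_up up h hupl]
    refine Finset.sum_subset (Finset.range_subset_range.2 (by omega)) fun k _ hk => ?_
    rw [ext_ge b (by simpa using hk)]; ring
  have e8 : ext b 8 = 0 := ext_ge b (by omega)
  simp only [Finset.sum_range_succ, Finset.sum_range_zero, hup] at q
  norm_num [e8] at q
  have B := E8_bound (ext b 0) (ext b 1) (ext b 2) (ext b 3) (ext b 4) (ext b 5) (ext b 6) (ext b 7)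
  have hs : ext b i ^ 2 ≤ ∑ k ∈ Finset.range 8, ext b k ^ 2 :=
    Finset.single_le_sum (f := fun k => ext b k ^ 2) (fun _ _ => sq_nonneg _)
      (Finset.mem_range.2 (by omega))
  simp only [Finset.sum_range_succ, Finset.sum_range_zero] at hs
  rw [← ext_fin b i, q]
  linarith

end Graphs
end BMWaux

/-! ### The special fibre -/
namespace BMWaux
section Fibre
variable {n : ℕ} {C : Type*} [Ring C]

/-- relations in the special fibre -/
structure Fib (Q : SimpleGraph (Fin n)) (g f : Fin n → C) : Prop where
  g2 : ∀ i, g i * g i = 1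
  comm : ∀ i j, i ≠ j → ¬ Q.Adj i j → g i * g j = g j * g i
  braid : ∀ i j, Q.Adj i j → g i * (g j * g i) = g j * (g i * g j)
  gf : ∀ i, g i * f i = f i
  fg : ∀ i, f i * g i = f i
  ff : ∀ i, f i * f i = f i
  swap : ∀ i j, Q.Adj i j → g j * (g i * f j) = f i * (g j * g i)
  fgc : ∀ i j, i ≠ j → ¬ Q.Adj i j → f i * g j = g j * f i
  ffc : ∀ i j, i ≠ j → ¬ Q.Adj i j → f i * f j = f j * f i
  ff0 : ∀ i j, Q.Adj i j → f i * f j = 0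
  fgf : ∀ i j, Q.Adj i j → f i * (g j * f i) = 0

variable {Q : SimpleGraph (Fin n)} {g f : Fin n → C}

lemma Fib.g2' (h : Fib Q g f) (i : Fin n) (x : C) : g i * (g i * x) = x := by
  rw [← mul_assoc, h.g2, one_mul]

lemma exists_phi (hQ : Good Q) (g f : Fin n → C) : ∃ φ : (Fin n → ℤ) → C,
    (∀ k, φ (sr k) = f k) ∧ ∀ b, IsRoot Q Finset.univ b → (∀ k, b ≠ sr k) →
      ∃ k, cc Q k b = 1 ∧ φ b = g k * (φ (b - sr k) * g k) := by
  obtain ⟨w, h1, h2⟩ := exists_w (A := Module.End ℤ C) Finset.univ hQ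
    (fun k => LinearMap.mulLeft ℤ (g k) * LinearMap.mulRight ℤ (g k))
    (fun k => LinearMap.mulLeft ℤ (f k))
  refine ⟨fun b => w b 1, fun k => ?_, fun b hb hns => ?_⟩
  · simp [h1]
  · obtain ⟨k, _, hc, he⟩ := h2 b hb hns
    exact ⟨k, hc, by simp [he, Module.End.mul_apply]⟩

/-- conjugated idempotents -/
structure Phi (Q : SimpleGraph (Fin n)) (g f : Fin n → C) (φ : (Fin n → ℤ) → C) : Prop where
  good : Good Q
  fib : Fib Q g f
  s : ∀ k, φ (sr k) = f k
  r : ∀ b, IsRoot Q Finset.univ b → (∀ k, b ≠ sr k) →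
      ∃ k, cc Q k b = 1 ∧ φ b = g k * (φ (b - sr k) * g k)

variable {φ : (Fin n → ℤ) → C}

lemma Phi.UO (H : Phi Q g f φ) : ∀ (d : ℕ) (b : Fin n → ℤ), ht b ≤ d → IsRoot Q Finset.univ b →
    (∀ i, cc Q i b = 1 → φ b = g i * (φ (b - sr i) * g i)) ∧
    (∀ i, cc Q i b = 0 → g i * φ b = φ b * g i) := by
  have h := H.fib
  have hQ := H.good
  intro d
  induction d with
  | zero => intro b hd hb; have := hb.ht_pos; omega
  | succ d ih =>
  intro b hd hb
  by_cases hsr : ∃ k, b = sr k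
  · obtain ⟨k, rfl⟩ := hsr
    refine ⟨fun i hc => absurd hc (cc_sr_ne_one _ _), fun i hc => ?_⟩
    have hne : i ≠ k := by rintro rfl; rw [cc_sr_self] at hc; omega
    have ha : ¬ Q.Adj i k := fun ha => by rw [cc_sr_adj Q ha] at hc; omega
    rw [H.s]
    exact (h.fgc k i hne.symm (fun h' => ha h'.symm)).symm
  push Not at hsr
  obtain ⟨k, hck, hw⟩ := H.r b hb hsr
  have rk := hb.sub hck
  push_cast at hd
  obtain ⟨uk, ok⟩ := ih _ (by rw [ht_sub, ht_sr]; omega) rk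
  have hO : ∀ i, cc Q i b = 0 → g i * φ b = φ b * g i := by
    intro i hc
    have hik : i ≠ k := by rintro rfl; omega
    rw [hw]
    by_cases ha : Q.Adj i k
    · have c1 : cc Q i (b - sr k) = 1 := by rw [cc_sub, cc_sr_adj Q ha]; omega
      have r2 := rk.sub c1
      have o2 := (ih _ (by rw [ht_sub, ht_sub, ht_sr, ht_sr]; omega) r2).2 k (by
        rw [cc_sub, cc_sub, cc_sr_self, cc_sr_adj Q ha.symm]; omega)
      rw [uk i c1]
      have br := h.braid i k ha
      generalize φ (b - sr k - sr i) = y at o2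
      calc g i * (g k * (g i * (y * g i) * g k)) = (g i * (g k * g i)) * (y * (g i * g k)) := by
            simp only [mul_assoc]
        _ = g k * (g i * (g k * y)) * (g i * g k) := by rw [br]; simp only [mul_assoc]
        _ = g k * (g i * (y * (g k * (g i * g k)))) := by rw [o2]; simp only [mul_assoc]
        _ = _ := by rw [← br]; simp only [mul_assoc]
    · have c := h.comm i k hik ha
      have oi := ok i (by rw [cc_sub, cc_sr_nadj Q hik ha]; omega)
      generalize φ (b - sr k) = y at oi
      calc g i * (g k * (y * g k)) = (g i * g k) * (y * g k) := by simp only [mul_assoc]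
        _ = g k * ((g i * y) * g k) := by rw [c]; simp only [mul_assoc]
        _ = g k * (y * (g i * g k)) := by rw [oi]; simp only [mul_assoc]
        _ = _ := by rw [c]; simp only [mul_assoc]
  refine ⟨fun i hci => ?_, hO⟩
  by_cases hik : i = k
  · subst hik; exact hw
  have ri := hb.sub hci
  obtain ⟨ui, _⟩ := ih _ (by rw [ht_sub, ht_sr]; omega) ri
  by_cases ha : Q.Adj i k
  · have hbe := hb.eq_of_adj hQ ha hci hck
    have e1 : b - sr i = sr k := by rw [hbe]; abel
    have e2 : b - sr k = sr i := by rw [hbe]; abel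
    rw [hw, e1, e2, H.s, H.s]
    have s1 := h.swap i k ha
    calc g k * (f i * g k) = g k * (f i * (g k * (g i * g i))) := by rw [h.g2, mul_one]
      _ = g k * ((f i * (g k * g i)) * g i) := by simp only [mul_assoc]
      _ = g k * (g k * (g i * (f k * g i))) := by rw [← s1]; simp only [mul_assoc]
      _ = _ := h.g2' k _
  · have aki : ¬ Q.Adj k i := fun h => ha h.symm
    have u1 := uk i (by rw [cc_sub, cc_sr_nadj Q hik ha]; omega)
    have u2 := ui k (by rw [cc_sub, cc_sr_nadj Q (Ne.symm hik) aki]; omega)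
    rw [hw, u1, u2, show b - sr i - sr k = b - sr k - sr i by abel]
    have c := h.comm i k hik ha
    generalize φ (b - sr k - sr i) = y
    calc g k * (g i * (y * g i) * g k) = (g k * g i) * (y * (g i * g k)) := by
          simp only [mul_assoc]
      _ = _ := by rw [← c]; simp only [mul_assoc]; rw [c]

lemma Phi.U (H : Phi Q g f φ) {b : Fin n → ℤ} (hb : IsRoot Q Finset.univ b) {i : Fin n}
    (hc : cc Q i b = 1) : φ b = g i * (φ (b - sr i) * g i) :=
  (H.UO _ b (Int.self_le_toNat _) hb).1 i hc
lemma Phi.O (H : Phi Q g f φ) {b : Fin n → ℤ} (hb : IsRoot Q Finset.univ b) {i : Fin n}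
    (hc : cc Q i b = 0) : g i * φ b = φ b * g i :=
  (H.UO _ b (Int.self_le_toNat _) hb).2 i hc

/-- conjugation permutes the `φ` -/
lemma Phi.conj (H : Phi Q g f φ) {b : Fin n → ℤ} (hb : IsRoot Q Finset.univ b) (i : Fin n) :
    ∃ b', IsRoot Q Finset.univ b' ∧ g i * (φ b * g i) = φ b' := by
  by_cases hs : b = sr i
  · subst hs
    exact ⟨_, hb, by rw [H.s, H.fib.fg, H.fib.gf]⟩
  have h1 := hb.cc_lt H.good hs
  have h2 := hb.neg_one_le_cc H.good i
  obtain hc | hc | hc : cc Q i b = 1 ∨ cc Q i b = 0 ∨ cc Q i b = -1 := by omega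
  · refine ⟨_, hb.sub hc, ?_⟩
    rw [H.U hb hc, mul_assoc, mul_assoc, H.fib.g2, mul_one, H.fib.g2']
  · refine ⟨b, hb, ?_⟩
    rw [← mul_assoc, H.O hb hc, mul_assoc, H.fib.g2, mul_one]
  · have r := hb.add (Finset.mem_univ i) hc
    refine ⟨_, r, ?_⟩
    have := H.U r (i := i) (by rw [cc_add, cc_sr_self]; omega)
    rw [this, show b + sr i - sr i = b by abel]

lemma Phi.f_comm (H : Phi Q g f φ) : ∀ (d : ℕ) (b : Fin n → ℤ), ht b ≤ d →
    IsRoot Q Finset.univ b → φ b * φ b = φ b ∧ ∀ i, f i * φ b = φ b * f i := by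
  have h := H.fib
  have hQ := H.good
  intro d
  induction d with
  | zero => intro b hd hb; have := hb.ht_pos; omega
  | succ d ih =>
  intro b hd hb
  push_cast at hd
  by_cases hsr : ∃ k, b = sr k
  · obtain ⟨k, rfl⟩ := hsr
    rw [H.s]
    refine ⟨h.ff k, fun i => ?_⟩
    by_cases hik : i = k
    · rw [hik]
    by_cases ha : Q.Adj i k
    · rw [h.ff0 i k ha, h.ff0 k i ha.symm]
    · exact h.ffc i k hik ha
  push Not at hsr
  obtain ⟨k, hck, hw⟩ := H.r b hb hsr
  have rk := hb.sub hck
  obtain ⟨ek, ck⟩ := ih _ (by rw [ht_sub, ht_sr]; omega) rk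
  rw [hw]
  constructor
  · calc g k * (φ (b - sr k) * g k) * (g k * (φ (b - sr k) * g k))
        = g k * (φ (b - sr k) * (g k * (g k * (φ (b - sr k) * g k)))) := by simp only [mul_assoc]
      _ = _ := by rw [h.g2', ← mul_assoc (φ _), ek]
  intro i
  by_cases hik : i = k
  · subst hik
    have c := ck i
    calc f i * (g i * (φ (b - sr i) * g i)) = (f i * g i) * φ (b - sr i) * g i := by
          simp only [mul_assoc]
      _ = φ (b - sr i) * f i := by rw [h.fg, c, mul_assoc, h.fg]
      _ = (g i * f i) * φ (b - sr i) := by rw [h.gf, c]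
      _ = g i * (φ (b - sr i) * (g i * f i)) := by rw [mul_assoc, c, h.gf]
      _ = _ := by simp only [mul_assoc]
  by_cases ha : Q.Adj i k
  · have key : ∀ y, f k * y = y * f k → f i * (g k * (g i * (y * (g i * g k)))) =
        g k * (g i * (y * (g i * g k))) * f i := by
      intro y hy
      have s1 := h.swap i k ha
      have s2 := h.swap k i ha.symm
      calc f i * (g k * (g i * (y * (g i * g k)))) = f i * (g k * g i) * (y * (g i * g k)) := by
            simp only [mul_assoc]
        _ = g k * (g i * ((f k * y) * (g i * g k))) := by rw [← s1]; simp only [mul_assoc]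
        _ = g k * (g i * (y * (f k * (g i * g k)))) := by rw [hy]; simp only [mul_assoc]
        _ = _ := by rw [← s2]; simp only [mul_assoc]
    have hle := hb.cc_lt hQ (hsr i)
    have hge := hb.neg_one_le_cc hQ i
    have c0 : cc Q i (b - sr k) = cc Q i b + 1 := by rw [cc_sub, cc_sr_adj Q ha]; omega
    obtain h1 | h1 | h1 : cc Q i b = 1 ∨ cc Q i b = 0 ∨ cc Q i b = -1 := by omega
    · have hbe := hb.eq_of_adj hQ ha h1 hck
      rw [show b - sr k = sr i by rw [hbe]; abel, H.s]
      have z := h.fgf i k ha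
      calc f i * (g k * (f i * g k)) = f i * (g k * f i) * g k := by simp only [mul_assoc]
        _ = g k * (f i * (g k * f i)) := by rw [z, mul_zero, zero_mul]
        _ = _ := by simp only [mul_assoc]
    · have c1 : cc Q i (b - sr k) = 1 := by omega
      have r2 := rk.sub c1
      have := key _ ((ih _ (by rw [ht_sub, ht_sub, ht_sr, ht_sr]; omega) r2).2 k)
      rw [H.U rk c1]
      simpa only [mul_assoc] using this
    · have := key _ (ck k)
      have o := H.O rk (i := i) (by omega)
      have e : φ (b - sr k) * g k = g i * (φ (b - sr k) * (g i * g k)) := by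
        rw [← mul_assoc (φ _), ← o, mul_assoc, h.g2']
      rw [e]; exact this
  · have c := h.fgc i k hik ha
    have c2 := ck i
    calc f i * (g k * (φ (b - sr k) * g k)) = (f i * g k) * (φ (b - sr k) * g k) := by
          simp only [mul_assoc]
      _ = g k * ((f i * φ (b - sr k)) * g k) := by rw [c]; simp only [mul_assoc]
      _ = g k * (φ (b - sr k) * (f i * g k)) := by rw [c2]; simp only [mul_assoc]
      _ = _ := by rw [c]; simp only [mul_assoc]

lemma Phi.idem (H : Phi Q g f φ) {b : Fin n → ℤ} (hb : IsRoot Q Finset.univ b) :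
    φ b * φ b = φ b := (H.f_comm _ b (Int.self_le_toNat _) hb).1

lemma Phi.comm (H : Phi Q g f φ) : ∀ (d : ℕ) (a b : Fin n → ℤ), ht a ≤ d →
    IsRoot Q Finset.univ a → IsRoot Q Finset.univ b → φ a * φ b = φ b * φ a := by
  have h := H.fib
  intro d
  induction d with
  | zero => intro a b hd hb; have := hb.ht_pos; omega
  | succ d ih =>
  intro a b hd ha hb
  push_cast at hd
  by_cases hsr : ∃ k, a = sr k
  · obtain ⟨k, rfl⟩ := hsr
    rw [H.s]
    exact (H.f_comm _ b (Int.self_le_toNat _) hb).2 k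
  push Not at hsr
  obtain ⟨k, hck, hw⟩ := H.r a ha hsr
  obtain ⟨b', hb', he⟩ := H.conj hb k
  have e2 : φ b = g k * (φ b' * g k) := by
    rw [← he, mul_assoc, mul_assoc, h.g2, mul_one, h.g2']
  have c := ih (a - sr k) b' (by rw [ht_sub, ht_sr]; omega) (ha.sub hck) hb'
  have e3 : ∀ x y, g k * (x * g k) * (g k * (y * g k)) = g k * (x * y * g k) := by
    intro x y
    simp only [mul_assoc]
    rw [h.g2']
  rw [hw, e2, e3, e3, c]

end Fibre

section FibreSS
universe u
variable {n : ℕ} {k : Type*} [Field k] [CharZero k] {C : Type*} [Ring C] [Algebra k C]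
variable {Q : SimpleGraph (Fin n)} {g f : Fin n → C}

/-- unit from an involution -/
def invUnit (x : C) (h : x * x = 1) : Cˣ := ⟨x, x, h, h⟩

lemma refl_sq {f : C} (h : f * f = f) : (1 - 2 * f) * (1 - 2 * f) = 1 := by
  have : (1 - 2 * f) * (1 - 2 * f) = 1 - 4 * f + 4 * (f * f) := by noncomm_ring
  rw [this, h]; abel

theorem Fib.semisimple (hQ : Good Q) (h : Fib Q g f)
    (htop : Algebra.adjoin k (Set.range g ∪ Set.range f) = ⊤) : IsSemisimpleRing C := by
  classical
  obtain ⟨φ, hφ1, hφ2⟩ := exists_phi hQ g f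
  have H : Phi Q g f φ := ⟨hQ, h, hφ1, hφ2⟩
  let G : Fin n → Cˣ := fun i => invUnit (g i) (h.g2 i)
  have hGsq : ∀ i, G i * G i = 1 := fun i => Units.ext (h.g2 i)
  let R := {b : Fin n → ℤ // IsRoot Q Finset.univ b}
  have : Finite R := hQ.finite_roots (S := Finset.univ)
  let t : R → Cˣ := fun b => invUnit (1 - 2 * φ b.1) (refl_sq (H.idem b.2))
  have htsq : ∀ b, t b * t b = 1 := fun b => Units.ext (refl_sq (H.idem b.2))
  have htc : ∀ a b, t a * t b = t b * t a := by
    intro a b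
    refine Units.ext ?_
    have c := H.comm _ a.1 b.1 (Int.self_le_toNat _) a.2 b.2
    change (1 - 2 * φ a.1) * (1 - 2 * φ b.1) = (1 - 2 * φ b.1) * (1 - 2 * φ a.1)
    have e : ∀ x y : C, (1 - 2 * x) * (1 - 2 * y) = 1 - 2 * x - 2 * y + 4 * (x * y) := by
      intro x y; noncomm_ring
    rw [e, e, c]; abel
  have htg : ∀ i b, ∃ b', G i * t b * (G i)⁻¹ = t b' := by
    intro i b
    obtain ⟨b', hb', he⟩ := H.conj b.2 i
    refine ⟨⟨b', hb'⟩, Units.ext ?_⟩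
    change g i * (1 - 2 * φ b.1) * g i = 1 - 2 * φ b'
    rw [← he]
    have : g i * (1 - 2 * φ b.1) * g i = g i * g i - 2 * (g i * (φ b.1 * g i)) := by noncomm_ring
    rw [this, h.g2]
  let D : Subgroup Cˣ := Subgroup.closure (Set.range t)
  have hDfin : Finite D := by
    letI : CommGroup D := Subgroup.closureCommGroupOfComm (by
      rintro _ ⟨a, rfl⟩ _ ⟨b, rfl⟩; exact htc a b)
    have hfg : Group.FG D := by
      rw [Group.fg_iff_subgroup_fg, Subgroup.fg_iff]
      exact ⟨_, rfl, Set.finite_range t⟩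
    have htor : Monoid.IsTorsion D := by
      have : ∀ x ∈ D, x * x = 1 := by
        intro x hx
        induction hx using Subgroup.closure_induction with
        | mem x hx => obtain ⟨b, rfl⟩ := hx; exact htsq b
        | one => simp
        | mul x y hx hy h1 h2 =>
          have hc : x * y = y * x := by
            have := mul_comm (⟨x, hx⟩ : D) ⟨y, hy⟩
            exact congrArg Subtype.val this
          calc x * y * (x * y) = x * (y * x) * y := by simp only [mul_assoc]
            _ = (x * x) * (y * y) := by rw [← hc]; simp only [mul_assoc]
            _ = 1 := by rw [h1, h2, one_mul]
        | inv x _ h1 => rw [← mul_inv_rev, h1, inv_one]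
      intro x
      rw [isOfFinOrder_iff_pow_eq_one]
      exact ⟨2, by norm_num, Subtype.ext (by rw [pow_two]; exact this x.1 x.2)⟩
    exact CommGroup.finite_of_fg_torsion D htor
  have hDn : ∀ i, ∀ x ∈ D, G i * x * (G i)⁻¹ ∈ D := by
    intro i x hx
    induction hx using Subgroup.closure_induction with
    | mem x hx =>
      obtain ⟨b, rfl⟩ := hx
      obtain ⟨b', he⟩ := htg i b
      rw [he]; exact Subgroup.subset_closure ⟨b', rfl⟩
    | one => rw [mul_one, mul_inv_cancel]; exact D.one_mem
    | mul x y _ _ h1 h2 =>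
      have := D.mul_mem h1 h2
      convert this using 1
      group
    | inv x _ h1 =>
      have := D.inv_mem h1
      convert this using 1
      group
  obtain ⟨W, hW, h1W, hWcl⟩ := finite_closed hQ G n Finset.univ (by simp)
    ⟨fun i _ j _ hne ha => Units.ext (h.comm i j hne ha),
      fun i _ j _ ha => Units.ext (h.braid i j ha)⟩ (fun i _ => hGsq i)
  let s : Fin n → Cˣ := fun i => t ⟨sr i, isRoot_sr (Finset.mem_univ i)⟩
  have hs : ∀ i, ((s i : Cˣ) : C) = 1 - 2 * f i := fun i => by
    change 1 - 2 * φ (sr i) = _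
    rw [H.s]
  let Γ : Subgroup Cˣ := Subgroup.closure (Set.range G ∪ Set.range s)
  have hΓfin : Finite Γ := by
    have hfin : (Set.image2 (· * ·) (D : Set Cˣ) W).Finite :=
      Set.Finite.image2 _ (Set.toFinite _) hW
    refine hfin.subset ?_
    have hG : ∀ i, ∀ y ∈ Set.image2 (· * ·) (D : Set Cˣ) W,
        G i * y ∈ Set.image2 (· * ·) (D : Set Cˣ) W := by
      rintro i _ ⟨x, hx, w, hw, rfl⟩
      exact ⟨_, hDn i x hx, _, hWcl i (Finset.mem_univ i) w hw, by group⟩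
    have hS : ∀ i, ∀ y ∈ Set.image2 (· * ·) (D : Set Cˣ) W,
        s i * y ∈ Set.image2 (· * ·) (D : Set Cˣ) W := by
      rintro i _ ⟨x, hx, w, hw, rfl⟩
      exact ⟨s i * x, D.mul_mem (Subgroup.subset_closure ⟨_, rfl⟩) hx, w, hw, by simp [mul_assoc]⟩
    intro x hx
    induction hx using Subgroup.closure_induction_left with
    | one => exact ⟨1, D.one_mem, 1, h1W, by simp⟩
    | mul_left x hx y _ ih =>
      rcases hx with ⟨i, rfl⟩ | ⟨i, rfl⟩
      exacts [hG i y ih, hS i y ih]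
    | inv_mul_cancel x hx y _ ih =>
      rcases hx with ⟨i, rfl⟩ | ⟨i, rfl⟩
      · rw [inv_eq_of_mul_eq_one_left (hGsq i)]; exact hG i y ih
      · rw [inv_eq_of_mul_eq_one_left (htsq _)]; exact hS i y ih
  let ψ : MonoidAlgebra k Γ →ₐ[k] C :=
    MonoidAlgebra.lift k C Γ ((Units.coeHom C).comp Γ.subtype)
  have hψ : Function.Surjective ψ := by
    rw [← AlgHom.range_eq_top, eq_top_iff, ← htop]
    refine Algebra.adjoin_le ?_
    have hmem : ∀ x ∈ Γ, (x : C) ∈ ψ.range := fun x hx =>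
      ⟨MonoidAlgebra.of k Γ ⟨x, hx⟩, by simp [ψ]⟩
    rintro _ (⟨i, rfl⟩ | ⟨i, rfl⟩)
    · exact hmem (G i) (Subgroup.subset_closure (Or.inl ⟨i, rfl⟩))
    · have h1 := hmem (s i) (Subgroup.subset_closure (Or.inr ⟨i, rfl⟩))
      rw [hs] at h1
      have h2 := ψ.range.smul_mem (ψ.range.sub_mem ψ.range.one_mem h1) (2⁻¹ : k)
      have h3 : (2⁻¹ : k) • (1 - (1 - 2 * f i)) = f i := by
        rw [sub_sub_cancel, two_mul, ← two_smul k, smul_smul, inv_mul_cancel₀ two_ne_zero, one_smul]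
      rwa [h3] at h2
  have : NeZero (Nat.card Γ : k) := ⟨by
    rw [Nat.cast_ne_zero]; exact Nat.card_pos.ne'⟩
  exact RingHom.isSemisimpleRing_of_surjective (ψ : MonoidAlgebra k Γ →+* C) hψ

end FibreSS
end BMWaux

/-! ### Lifting semisimplicity from the special fibre -/
namespace BMWaux
section Lift
open TensorProduct
variable {V : Type*} [CommRing V] [IsDomain V] [ValuationRing V]
variable {K : Type*} [Field K] [Algebra V K] [IsFractionRing V K]
variable {B : Type*} [Ring B] [Algebra K B] [Algebra V B] [IsScalarTower V K B]

lemma scale_mem (Bv : Subalgebra V B) (hspan : Submodule.span K (Bv : Set B) = ⊤) (x : B) :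
    ∃ v : V, v ≠ 0 ∧ v • x ∈ Bv := by
  have hx : x ∈ Submodule.span K (Bv : Set B) := by rw [hspan]; trivial
  induction hx using Submodule.span_induction with
  | mem x hx => exact ⟨1, one_ne_zero, by rw [one_smul]; exact hx⟩
  | zero => exact ⟨1, one_ne_zero, by rw [smul_zero]; exact Bv.zero_mem⟩
  | add x y _ _ h1 h2 =>
    obtain ⟨v, hv, hvx⟩ := h1
    obtain ⟨w, hw, hwy⟩ := h2
    refine ⟨v * w, mul_ne_zero hv hw, ?_⟩
    rw [smul_add, mul_comm v w, mul_smul, mul_comm w v, mul_smul]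
    exact Bv.add_mem (Bv.smul_mem hvx _) (Bv.smul_mem hwy _)
  | smul c x _ h =>
    obtain ⟨v, hv, hvx⟩ := h
    obtain ⟨a, b, hb, rfl⟩ := IsFractionRing.div_surjective (A := V) c
    have hb0 : b ≠ 0 := nonZeroDivisors.ne_zero hb
    have hb1 : algebraMap V K b ≠ 0 := by
      simpa using hb0
    refine ⟨b * v, mul_ne_zero hb0 hv, ?_⟩
    have : (b * v) • (algebraMap V K a / algebraMap V K b) • x = a • v • x := by
      rw [← algebraMap_smul K (b * v), ← algebraMap_smul K a, ← algebraMap_smul K v, smul_smul,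
        smul_smul, map_mul]
      congr 1
      field_simp
    rw [this]
    exact Bv.smul_mem hvx _

theorem lift_semisimple (Bv : Subalgebra V B) (hfg : (Subalgebra.toSubmodule Bv).FG)
    (hspan : Submodule.span K (Bv : Set B) = ⊤)
    (hss : IsSemisimpleRing (IsLocalRing.ResidueField V ⊗[V] Bv)) : IsSemisimpleRing B := by
  classical
  have hinj : Function.Injective (algebraMap V K) := IsFractionRing.injective V K
  have hfin : Module.Finite K B := by
    obtain ⟨s, hs⟩ := hfg
    refine ⟨⟨s, ?_⟩⟩
    rw [eq_top_iff, ← hspan, Submodule.span_le]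
    intro x hx
    have hx' : x ∈ Submodule.span V (s : Set B) := by rw [hs]; exact hx
    exact Submodule.span_le_restrictScalars V K _ hx'
  have hart : IsArtinianRing B := IsArtinianRing.of_finite K B
  have hMf : Module.Finite V Bv := Module.Finite.iff_fg.2 hfg
  have htf : Module.IsTorsionFree V Bv := by
    refine Module.IsTorsionFree.of_smul_eq_zero fun r y h => ?_
    have h' : algebraMap V K r • (y : B) = 0 := by
      rw [algebraMap_smul]; exact congrArg Subtype.val h
    rcases smul_eq_zero.1 h' with h1 | h1
    · left; exact hinj (by rw [h1, map_zero])
    · right; exact Subtype.ext h1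
  have hflat : Module.Flat V Bv := by
    rw [Module.Flat.flat_iff_torsion_eq_bot_of_isBezout, ← Submodule.isTorsionFree_iff_torsion_eq_bot]
    exact htf
  have hfree : Module.Free V Bv := Module.free_of_flat_of_isLocalRing
  let b := Module.Free.chooseBasis V Bv
  let k := IsLocalRing.ResidueField V
  let π : Bv →ₐ[V] k ⊗[V] Bv := Algebra.TensorProduct.includeRight
  have hπs : Function.Surjective π := by
    intro c
    induction c using TensorProduct.induction_on with
    | zero => exact ⟨0, map_zero _⟩
    | tmul a y =>
      obtain ⟨v, rfl⟩ := IsLocalRing.residue_surjective a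
      refine ⟨v • y, ?_⟩
      change (1 : k) ⊗ₜ[V] (v • y) = _
      rw [← TensorProduct.smul_tmul, Algebra.smul_def, mul_one]
      rfl
    | add x y hx hy =>
      obtain ⟨x', rfl⟩ := hx
      obtain ⟨y', rfl⟩ := hy
      exact ⟨x' + y', map_add _ _ _⟩
  have hnil : ∀ x ∈ Ring.jacobson B, IsNilpotent x := by
    obtain ⟨N, hN⟩ := IsArtinianRing.isNilpotent_jacobson_bot (R := B)
    intro x hx
    rw [← Ideal.jacobson_bot] at hx
    refine ⟨N, ?_⟩
    have := Ideal.pow_mem_pow hx N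
    rw [hN] at this
    simpa using this
  have key : ∀ x : Bv, (x : B) ∈ Ring.jacobson B → π x = 0 := by
    intro x hx
    have : π x ∈ Ring.jacobson (k ⊗[V] Bv) := by
      rw [← Ideal.jacobson_bot, Ideal.mem_jacobson_iff]
      intro y
      obtain ⟨y, rfl⟩ := hπs y
      have h1 : IsNilpotent (y * x) := by
        obtain ⟨N, hN⟩ := hnil ((y : B) * x) (Ideal.mul_mem_left _ _ hx)
        refine ⟨N, Subtype.ext ?_⟩
        push_cast
        exact hN
      obtain ⟨u, hu⟩ := h1.isUnit_one_add
      refine ⟨π ↑u⁻¹, ?_⟩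
      rw [Ideal.mem_bot, ← map_mul, ← map_mul, ← map_add, ← map_one π, ← map_sub]
      have : (↑u⁻¹ : Bv) * y * x + ↑u⁻¹ - 1 = ↑u⁻¹ * (1 + y * x) - 1 := by
        noncomm_ring
      rw [this, ← hu, Units.inv_mul, sub_self, map_zero]
    rw [IsSemisimpleRing.jacobson_eq_bot] at this
    exact this
  rw [IsArtinianRing.isSemisimpleRing_iff_jacobson, eq_bot_iff]
  intro x0 hx0
  by_contra hne
  have hne : x0 ≠ 0 := hne
  have hKmem : ∀ (c : K) (y : B), y ∈ Ring.jacobson B → c • y ∈ Ring.jacobson B := by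
    intro c y hy
    rw [Algebra.smul_def]
    exact Ideal.mul_mem_left _ _ hy
  obtain ⟨v, hv, hvx⟩ := scale_mem (K := K) Bv hspan x0
  let x : Bv := ⟨v • x0, hvx⟩
  have hxN : (x : B) ∈ Ring.jacobson B := by
    change v • x0 ∈ _
    rw [← algebraMap_smul K v]; exact hKmem _ _ hx0
  have hx : x ≠ 0 := by
    intro h
    have h' : algebraMap V K v • x0 = 0 := by
      rw [algebraMap_smul]; exact congrArg Subtype.val h
    rcases smul_eq_zero.1 h' with h1 | h1
    · exact hv (hinj (by rw [h1, map_zero]))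
    · exact hne h1
  -- choose the coefficient of smallest valuation
  have hmin : ∀ s : Finset (Module.Free.ChooseBasisIndex V Bv), s.Nonempty →
      ∃ i ∈ s, ∀ j ∈ s, b.repr x i ∣ b.repr x j := by
    intro s hs
    induction hs using Finset.Nonempty.cons_induction with
    | singleton a => exact ⟨a, by simp, by simp⟩
    | cons a s ha hs ih =>
      obtain ⟨i, hi, hd⟩ := ih
      rcases ValuationRing.dvd_total (b.repr x i) (b.repr x a) with h | h
      · refine ⟨i, by simp [hi], fun j hj => ?_⟩
        rcases Finset.mem_cons.1 hj with rfl | hj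
        exacts [h, hd j hj]
      · refine ⟨a, by simp, fun j hj => ?_⟩
        rcases Finset.mem_cons.1 hj with rfl | hj
        exacts [dvd_rfl, h.trans (hd j hj)]
  have hne' : (Finset.univ : Finset (Module.Free.ChooseBasisIndex V Bv)).Nonempty := by
    by_contra h
    rw [Finset.not_nonempty_iff_eq_empty] at h
    apply hx
    rw [← b.sum_repr x, h, Finset.sum_empty]
  obtain ⟨i, -, hi⟩ := hmin _ hne'
  have hi0 : b.repr x i ≠ 0 := by
    intro h
    apply hx
    rw [← b.sum_repr x]
    refine Finset.sum_eq_zero fun j _ => ?_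
    have := hi j (Finset.mem_univ _)
    rw [h, zero_dvd_iff] at this
    rw [this, zero_smul]
  choose q hq using fun j => hi j (Finset.mem_univ _)
  let y : Bv := ∑ j, q j • b j
  have hxy : x = b.repr x i • y := by
    rw [Finset.smul_sum]
    conv_lhs => rw [← b.sum_repr x]
    refine Finset.sum_congr rfl fun j _ => ?_
    rw [smul_smul, ← hq]
  have hqi : q i = 1 := by
    have := hq i
    exact (mul_left_cancel₀ hi0 (by rw [mul_one]; exact this)).symm
  have hyi : b.repr y i = 1 := by
    rw [← hqi, b.repr_sum_self]
  have hyN : (y : B) ∈ Ring.jacobson B := by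
    have h1 : (x : B) = algebraMap V K (b.repr x i) • (y : B) := by
      rw [algebraMap_smul]; exact congrArg Subtype.val hxy
    have h2 : algebraMap V K (b.repr x i) ≠ 0 := fun h => hi0 (hinj (by rw [h, map_zero]))
    have h3 : (y : B) = (algebraMap V K (b.repr x i))⁻¹ • (x : B) := by
      rw [h1, smul_smul, inv_mul_cancel₀ h2, one_smul]
    rw [h3]; exact hKmem _ _ hxN
  have h0 := key y hyN
  have h1 : (Algebra.TensorProduct.basis k b).repr (π y) i = 1 := by
    change (Algebra.TensorProduct.basis k b).repr ((1 : k) ⊗ₜ[V] y) i = 1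
    rw [Algebra.TensorProduct.basis_repr_tmul]
    simp [hyi]
  rw [h0] at h1
  simp at h1

end Lift
end BMWaux

/-! ### The special fibre of the integral form -/
namespace BMWaux
section FibreMain
open TensorProduct
variable {V : Type*} [CommRing V] [IsDomain V] [ValuationRing V]
variable {K : Type*} [Field K] [Algebra V K] [IsFractionRing V K]
variable {B : Type*} [Ring B] [Algebra K B] [Algebra V B] [IsScalarTower V K B]

variable (V) in
/-- elements of the maximal ideal of `V` -/
def IsMax (c : K) : Prop := ∃ v ∈ IsLocalRing.maximalIdeal V, algebraMap V K v = c

lemma IsMax.mul {a b : K} (ha : IsMax V a) (hb : IsInt V b) : IsMax V (a * b) := by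
  obtain ⟨x, hx, rfl⟩ := ha; obtain ⟨y, rfl⟩ := hb
  exact ⟨x * y, Ideal.mul_mem_right _ _ hx, map_mul _ _ _⟩

/-- the unital integral form -/
def genAlg (V : Type*) [CommRing V] {K : Type*} [Field K] {B : Type*} [Ring B] [Algebra K B]
    [Algebra V B] [Algebra V K] [IsScalarTower V K B] {n : ℕ} (P : Par K) (g : Fin n → B) : Subalgebra V B :=
  (gen V P Finset.univ 1 g).toSubalgebra o_mem_gen

variable {n : ℕ} {Q : SimpleGraph (Fin n)} {P : Par K} {g : Fin n → B}

theorem semisimple_of_sys [CharZero (IsLocalRing.ResidueField V)] (hQ : Good Q) (hI : IntPar V P)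
    (hl : IsMax V (P.l⁻¹ - 1)) (hm : IsMax V P.m) (hmd : IsMax V (P.m * P.d)) (hd : IsMax V P.d⁻¹)
    (h : Sys P Q Finset.univ 1 g)
    (hgen : Algebra.adjoin K (Set.range g ∪ Set.range fun i => P.F 1 (g i)) = ⊤) :
    IsSemisimpleRing B := by
  have hmem : ∀ x, x ∈ genAlg V P g ↔ x ∈ gen V P Finset.univ 1 g := fun x => Iff.rfl
  have hg : ∀ i, g i ∈ genAlg V P g := fun i => g_mem_gen (Finset.mem_univ i)
  have hF : ∀ i, P.F 1 (g i) ∈ genAlg V P g := fun i => F_mem_gen (Finset.mem_univ i)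
  refine lift_semisimple (K := K) (genAlg V P g) ?_ ?_ ?_
  · exact gen_fg hQ hI _ B Finset.univ 1 g le_rfl h
  · rw [eq_top_iff, ← Algebra.top_toSubmodule, ← hgen, Algebra.adjoin_eq_span, Submodule.span_le]
    intro x hx
    refine Submodule.subset_span ?_
    have : Submonoid.closure (Set.range g ∪ Set.range fun i => P.F 1 (g i)) ≤
        (genAlg V P g).toSubmonoid := by
      rw [Submonoid.closure_le]
      rintro _ (⟨i, rfl⟩ | ⟨i, rfl⟩)
      exacts [hg i, hF i]
    exact this hx
  let k := IsLocalRing.ResidueField V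
  let π : genAlg V P g →ₐ[V] k ⊗[V] genAlg V P g := Algebra.TensorProduct.includeRight
  let G : Fin n → genAlg V P g := fun i => ⟨g i, hg i⟩
  let F : Fin n → genAlg V P g := fun i => ⟨P.F 1 (g i), hF i⟩
  have hsm : ∀ (v : V) x, π (v • x) = IsLocalRing.residue V v • π x := by
    intro v x
    rw [map_smul, ← algebraMap_smul k v]
    rfl
  have h0 : ∀ v ∈ IsLocalRing.maximalIdeal V, ∀ x, π (v • x) = 0 := by
    intro v hv x
    rw [hsm, (IsLocalRing.residue_eq_zero_iff v).2 hv, zero_smul]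
  -- transfer of identities
  have tz : ∀ (c : K), IsMax V c → ∀ x y : genAlg V P g, (x : B) = c • (y : B) → π x = 0 := by
    rintro c ⟨v, hv, rfl⟩ x y hxy
    have : x = v • y := Subtype.ext (by rw [hxy, algebraMap_smul]; rfl)
    rw [this, h0 v hv]
  have tl : ∀ x y : genAlg V P g, (x : B) = P.l⁻¹ • (y : B) → π x = π y := by
    intro x y hxy
    have := tz _ hl (x - y) y (by rw [sub_smul, ← hxy, one_smul]; rfl)
    rwa [map_sub, sub_eq_zero] at this
  have te : ∀ x y : genAlg V P g, (x : B) = (y : B) → π x = π y :=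
    fun x y hxy => congrArg π (Subtype.ext hxy)
  have hmdl : IsMax V (P.m * P.d / P.l) := by rw [div_eq_mul_inv]; exact hmd.mul hI.li
  have hld : IsMax V (P.l / P.d) := by rw [div_eq_inv_mul]; exact hd.mul hI.l
  have u := Finset.mem_univ (α := Fin n)
  have hfib : Fib Q (fun i => π (G i)) (fun i => π (F i)) := by
    refine ⟨fun i => ?_, fun i j hne ha => ?_, fun i j ha => ?_, fun i => ?_, fun i => ?_,
      fun i => ?_, fun i j ha => ?_, fun i j hne ha => ?_, fun i j hne ha => ?_, fun i j ha => ?_,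
      fun i j ha => ?_⟩ <;> simp only [← map_mul]
    · obtain ⟨a, ha, ha'⟩ := hm
      obtain ⟨b, hb, hb'⟩ := hmdl
      have : G i * G i = 1 - a • G i + b • F i := by
        refine Subtype.ext ?_
        have := P.gg 1 (g i)
        rw [← hb', ← ha', algebraMap_smul, algebraMap_smul] at this
        exact this
      rw [this, map_add, map_sub, h0 a ha, h0 b hb, map_one, sub_zero, add_zero]
    · exact te _ _ (h.comm i (u i) j (u j) hne ha)
    · exact te _ _ (h.braid i (u i) j (u j) ha)
    · exact tl _ _ (h.gf i (u i))
    · exact tl _ _ (h.fg (u i))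
    · exact te _ _ (h.ff (u i))
    · exact te _ _ (h.swap (u i) (u j) ha)
    · exact te _ _ (h.fg_comm (u i) (u j) hne ha)
    · exact te _ _ (h.ff_comm (u i) (u j) hne ha)
    · exact tz _ hd _ (G j * (G i * F j)) (h.f_f (u i) (u j) ha)
    · exact tz _ hld _ (F i) (h.fgf i (u i) j (u j) ha)
  refine hfib.semisimple (k := k) hQ ?_
  set T := Algebra.adjoin k ((Set.range fun i => π (G i)) ∪ Set.range fun i => π (F i)) with hT
  have hTg : ∀ i, π (G i) ∈ T := fun i => Algebra.subset_adjoin (Or.inl ⟨i, rfl⟩)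
  have hTf : ∀ i, π (F i) ∈ T := fun i => Algebra.subset_adjoin (Or.inr ⟨i, rfl⟩)
  have hTπ : ∀ x, π x ∈ T := by
    rintro ⟨x, hx⟩
    have := gen_le (V := V) (P := P) (S := Finset.univ) (o := (1 : B)) (g := g)
      (C := (((T.restrictScalars V).comap π).map (genAlg V P g).val).toNonUnitalSubalgebra)
      ⟨1, Subalgebra.one_mem _, rfl⟩ (fun i _ => ⟨G i, hTg i, rfl⟩) (fun i _ => ⟨F i, hTf i, rfl⟩)
      x hx
    obtain ⟨y, hy, hyx⟩ := this
    have : y = ⟨x, hx⟩ := Subtype.ext hyx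
    rw [← this]
    exact hy
  rw [eq_top_iff]
  intro c _
  induction c using TensorProduct.induction_on with
  | zero => exact T.zero_mem
  | tmul a y =>
    have : a ⊗ₜ[V] y = a • π y := by
      change _ = a • ((1 : k) ⊗ₜ[V] y)
      rw [TensorProduct.smul_tmul', smul_eq_mul, mul_one]
    rw [this]
    exact T.smul_mem (hTπ y) a
  | add x y hx hy => exact T.add_mem (hx trivial) (hy trivial)

end FibreMain
end BMWaux

/-! ### The valuation ring and the final assembly -/
namespace BMWaux
section Val
open Polynomial

/-- the embedding `ℚ[t][X] → K`, `t ↦ δ⁻¹`, `X ↦ l` -/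
noncomputable def psi : ℚ[X][X] →+* BMWField :=
  (algebraMap (RatFunc ℚ)[X] (RatFunc (RatFunc ℚ))).comp
    (Polynomial.mapRingHom (Polynomial.aeval (R := ℚ) (RatFunc.X⁻¹ : RatFunc ℚ)).toRingHom)

lemma psi_inj : Function.Injective psi := by
  have h1 : Transcendental ℚ (RatFunc.X⁻¹ : RatFunc ℚ) := by
    intro h
    have h' := IsAlgebraic.inv_iff.1 h
    refine RatFunc.transcendental_X (K := ℚ) ?_
    convert h'
    exact Subsingleton.elim _ _
  have h2 : Function.Injective
      (Polynomial.aeval (R := ℚ) (RatFunc.X⁻¹ : RatFunc ℚ)).toRingHom :=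
    transcendental_iff_injective.1 h1
  exact (RatFunc.algebraMap_injective _).comp (Polynomial.map_injective _ h2)

lemma psi_X : psi X = lVar := by
  simp [psi, lVar]

lemma psi_t : psi (C X) = deltaVar⁻¹ := by
  simp [psi, deltaVar]

lemma exists_val : ∃ W : ValuationSubring BMWField, (∀ p, psi p ∈ W) ∧
    W.valuation (lVar - 1) < 1 ∧ W.valuation deltaVar⁻¹ < 1 := by
  let ev : ℚ[X][X] →+* ℚ := (Polynomial.evalRingHom 0).comp (Polynomial.evalRingHom 1)
  let e : ℚ[X][X] ≃+* psi.range :=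
    RingEquiv.ofBijective psi.rangeRestrict ⟨fun a b h => psi_inj (congrArg Subtype.val h),
      psi.rangeRestrict_surjective⟩
  let I : Ideal psi.range := (RingHom.ker ev).comap e.symm.toRingHom
  have hI : I ≠ ⊤ := by
    rw [Ne, Ideal.eq_top_iff_one]
    intro h
    have : ev (e.symm 1) = 0 := h
    rw [map_one, map_one] at this
    exact one_ne_zero this
  obtain ⟨W, h1, h2⟩ := Ideal.image_subset_nonunits_valuationSubring I hI
  have h3 : ∀ p, ev p = 0 → W.valuation (psi p) < 1 := by
    intro p hp
    refine h2 ⟨e p, ?_, rfl⟩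
    change ev (e.symm (e p)) = 0
    rw [e.symm_apply_apply, hp]
  refine ⟨W, fun p => h1 ⟨p, rfl⟩, ?_, ?_⟩
  · rw [← psi_X, ← map_one psi, ← map_sub]
    exact h3 _ (by simp [ev])
  · rw [← psi_t]
    exact h3 _ (by simp [ev])

lemma l_ne_zero : lVar ≠ 0 := RatFunc.X_ne_zero
lemma d_ne_zero : deltaVar ≠ 0 := by
  rw [deltaVar, Ne, map_eq_zero]; exact RatFunc.X_ne_zero

lemma l_sub_ne : lVar - lVar⁻¹ ≠ 0 := by
  intro h
  have h1 : (lVar - 1) * (lVar + 1) = 0 := by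
    have := l_ne_zero
    field_simp at h
    linear_combination h
  have ht : Transcendental (RatFunc ℚ) lVar := RatFunc.transcendental_X
  rcases mul_eq_zero.1 h1 with h2 | h2
  · exact ht (by rw [sub_eq_zero.1 h2]; exact isAlgebraic_one)
  · exact ht (by rw [eq_neg_of_add_eq_zero_left h2]; exact isAlgebraic_one.neg)

theorem exists_val_par : ∃ (W : ValuationSubring BMWField) (P : Par BMWField),
    P.l = lVar ∧ P.m = mVar ∧ P.d = deltaVar ∧ CharZero (IsLocalRing.ResidueField W) ∧
    IntPar W P ∧ IsMax W (P.l⁻¹ - 1) ∧ IsMax W P.m ∧ IsMax W (P.m * P.d) ∧ IsMax W P.d⁻¹ := by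
  obtain ⟨W, hW, hl, hd⟩ := exists_val
  set w := W.valuation with hw
  have l0 := l_ne_zero
  have d0 := d_ne_zero
  have wl : w lVar = 1 := by
    have := w.map_one_add_of_lt hl
    rwa [add_sub_cancel] at this
  have wli : w lVar⁻¹ = 1 := by rw [map_inv₀, wl, inv_one]
  have wd1 : w (1 - deltaVar⁻¹) = 1 := w.map_one_sub_of_lt hd
  have hd1 : 1 - deltaVar⁻¹ ≠ 0 := fun h => by rw [h, map_zero] at wd1; exact zero_ne_one wd1
  have hd2 : 1 - deltaVar ≠ 0 := fun h => by
    apply hd1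
    rw [← sub_eq_zero.1 h]; simp
  have wll : w (lVar - lVar⁻¹) < 1 := by
    have : lVar - lVar⁻¹ = (lVar - 1) * (lVar⁻¹ * (lVar + 1)) := by field_simp; ring
    rw [this, map_mul, map_mul, wli, one_mul]
    have h1 : w (lVar + 1) ≤ 1 := (w.map_add _ _).trans (by rw [wl, map_one, max_self])
    exact mul_lt_one_of_nonneg_of_lt_one_left zero_le hl h1
  have hmd' : mVar * deltaVar = -((lVar - lVar⁻¹) * (1 - deltaVar⁻¹)⁻¹) := by
    have h3 : deltaVar - 1 ≠ 0 := fun h => hd2 (by linear_combination -h)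
    rw [mVar]
    have : 1 - deltaVar⁻¹ = -(1 - deltaVar) / deltaVar := by field_simp; ring
    rw [this]
    have h4 : -(1 - deltaVar) ≠ 0 := neg_ne_zero.2 hd2
    generalize lVar - lVar⁻¹ = y
    rw [inv_div, neg_sub]
    rw [neg_sub] at h4
    rw [show (1 - deltaVar) = - (deltaVar - 1) by ring]
    field_simp
  have wmd : w (mVar * deltaVar) < 1 := by
    rw [hmd', Valuation.map_neg, map_mul, map_inv₀, wd1, inv_one, mul_one]; exact wll
  have wm : w mVar < 1 := by
    have : mVar = mVar * deltaVar * deltaVar⁻¹ := by field_simp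
    rw [this, map_mul]
    exact mul_lt_one_of_nonneg_of_lt_one_left zero_le wmd hd.le
  have wlm : w (lVar⁻¹ + mVar) = 1 := by
    rw [Valuation.map_add_eq_of_lt_left _ (by rw [wli]; exact wm), wli]
  have int : ∀ c, w c ≤ 1 → IsInt W c := fun c hc =>
    ⟨⟨c, (W.valuation_le_one_iff c).1 hc⟩, rfl⟩
  have max : ∀ c, w c < 1 → IsMax W c := fun c hc =>
    ⟨⟨c, (W.valuation_le_one_iff c).1 hc.le⟩, (W.valuation_lt_one_iff _).2 hc, rfl⟩
  refine ⟨W, ⟨lVar, mVar, deltaVar, l0, div_ne_zero l_sub_ne hd2, d0, ?_, ?_⟩, rfl, rfl, rfl, ?_,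
    ⟨int _ wl.le, int _ wli.le, int _ wm.le, int _ wmd.le, int _ hd.le⟩, max _ ?_, max _ wm,
    max _ wmd, max _ hd⟩
  · intro h; rw [h, map_zero] at wlm; exact zero_ne_one wlm
  · rw [mVar]; field_simp
  · refine charZero_of_inj_zero fun k hk => ?_
    by_contra hk0
    have h1 : (k : W) ∈ IsLocalRing.maximalIdeal W := by
      rw [← IsLocalRing.residue_eq_zero_iff, map_natCast, hk]
    refine (IsLocalRing.mem_maximalIdeal _).1 h1 ?_
    have h2 : psi (C (C (k : ℚ)⁻¹)) * (k : BMWField) = 1 := by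
      rw [← map_natCast psi k, ← map_mul, ← map_one psi]
      congr 1
      rw [← Polynomial.C_eq_natCast, ← Polynomial.C_eq_natCast, ← map_mul, ← map_mul]
      have : (k : ℚ) ≠ 0 := by exact_mod_cast hk0
      rw [inv_mul_cancel₀ this, map_one, map_one]
    refine IsUnit.of_mul_eq_one ⟨_, hW (C (C (k : ℚ)⁻¹))⟩ (Subtype.ext ?_)
    rw [mul_comm]
    simpa using h2
  · change w (lVar⁻¹ - 1) < 1
    have : lVar⁻¹ - 1 = -((lVar - 1) * lVar⁻¹) := by field_simp; ring
    rw [this, Valuation.map_neg, map_mul, wli, mul_one]; exact hl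

end Val

section BMW
variable {n : ℕ} {Q : SimpleGraph (Fin n)}

/-- the generators `g_i` in the BMW algebra -/
noncomputable def bg (Q : SimpleGraph (Fin n)) (i : Fin n) : BMWAlgebra n Q :=
  RingQuot.mkAlgHom BMWField (BMWRel n Q) (FreeAlgebra.ι BMWField (.inl i))
/-- the generators `e_i` in the BMW algebra -/
noncomputable def be (Q : SimpleGraph (Fin n)) (i : Fin n) : BMWAlgebra n Q :=
  RingQuot.mkAlgHom BMWField (BMWRel n Q) (FreeAlgebra.ι BMWField (.inr i))

theorem bmw_semisimple (hQ : Good Q) : IsSemisimpleRing (BMWAlgebra n Q) := by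
  obtain ⟨W, P, hl, hm, hd, hc, hI, h1, h2, h3, h4⟩ := exists_val_par
  have rel := fun {x y} (h : BMWRel n Q x y) => RingQuot.mkAlgHom_rel BMWField h
  have hE : ∀ i, be Q i = P.d • P.F 1 (bg Q i) := by
    intro i
    have h := rel (.quad i)
    simp only [map_smul, map_sub, map_add, map_mul, map_one, ← hm, ← hl] at h
    have h' : P.m • be Q i = P.l • (bg Q i * bg Q i + P.m • bg Q i - 1) := h
    rw [Par.F, smul_smul]
    have : be Q i = P.m⁻¹ • P.m • be Q i := by rw [smul_smul, inv_mul_cancel₀ P.hm, one_smul]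
    rw [this, h', smul_smul]
    congr 1
    have := P.hm; have := P.hd; field_simp
  have hF : ∀ i, P.F 1 (bg Q i) = P.d⁻¹ • be Q i := by
    intro i
    rw [hE, smul_smul, inv_mul_cancel₀ P.hd, one_smul]
  have hsys : Sys P Q Finset.univ 1 (bg Q) := by
    refine ⟨one_mul _, fun i _ => one_mul _, fun i _ => mul_one _, fun i _ => ?_,
      fun i _ j _ hne ha => ?_, fun i _ j _ ha => ?_, fun i _ j _ ha => ?_⟩
    · have h := rel (.ge i)
      rw [map_mul, map_smul, ← hl] at h
      have h' : bg Q i * be Q i = P.l⁻¹ • be Q i := h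
      rw [hF, mul_smul_comm, h', smul_comm]
    · have h := rel (.gg i j hne ha)
      rw [map_mul, map_mul] at h
      exact h
    · have h := rel (.braid i j ha)
      simp only [map_mul, mul_assoc] at h
      exact h
    · have h := rel (.ege i j ha)
      simp only [map_mul, map_smul, mul_assoc, ← hl] at h
      have h' : be Q i * (bg Q j * be Q i) = P.l • be Q i := h
      rw [hF, mul_smul_comm, smul_mul_assoc, mul_smul_comm, h', smul_smul, smul_smul, smul_smul]
      congr 1
      field_simp
  refine semisimple_of_sys (V := W) hQ hI h1 h2 h3 h4 hsys ?_
  set T := Algebra.adjoin BMWField (Set.range (bg Q) ∪ Set.range fun i => P.F 1 (bg Q i)) with hT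
  have hg : ∀ i, bg Q i ∈ T := fun i => Algebra.subset_adjoin (Or.inl ⟨i, rfl⟩)
  have he : ∀ i, be Q i ∈ T := fun i => by
    rw [hE]; exact T.smul_mem (Algebra.subset_adjoin (Or.inr ⟨i, rfl⟩)) _
  rw [eq_top_iff]
  intro x _
  obtain ⟨y, rfl⟩ := RingQuot.mkAlgHom_surjective BMWField (BMWRel n Q) x
  induction y using FreeAlgebra.induction with
  | grade0 r => rw [AlgHom.commutes]; exact T.algebraMap_mem r
  | grade1 i =>
    rcases i with i | i
    exacts [hg i, he i]
  | mul a b ha hb => rw [map_mul]; exact T.mul_mem (ha trivial) (hb trivial)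
  | add a b ha hb => rw [map_add]; exact T.add_mem (ha trivial) (hb trivial)

end BMW
end BMWaux

/-- Let `Q` be one of the graphs `A_n` (`n ≥ 1`), `D_n`
(`n ≥ 4`), `E_6`, `E_7` or `E_8`. Then the Birman–Murakami–Wenzl algebra
`B(Q)` over `K = ℚ(l,δ)` is a semisimple ring. -/
theorem bmwAlgebra_isSemisimpleRing
    (n : ℕ) (Q : SimpleGraph (Fin n))
    (hQ : (1 ≤ n ∧ Q = typeA n) ∨ (4 ≤ n ∧ Q = typeD n) ∨
      ((n = 6 ∨ n = 7 ∨ n = 8) ∧ Q = typeE n)) :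
    IsSemisimpleRing (BMWAlgebra n Q) := by
  apply BMWaux.bmw_semisimple
  rcases hQ with ⟨_, rfl⟩ | ⟨hn, rfl⟩ | ⟨hn, rfl⟩
  · exact BMWaux.good_A n
  · exact BMWaux.good_D n hn
  · exact BMWaux.good_E n hn
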